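/- Assume φ satisfies the LSCC property. For every ε > 0 and every curve u ∈ AC²([0,T];X) such that V_ε∘u ∈ L¹(0,T) and G_ε∘u ∈ L²(0,T), the map t ↦ V_ε(u(t)) is absolutely continuous on [0,T] and satisfies |d/dt V_ε(u(t))| ≤ (1/2) G_ε²(u(t)) + (1/2)|u'|²(t) for a.e. t ∈ (0,T). In particular, G_ε is an L¹-moderated upper gradient of V_ε. -/

import Mathlib

/-!
The value function satisfies the dynamic programming inequality
`V_ε(c s) ≤ ∫_s^t ((ε/2)|c'|² + φ(c)) ε⁻¹ e^{-(r-s)/ε} dr + e^{-(t-s)/ε} V_ε(c t)`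
along any curve `c`, because one may follow `c` from `s` to `t` and then a nearly optimal competitor
from `c t` (`dpp`, `RSeg.forward`). The same holds for the time reversal of `c`
(`RSeg.backward`). With `v = V_ε ∘ c` and `p = (ε/2)|c'|² + φ ∘ c`, the two inequalities say that `v`
is absolutely continuous with `|v'| ≤ (p - v)/ε` (`real_core`), and
`(p - v)/ε = (|c'|² + G_ε²(c))/2` by the definition of `G_ε`. In particular `V_ε ∘ c` is finite
everywhere as soon as it is finite almost everywhere (`core`).

To make concatenation, reversal and limits painless, competitors are relaxed (`RCurve`): an upper
bound `k` for the speed and an upper bound `f` for the energy replace the metric derivative and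
`φ ∘ z`. This does not change the infimum (`RCurve.Veps_le`, `exists_rcurve`), since a curve with an
upper speed `k` has a metric derivative that is at most `k` (`exists_metricDeriv`).

The argument needs `V_ε ∘ c` to be measurable. The set `{V_ε < c}` is a countable union of sets
`StopSet N q` of starting points of competitors which rest after time `N` and cost at most `q`
(`exists_rest`), and these sets are closed (`stopSet_closed`): Hardy's inequality in `L²(μ_ε)`
(`hardy`) together with `B ≤ 1/(16 ε)` bounds the kinetic energies, the conditions on `σ` give
pointwise `σ`-limits of the curves along a diagonal subsequence (`exists_pointwise_limit`), the speeds
have a weak limit (`exists_weak_limit`) and the energies are handled by Fatou's lemma.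

For the upper gradient inequality (`upper_delta`, `moderated`), the curve is reparametrized so that
its speed becomes `max (G_ε, δ)`. In the new time `|v'| ≤ (G_ε² + n²)/2 ≤ n²` with `n` the new speed,
and the integral of `n²` is, in the old time, at most `∫ (G_ε + δ)|u'| dr`; then `δ → 0`.
-/

open MeasureTheory Filter Topology Set ENNReal

noncomputable section

namespace WED

variable {X : Type*} [MetricSpace X]

/-- The exponential probability measure `μ_ε = ε⁻¹ e^{-t/ε} dt` on `(0,∞)`. -/
def expMeasure (ε : ℝ) : Measure ℝ :=
  (volume.restrict (Ioi (0:ℝ))).withDensity fun t => ENNReal.ofReal (ε⁻¹ * Real.exp (-t / ε))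

/-- The positive part of an extended real, as an extended nonnegative real. -/
def epos (x : EReal) : ℝ≥0∞ := if x = ⊤ then ⊤ else ENNReal.ofReal x.toReal

/-- The absolute value of an extended real, as an extended nonnegative real. -/
def eabs (x : EReal) : ℝ≥0∞ := epos x ⊔ epos (-x)

/-- The (extended-real valued) integral of an extended-real valued function, defined as the
difference between the integrals of the positive and of the negative part. -/
def eIntegral (μ : Measure ℝ) (f : ℝ → EReal) : EReal :=
  ((∫⁻ t, epos (f t) ∂μ : ℝ≥0∞) : EReal) - ((∫⁻ t, epos (-f t) ∂μ : ℝ≥0∞) : EReal)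

/-- `m` is *the* metric derivative of the curve `u` on the set `I ⊆ ℝ`:  `m` is a nonnegative
locally integrable function, `d(u s, u t) ≤ ∫_s^t m` (so that `u` is absolutely continuous),
and `m t` is the limit of the difference quotients `d(u s, u t)/|s-t|` at a.e. `t ∈ I`. -/
structure IsMetricDerivOn (u : ℝ → X) (m : ℝ → ℝ) (I : Set ℝ) : Prop where
  nonneg : ∀ t, 0 ≤ m t
  locInt : ∀ s ∈ I, ∀ t ∈ I, IntegrableOn m (Icc s t) volume
  dist_le : ∀ s ∈ I, ∀ t ∈ I, s ≤ t → dist (u s) (u t) ≤ ∫ r in Icc s t, m r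
  limit : ∀ᵐ t ∂(volume.restrict I),
    Tendsto (fun s => dist (u s) (u t) / |s - t|) (𝓝[I \ {t}] t) (𝓝 (m t))

/-- `u ∈ AC²_loc(I; X)`, with metric derivative `m`. -/
def AC2LocOn (u : ℝ → X) (m : ℝ → ℝ) (I : Set ℝ) : Prop :=
  IsMetricDerivOn u m I ∧ ∀ s ∈ I, ∀ t ∈ I, IntegrableOn (fun r => m r ^ 2) (Icc s t) volume

/-- `u ∈ AC²(I; X)`, with metric derivative `m`. -/
def AC2On (u : ℝ → X) (m : ℝ → ℝ) (I : Set ℝ) : Prop :=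
  IsMetricDerivOn u m I ∧ IntegrableOn (fun r => m r ^ 2) I volume

/-- The integrand `(ε/2)|u'|²(t) + φ(u(t))` of the WED functional. -/
def wedIntegrand (φ : X → EReal) (ε : ℝ) (u : ℝ → X) (m : ℝ → ℝ) (t : ℝ) : EReal :=
  ((ε / 2 * m t ^ 2 : ℝ) : EReal) + φ (u t)

/-- The WED functional `I_ε[u] = ∫₀^∞ ((ε/2)|u'|² + φ(u)) dμ_ε`. -/
def WEDfun (φ : X → EReal) (ε : ℝ) (u : ℝ → X) (m : ℝ → ℝ) : EReal :=
  eIntegral (expMeasure ε) (wedIntegrand φ ε u m)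

/-- The admissible class `𝒜_x^ε`: curves `u ∈ AC²_loc([0,∞);X)` (with metric derivative `m`)
with `u 0 = x` and `∫₀^∞ |u'|² dμ_ε < ∞`. -/
def Admissible (ε : ℝ) (x : X) (u : ℝ → X) (m : ℝ → ℝ) : Prop :=
  u 0 = x ∧ AC2LocOn u m (Ici 0) ∧
    (∫⁻ t, ENNReal.ofReal (m t ^ 2) ∂expMeasure ε) < ⊤

/-- The value function `V_ε(x) = inf { I_ε[u] : u ∈ 𝒜_x^ε }`. -/
def Veps (φ : X → EReal) (ε : ℝ) (x : X) : EReal :=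
  ⨅ (p : {p : (ℝ → X) × (ℝ → ℝ) // Admissible ε x p.1 p.2}),
    WEDfun φ ε p.1.1 p.1.2

/-- `u` (with metric derivative `m`) minimizes the WED functional `I_ε` over `𝒜_x^ε`. -/
def IsMinimizer (φ : X → EReal) (ε : ℝ) (x : X) (u : ℝ → X) (m : ℝ → ℝ) : Prop :=
  Admissible ε x u m ∧
    ∀ v n, Admissible ε x v n → WEDfun φ ε u m ≤ WEDfun φ ε v n

/-- The compatibility conditions (MT1), (MT2) between the distance `d` and the auxiliary
topology `σ`. -/
structure Compatible (σ : TopologicalSpace X) : Prop where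
  mt1 : ∀ (u v : ℕ → X) (x y : X), Tendsto u atTop (@nhds X σ x) →
    Tendsto v atTop (@nhds X σ y) →
    ENNReal.ofReal (dist x y) ≤ Filter.liminf (fun n => ENNReal.ofReal (dist (u n) (v n))) atTop
  mt2 : ∀ U : Set X, IsOpen[σ] U → ∀ x ∈ U, ∃ V : Set X, IsOpen[σ] V ∧ x ∈ V ∧
    ∃ δ : ℝ, 0 < δ ∧ ∀ y : X, Metric.infDist y V < δ → y ∈ U

/-- The standard lower semicontinuity–compactness–coercivity (LSCC) assumptions on a proper
functional `φ : X → (-∞,∞]`, with respect to the auxiliary topology `σ`. -/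
structure LSCC (σ : TopologicalSpace X) (φ : X → EReal) (ustar : X) (A B : ℝ) : Prop where
  hA : 0 ≤ A
  hB : 0 ≤ B
  proper : ∃ x, φ x ≠ ⊤
  ne_bot : ∀ x, φ x ≠ ⊥
  lsc : ∀ (u : ℕ → X) (x : X), (∃ C : ℝ, ∀ n k, dist (u n) (u k) ≤ C) →
    Tendsto u atTop (@nhds X σ x) → φ x ≤ Filter.liminf (fun n => φ (u n)) atTop
  cpt : ∀ u : ℕ → X, (∃ C : ℝ, ∀ n, φ (u n) ≤ (C : EReal)) →
    (∃ C : ℝ, ∀ n k, dist (u n) (u k) ≤ C) →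
    ∃ (x : X) (j : ℕ → ℕ), StrictMono j ∧ Tendsto (u ∘ j) atTop (@nhds X σ x)
  coercive : ∀ u v : X, ((-(B * dist u v ^ 2 + (B * dist v ustar ^ 2 + A)) : ℝ) : EReal) ≤ φ u

/-- The local (descending) slope `|∂φ|(x) = limsup_{v→x} (φ(x)-φ(v))⁺/d(x,v)`. -/
def slope (φ : X → EReal) (x : X) : ℝ≥0∞ :=
  Filter.limsup (fun v => epos (φ x - φ v) / ENNReal.ofReal (dist x v)) (𝓝[≠] x)

/-- The relaxed slope `|∂⁻φ|`: the σ-sequential lower semicontinuous envelope of the local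
slope along `d`-bounded sequences with bounded energy. -/
def relaxedSlope (σ : TopologicalSpace X) (φ : X → EReal) (x : X) : ℝ≥0∞ :=
  ⨅ (u : ℕ → X) (_ : Tendsto u atTop (@nhds X σ x))
    (_ : ∃ C : ℝ, ∀ n, dist (u n) x ≤ C ∧ φ (u n) ≤ (C : EReal)),
    Filter.liminf (fun n => slope φ (u n)) atTop

/-- `G_ε(x) = sqrt(2(φ(x) - V_ε(x))/ε)` if `V_ε(x) < ∞`, and `∞` otherwise. -/
def Geps (φ : X → EReal) (ε : ℝ) (x : X) : ℝ≥0∞ :=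
  if Veps φ ε x = ⊤ then ⊤
  else (2 * epos (φ x - Veps φ ε x) / ENNReal.ofReal ε) ^ (1/2 : ℝ)

/-- The measure `|u'| dt` on `I` associated with the speed `m` of a curve. -/
def speedMeasure (m : ℝ → ℝ) (I : Set ℝ) : Measure ℝ :=
  (volume.restrict I).withDensity fun t => ENNReal.ofReal (m t)

/-- Membership in `L^p(μ)`, `p ∈ [1,∞]`, for an `ℝ≥0∞`-valued function. -/
def MemLpENN (f : ℝ → ℝ≥0∞) (p : ℝ≥0∞) (μ : Measure ℝ) : Prop :=
  if p = ⊤ then ∃ C : ℝ≥0∞, C ≠ ⊤ ∧ ∀ᵐ t ∂μ, f t ≤ C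
  else (∫⁻ t, f t ^ p.toReal ∂μ) < ⊤

/-- `g` is an `L^p`-moderated upper gradient for `φ`: for every absolutely continuous curve
`u` (with metric derivative `m`) on a compact interval such that `φ∘u ∈ L^p(|u'|dt)` and
`g∘u ∈ L¹(|u'|dt)`, one has `|φ(u t) - φ(u s)| ≤ ∫_s^t g(u r) |u'|(r) dr`. -/
def IsModeratedUpperGradient (φ : X → EReal) (g : X → ℝ≥0∞) (p : ℝ≥0∞) : Prop :=
  ∀ (a b : ℝ), a ≤ b → ∀ (u : ℝ → X) (m : ℝ → ℝ), IsMetricDerivOn u m (Icc a b) →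
    MemLpENN (fun t => eabs (φ (u t))) p (speedMeasure m (Icc a b)) →
    (∫⁻ t in Icc a b, g (u t) * ENNReal.ofReal (m t)) < ⊤ →
    ∀ s ∈ Icc a b, ∀ t ∈ Icc a b, s ≤ t →
      (φ (u t) ≤ φ (u s) + ((∫⁻ r in Icc s t, g (u r) * ENNReal.ofReal (m r) : ℝ≥0∞) : EReal) ∧
       φ (u s) ≤ φ (u t) + ((∫⁻ r in Icc s t, g (u r) * ENNReal.ofReal (m r) : ℝ≥0∞) : EReal))

/-- A real function `f` is locally absolutely continuous on `[0,∞)` with density `g`. -/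
def RealACLoc (f g : ℝ → ℝ) : Prop :=
  (∀ b : ℝ, 0 ≤ b → IntegrableOn g (Icc 0 b) volume) ∧
  ∀ t : ℝ, 0 ≤ t → f t = f 0 + ∫ r in Icc 0 t, g r

/-- A real function `f` belongs to `AC²_loc([0,∞);ℝ)`, with derivative `g`. -/
def RealAC2Loc (f g : ℝ → ℝ) : Prop :=
  RealACLoc f g ∧ ∀ b : ℝ, 0 ≤ b → IntegrableOn (fun t => g t ^ 2) (Icc 0 b) volume

/-- The compact-open topology on curves `[0,∞) → X` induced by the auxiliary topology `σ`. -/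
def compactOpenOf (σ : TopologicalSpace X) : TopologicalSpace (ℝ → X) :=
  TopologicalSpace.generateFrom
    {S | ∃ (K : Set ℝ) (U : Set X), K ⊆ Ici 0 ∧ IsCompact K ∧ IsOpen[σ] U ∧
      S = {f : ℝ → X | MapsTo f K U}}

/-- The WED slope `|∂_w φ|(x) = limsup_{ε↓0} G_ε(x)`. -/
def wedSlope (φ : X → EReal) (x : X) : ℝ≥0∞ :=
  Filter.limsup (fun ε => Geps φ ε x) (𝓝[>] (0:ℝ))

/-- The relaxed WED slope `|∂_w^- φ|`. -/
def relaxedWedSlope (σ : TopologicalSpace X) (φ : X → EReal) (x : X) : ℝ≥0∞ :=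
  ⨅ (u : ℕ → X) (_ : Tendsto u atTop (@nhds X σ x))
    (_ : ∃ C : ℝ, ∀ n, dist (u n) x ≤ C ∧ φ (u n) ≤ (C : EReal)),
    Filter.liminf (fun n => wedSlope φ (u n)) atTop

/-- The φ-conditioned local slope `|∂̃ψ|(x) = limsup_{v→x, φ(v)→φ(x)} (ψ(x)-ψ(v))⁺/d(x,v)`. -/
def condSlope (φ ψ : X → EReal) (x : X) : ℝ≥0∞ :=
  Filter.limsup (fun v => epos (ψ x - ψ v) / ENNReal.ofReal (dist x v))
    ((𝓝[≠] x) ⊓ Filter.comap φ (𝓝 (φ x)))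

/-- `φ` is geodesically `λ`-convex: every pair of points of `D(φ)` is joined by a
constant-speed geodesic along which `φ` is `λ`-convex. -/
def GeodesicLambdaConvex (φ : X → EReal) (lam : ℝ) : Prop :=
  ∀ v₀ v₁ : X, φ v₀ ≠ ⊤ → φ v₁ ≠ ⊤ → ∃ γ : ℝ → X, γ 0 = v₀ ∧ γ 1 = v₁ ∧
    (∀ s ∈ Icc (0:ℝ) 1, ∀ t ∈ Icc (0:ℝ) 1, dist (γ s) (γ t) = |t - s| * dist v₀ v₁) ∧
    ∀ t ∈ Icc (0:ℝ) 1, φ (γ t) ≤ ((1 - t : ℝ) : EReal) * φ v₀ + ((t : ℝ) : EReal) * φ v₁ -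
      ((lam / 2 * t * (1 - t) * dist v₀ v₁ ^ 2 : ℝ) : EReal)

end WED

namespace WED

/-! ### Absolutely continuous real functions -/

/-- A real function whose increments are controlled by the integral of an integrable function is
absolutely continuous, so the fundamental theorem of calculus applies to it. -/
lemma ac_of_le {F h : ℝ → ℝ} {a b : ℝ} (hab : a ≤ b) (hh : IntervalIntegrable h volume a b)
    (H : ∀ s ∈ Icc a b, ∀ t ∈ Icc a b, s ≤ t → |F t - F s| ≤ ∫ r in s..t, h r) :
    AbsolutelyContinuousOnInterval F a b := by
  have hK := hh.absolutelyContinuousOnInterval_intervalIntegral (c := a) (by simp)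
  have key : ∀ s ∈ Icc a b, ∀ t ∈ Icc a b,
      dist (F s) (F t) ≤ dist (∫ r in a..s, h r) (∫ r in a..t, h r) := by
    have ii : ∀ s ∈ Icc a b, IntervalIntegrable h volume a s := fun s hs =>
      hh.mono_set (by rw [uIcc_of_le hab, uIcc_of_le hs.1]; exact Icc_subset_Icc_right hs.2)
    have main : ∀ s ∈ Icc a b, ∀ t ∈ Icc a b, s ≤ t →
      dist (F s) (F t) ≤ dist (∫ r in a..s, h r) (∫ r in a..t, h r) := by
      intro s hs t ht hst
      rw [dist_comm, Real.dist_eq, dist_comm, Real.dist_eq,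
        intervalIntegral.integral_interval_sub_left (ii t ht) (ii s hs)]
      exact (H s hs t ht hst).trans (le_abs_self _)
    intro s hs t ht
    rcases le_total s t with h1 | h1
    · exact main s hs t ht h1
    · rw [dist_comm, dist_comm (∫ r in a..s, h r)]
      exact main t ht s hs h1
  rw [absolutelyContinuousOnInterval_iff] at hK ⊢
  intro e he
  obtain ⟨δ, hδ, h2⟩ := hK e he
  refine ⟨δ, hδ, fun E hE hlt => lt_of_le_of_lt (Finset.sum_le_sum fun i hi => ?_) (h2 E hE hlt)⟩
  have h3 := hE.1 i hi
  rw [uIcc_of_le hab] at h3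
  exact key _ h3.1 _ h3.2

lemma ae_hasDerivAt_of_le {F h : ℝ → ℝ} {a b : ℝ} (hab : a ≤ b)
    (hh : IntervalIntegrable h volume a b)
    (H : ∀ s ∈ Icc a b, ∀ t ∈ Icc a b, s ≤ t → |F t - F s| ≤ ∫ r in s..t, h r) :
    ∀ᵐ t, t ∈ Icc a b → HasDerivAt F (deriv F t) t := by
  filter_upwards [(ac_of_le hab hh H).boundedVariationOn.locallyBoundedVariationOn.ae_differentiableWithinAt_of_mem,
    (by simp [ae_iff, measure_singleton] : ∀ᵐ x : ℝ, x ≠ a),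
    (by simp [ae_iff, measure_singleton] : ∀ᵐ x : ℝ, x ≠ b)] with t ht h1 h2 h3
  rw [uIcc_of_le hab] at ht
  refine ((ht h3).differentiableAt (Icc_mem_nhds ?_ ?_)).hasDerivAt
  · exact lt_of_le_of_ne h3.1 (Ne.symm h1)
  · exact lt_of_le_of_ne h3.2 h2

lemma integral_deriv_of_le {F h : ℝ → ℝ} {a b : ℝ} 
    (hh : IntervalIntegrable h volume a b)
    (H : ∀ s ∈ Icc a b, ∀ t ∈ Icc a b, s ≤ t → |F t - F s| ≤ ∫ r in s..t, h r)
    {s t : ℝ} (hs : s ∈ Icc a b) (ht : t ∈ Icc a b) :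
    ∫ r in s..t, deriv F r = F t - F s := by
  have hab := hs.1.trans hs.2
  refine ((ac_of_le hab hh H).mono ?_).integral_deriv_eq_sub
  rw [uIcc_of_le hab]
  exact uIcc_subset_Icc hs ht

/-- If the increments of `F` are bounded by those of `K` to the right, so are the derivatives. -/
lemma deriv_le_of_incr_le {F K : ℝ → ℝ} {F' K' a b t : ℝ} (ht : t ∈ Ioo a b)
    (hF : HasDerivAt F F' t) (hK : HasDerivAt K K' t)
    (H : ∀ r ∈ Ioo t b, F r - F t ≤ K r - K t) : F' ≤ K' := by
  have h1 := hF.hasDerivWithinAt (s := Ioi t)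
  have h2 := hK.hasDerivWithinAt (s := Ioi t)
  rw [hasDerivWithinAt_iff_tendsto_slope' (by simp)] at h1 h2
  refine le_of_tendsto_of_tendsto h1 h2 ?_
  filter_upwards [Ioo_mem_nhdsGT ht.2] with r hr
  rw [slope_def_field, slope_def_field]
  have : 0 < r - t := sub_pos.2 hr.1
  exact div_le_div_of_nonneg_right (H r hr) this.le

end WED

namespace WED

/-! ### Metric derivatives -/
variable {X : Type*} [MetricSpace X]

lemma continuousOn_of_dist_le {u : ℝ → X} {k : ℝ → ℝ} {a b : ℝ} (hab : a ≤ b)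
    (hk : IntervalIntegrable k volume a b)
    (hd : ∀ s ∈ Icc a b, ∀ t ∈ Icc a b, s ≤ t → dist (u s) (u t) ≤ ∫ r in s..t, k r) :
    ContinuousOn u (Icc a b) := by
  intro t ht
  have hF := fun t (ht : t ∈ Icc a b) => ac_of_le (F := fun s => dist (u s) (u t)) hab hk
    (fun s hs r hr hsr => (abs_dist_sub_le _ _ _).trans (by rw [dist_comm]; exact hd s hs r hr hsr))
  have := (hF t ht).continuousOn
  rw [uIcc_of_le hab] at this
  have := this t ht
  rw [ContinuousWithinAt, dist_self] at this
  exact tendsto_iff_dist_tendsto_zero.2 this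

/-- Existence of the metric derivative: a curve on `[0,∞)` with an upper speed `k` has a metric
derivative, which is bounded by `k` almost everywhere. It is the supremum of the derivatives of
`t ↦ d(u t, u q)` over rational times `q`. -/
lemma exists_metricDeriv {u : ℝ → X} {k : ℝ → ℝ} (hk0 : ∀ t, 0 ≤ k t)
    (hk : ∀ b, 0 ≤ b → IntervalIntegrable k volume 0 b)
    (hd : ∀ s t, 0 ≤ s → s ≤ t → dist (u s) (u t) ≤ ∫ r in s..t, k r) :
    ∃ m : ℝ → ℝ, IsMetricDerivOn u m (Ici 0) ∧ ∀ᵐ t ∂(volume.restrict (Ioi (0:ℝ))), m t ≤ k t := by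
  set f : ℚ → ℝ → ℝ := fun q t => dist (u t) (u |(q:ℝ)|) with hf
  set M : ℝ → ℝ≥0∞ := fun t => ⨆ q, ENNReal.ofReal |deriv (f q) t| with hM
  have Mmeas : Measurable M := by
    refine Measurable.iSup fun q => ?_
    exact (measurable_deriv (f q)).abs.ennreal_ofReal
  have kint : ∀ s t, 0 ≤ s → 0 ≤ t → IntervalIntegrable k volume s t := fun s t hs ht =>
    (hk s hs).symm.trans (hk t ht)
  have fle : ∀ q b s, s ∈ Icc (0:ℝ) b → ∀ t ∈ Icc (0:ℝ) b, s ≤ t →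
      |f q t - f q s| ≤ ∫ r in s..t, k r := fun q b s hs t ht hst =>
    (abs_dist_sub_le _ _ _).trans (by rw [dist_comm]; exact hd s t hs.1 hst)
  have ae_all_of : ∀ {P : ℝ → Prop}, (∀ n : ℕ, ∀ᵐ t, t ∈ Icc (0:ℝ) n → P t) →
      ∀ᵐ t, 0 ≤ t → P t := by
    intro P h
    filter_upwards [ae_all_iff.2 h] with t ht h0
    obtain ⟨n, hn⟩ := exists_nat_ge t
    exact ht n ⟨h0, hn⟩
  have fder : ∀ᵐ t, 0 ≤ t → ∀ q, HasDerivAt (f q) (deriv (f q) t) t := by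
    have : ∀ᵐ t, ∀ q, 0 ≤ t → HasDerivAt (f q) (deriv (f q) t) t := by
      rw [ae_all_iff]
      intro q
      exact ae_all_of fun n => ae_hasDerivAt_of_le n.cast_nonneg (hk n n.cast_nonneg) (fle q n)
    filter_upwards [this] with t ht h0 q using ht q h0
  have intder : ∀ {g : ℝ → ℝ}, (∀ b, 0 ≤ b → IntervalIntegrable g volume 0 b) →
      ∀ᵐ t, 0 ≤ t → HasDerivAt (fun x => ∫ r in (0:ℝ)..x, g r) (g t) t := by
    intro g hg
    refine ae_all_of fun n => ?_
    filter_upwards [(hg n n.cast_nonneg).ae_hasDerivAt_integral] with t ht h0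
    rw [uIcc_of_le (n.cast_nonneg)] at ht
    exact ht h0 0 ⟨le_rfl, n.cast_nonneg⟩
  have fk : ∀ᵐ t, 0 ≤ t → ∀ q, |deriv (f q) t| ≤ k t := by
    filter_upwards [fder, intder hk] with t h1 h2 h0 q
    have hKt := h2 h0
    have hsub : ∀ r ∈ Ioo t (t+1), |f q r - f q t| ≤
        (∫ r in (0:ℝ)..r, k r) - ∫ r in (0:ℝ)..t, k r := by
      intro r hr
      rw [intervalIntegral.integral_interval_sub_left (hk r (h0.trans hr.1.le)) (hk t h0)]
      exact fle q r t ⟨h0, hr.1.le⟩ r ⟨h0.trans hr.1.le, le_rfl⟩ hr.1.le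
    have mem : t ∈ Ioo (t-1) (t+1) := by constructor <;> linarith
    rw [abs_le']
    constructor
    · exact deriv_le_of_incr_le mem (h1 h0 q) hKt fun r hr => (le_abs_self _).trans (hsub r hr)
    · refine deriv_le_of_incr_le mem (h1 h0 q).neg hKt fun r hr => ?_
      have := (neg_le_abs _).trans (hsub r hr)
      simp only [Pi.neg_apply]
      linarith
  have Mk : ∀ᵐ t, 0 ≤ t → M t ≤ ENNReal.ofReal (k t) := by
    filter_upwards [fk] with t ht h0
    exact iSup_le fun q => ENNReal.ofReal_le_ofReal (ht h0 q)
  set m : ℝ → ℝ := fun t => (M t).toReal with hm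
  have mk : ∀ᵐ t, 0 ≤ t → m t ≤ k t := by
    filter_upwards [Mk] with t ht h0
    exact ENNReal.toReal_le_of_le_ofReal (hk0 t) (ht h0)
  have fm : ∀ᵐ t, 0 ≤ t → ∀ q, |deriv (f q) t| ≤ m t := by
    filter_upwards [Mk] with t ht h0 q
    have : ENNReal.ofReal |deriv (f q) t| ≤ M t :=
      le_iSup (fun q => ENNReal.ofReal |deriv (f q) t|) q
    exact (ENNReal.ofReal_le_iff_le_toReal (ne_top_of_le_ne_top ofReal_ne_top (ht h0))).1 this
  have mint : ∀ s t, 0 ≤ s → s ≤ t → IntegrableOn m (Icc s t) volume := by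
    intro s t hs hst
    have hki : IntegrableOn k (Icc s t) volume := by
      have := kint s t hs (hs.trans hst)
      rwa [intervalIntegrable_iff_integrableOn_Icc_of_le hst] at this
    refine Integrable.mono' hki Mmeas.ennreal_toReal.aestronglyMeasurable ?_
    rw [ae_restrict_iff' measurableSet_Icc]
    filter_upwards [mk] with r hr h
    rw [Real.norm_of_nonneg toReal_nonneg]
    exact hr (hs.trans h.1)
  have mint' : ∀ s t, 0 ≤ s → s ≤ t → IntervalIntegrable m volume s t := by
    intro s t hs hst
    rw [intervalIntegrable_iff_integrableOn_Icc_of_le hst]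
    exact mint s t hs hst
  have mdist : ∀ s t, 0 ≤ s → s ≤ t → dist (u s) (u t) ≤ ∫ r in s..t, m r := by
    intro s t hs hst
    have hq : ∀ q : ℚ, dist (u t) (u |(q:ℝ)|) - dist (u s) (u |(q:ℝ)|) ≤ ∫ r in s..t, m r := by
      intro q
      have h1 := integral_deriv_of_le (hk t (hs.trans hst)) (fle q t)
        (s := s) (t := t) ⟨hs, hst⟩ ⟨hs.trans hst, le_rfl⟩
      have hac := (ac_of_le (hs.trans hst) (hk t (hs.trans hst)) (fle q t)).intervalIntegrable_deriv
      change f q t - f q s ≤ _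
      rw [← h1]
      refine intervalIntegral.integral_mono_ae_restrict hst (hac.mono_set ?_) (mint' s t hs hst) ?_
      · rw [uIcc_of_le hst, uIcc_of_le (hs.trans hst)]; exact Icc_subset_Icc_left hs
      · rw [EventuallyLE, ae_restrict_iff' measurableSet_Icc]
        filter_upwards [fm] with r hr h using (le_abs_self _).trans (hr (hs.trans h.1) q)
    have hc := continuousOn_of_dist_le (hs.trans hst |>.trans (le_add_of_nonneg_right zero_le_one))
      (hk (t+1) (by linarith)) (fun a ha b _ hab => hd a b ha.1 hab)
    have hc1 : Tendsto (fun r => dist (u t) (u r) - dist (u s) (u r)) (𝓝[Ioi s] s)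
        (𝓝 (dist (u t) (u s) - dist (u s) (u s))) := by
      have : Tendsto u (𝓝[Ioi s] s) (𝓝 (u s)) := by
        have := hc s ⟨hs, by linarith⟩
        refine this.mono_left ?_
        rw [nhdsWithin_le_iff]
        filter_upwards [Ioo_mem_nhdsGT (show s < t + 1 by linarith)] with r hr
        exact ⟨hs.trans hr.1.le, hr.2.le⟩
      exact (tendsto_const_nhds.dist this).sub (tendsto_const_nhds.dist this)
    rw [dist_self, sub_zero, dist_comm] at hc1
    refine le_of_tendsto_of_frequently hc1 ?_
    intro hcon
    obtain ⟨c, hc2, hc3⟩ := (mem_nhdsGT_iff_exists_Ioo_subset).1 hcon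
    obtain ⟨q, hq1, hq2⟩ := exists_rat_btwn (show s < c from hc2)
    refine hc3 ⟨hq1, hq2⟩ ?_
    have := hq q
    rwa [abs_of_nonneg (hs.trans hq1.le)] at this
  refine ⟨m, ⟨fun t => toReal_nonneg, fun s hs t _ => ?_, fun s hs t _ hst => ?_, ?_⟩, ?_⟩
  · rcases le_total s t with h | h
    · exact mint s t hs h
    · refine (mint t t (by assumption) le_rfl).mono_set ?_
      intro r hr; exact ⟨h.trans hr.1, hr.2⟩
  · rw [integral_Icc_eq_integral_Ioc, ← intervalIntegral.integral_of_le hst]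
    exact mdist s t hs hst
  · rw [ae_restrict_iff' measurableSet_Ici]
    filter_upwards [fder, Mk, intder (fun b hb => mint' 0 b le_rfl hb),
      (by simp [ae_iff, measure_singleton] : ∀ᵐ x : ℝ, x ≠ 0)] with t h1 h2 h3 hne h0
    have h0 : 0 ≤ t := h0
    have Mlt : M t ≠ ⊤ := ne_top_of_le_ne_top ofReal_ne_top (h2 h0)
    have up : Tendsto (fun s => |_root_.slope (fun x => ∫ r in (0:ℝ)..x, m r) t s|)
        (𝓝[Ici 0 \ {t}] t) (𝓝 (m t)) := by
      have := (hasDerivAt_iff_tendsto_slope.1 (h3 h0)).abs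
      rw [abs_of_nonneg (show 0 ≤ m t from toReal_nonneg)] at this
      exact this.mono_left (nhdsWithin_mono _ fun x hx => hx.2)
    have lo : ∀ q, Tendsto (fun s => |_root_.slope (f q) t s|)
        (𝓝[Ici 0 \ {t}] t) (𝓝 |deriv (f q) t|) := fun q =>
      (hasDerivAt_iff_tendsto_slope.1 (h1 h0 q)).abs.mono_left (nhdsWithin_mono _ fun x hx => hx.2)
    have leup : ∀ s ∈ Ici (0:ℝ) \ {t}, dist (u s) (u t) / |s - t| ≤
        |_root_.slope (fun x => ∫ r in (0:ℝ)..x, m r) t s| := by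
      rintro s ⟨hs, -⟩
      rw [slope_def_field, abs_div]
      refine div_le_div_of_nonneg_right ?_ (abs_nonneg _)
      rw [intervalIntegral.integral_interval_sub_left (mint' 0 s le_rfl hs) (mint' 0 t le_rfl h0)]
      rcases le_total s t with h | h
      · rw [intervalIntegral.integral_symm, abs_neg]
        exact (mdist s t hs h).trans (le_abs_self _)
      · rw [dist_comm]
        exact (mdist t s h0 h).trans (le_abs_self _)
    have lelo : ∀ q, ∀ s ∈ Ici (0:ℝ) \ {t}, |_root_.slope (f q) t s| ≤
        dist (u s) (u t) / |s - t| := by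
      rintro q s -
      rw [slope_def_field, abs_div]
      exact div_le_div_of_nonneg_right (abs_dist_sub_le _ _ _) (abs_nonneg _)
    refine tendsto_order.2 ⟨fun a ha => ?_, fun a ha => ?_⟩
    · rcases lt_or_ge a 0 with h | h
      · exact Eventually.of_forall fun s => h.trans_le (div_nonneg dist_nonneg (abs_nonneg _))
      · have : ENNReal.ofReal a < M t := (ENNReal.ofReal_lt_iff_lt_toReal h Mlt).2 ha
        obtain ⟨q, hq⟩ := lt_iSup_iff.1 this
        have hq : a < |deriv (f q) t| := (ENNReal.ofReal_lt_ofReal_iff_of_nonneg h).1 hq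
        filter_upwards [(lo q).eventually (lt_mem_nhds hq), self_mem_nhdsWithin] with s hs hs2
        exact hs.trans_le (lelo q s hs2)
    · filter_upwards [up.eventually (gt_mem_nhds ha), self_mem_nhdsWithin] with s hs hs2
      exact (leup s hs2).trans_lt hs
  · rw [ae_restrict_iff' measurableSet_Ioi]
    filter_upwards [mk] with t ht h0 using ht (le_of_lt h0)

end WED

namespace WED

/-! ### The exponential weight and Hardy's inequality -/

/-- The density `ε⁻¹ e^{-t/ε}` of `μ_ε`. -/
def wt (ε t : ℝ) : ℝ := ε⁻¹ * Real.exp (-t / ε)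

lemma wt_pos {ε : ℝ} (hε : 0 < ε) (t : ℝ) : 0 < wt ε t := by unfold wt; positivity

lemma continuous_wt (ε : ℝ) : Continuous (wt ε) := by unfold wt; fun_prop

lemma wt_anti {ε : ℝ} (hε : 0 < ε) {s t : ℝ} (h : s ≤ t) : wt ε t ≤ wt ε s := by
  unfold wt; gcongr

lemma wt_add (ε s t : ℝ) : wt ε (s + t) = Real.exp (-s / ε) * wt ε t := by
  unfold wt
  rw [show -(s + t) / ε = -s / ε + -t / ε by ring, Real.exp_add]; ring

lemma integrableOn_wt {ε : ℝ} (hε : 0 < ε) (c : ℝ) : IntegrableOn (wt ε) (Ioi c) := by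
  have := (integrableOn_exp_mul_Ioi (a := -ε⁻¹) (by simpa using hε) c).const_mul ε⁻¹
  refine this.congr (Eventually.of_forall fun t => ?_)
  simp only [wt]; congr 2; field_simp

lemma integral_wt {ε : ℝ} (hε : 0 < ε) : ∫ t in Ioi 0, wt ε t = 1 := by
  have h : ∀ t, wt ε t = ε⁻¹ * Real.exp (-ε⁻¹ * t) := fun t => by
    simp only [wt]; congr 2; field_simp
  simp_rw [h]
  rw [integral_const_mul, integral_exp_mul_Ioi (by simpa using hε)]
  simp; field_simp

/-- Weighted Cauchy–Schwarz inequality on an interval. -/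
lemma cs_interval {k ρ : ℝ → ℝ} {s t : ℝ} (hst : s ≤ t) (hρ : ∀ r, 0 < ρ r)
    (i1 : IntervalIntegrable k volume s t)
    (i2 : IntervalIntegrable (fun r => k r ^ 2 / ρ r) volume s t)
    (i3 : IntervalIntegrable ρ volume s t) :
    (∫ r in s..t, k r) ^ 2 ≤ (∫ r in s..t, k r ^ 2 / ρ r) * ∫ r in s..t, ρ r := by
  have key : ∀ x : ℝ, 0 ≤ (∫ r in s..t, k r ^ 2 / ρ r) * (x * x) + (-2 * ∫ r in s..t, k r) * x
      + ∫ r in s..t, ρ r := by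
    intro x
    have : (∫ r in s..t, k r ^ 2 / ρ r) * (x * x) + (-2 * ∫ r in s..t, k r) * x
      + ∫ r in s..t, ρ r = ∫ r in s..t, (x * x * (k r ^ 2 / ρ r) + (-2 * x) * k r + ρ r) := by
      rw [intervalIntegral.integral_add ((i2.const_mul _).add (i1.const_mul _)) i3,
        intervalIntegral.integral_add (i2.const_mul _) (i1.const_mul _),
        intervalIntegral.integral_const_mul, intervalIntegral.integral_const_mul]
      ring
    rw [this]
    refine intervalIntegral.integral_nonneg hst fun r _ => ?_
    have h1 := hρ r
    have : x * x * (k r ^ 2 / ρ r) + (-2 * x) * k r + ρ r = (x * k r - ρ r) ^ 2 / ρ r := by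
      field_simp; ring
    rw [this]; positivity
  have := discrim_le_zero key
  rw [discrim] at this
  nlinarith

section
variable {ε : ℝ} {k : ℝ → ℝ}

lemma aemeasurable_of_sq (hε : 0 < ε) (hk0 : ∀ t, 0 ≤ k t)
    (hki : IntegrableOn (fun t => k t ^ 2 * wt ε t) (Ioi 0)) :
    AEMeasurable k (volume.restrict (Ioi 0)) := by
  have h1 : AEMeasurable (fun t => Real.sqrt ((k t ^ 2 * wt ε t) / wt ε t))
      (volume.restrict (Ioi 0)) :=
    (hki.aestronglyMeasurable.aemeasurable.div (continuous_wt ε).measurable.aemeasurable).sqrt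
  refine h1.congr (Eventually.of_forall fun t => ?_)
  have := wt_pos hε t
  simp only
  rw [mul_div_cancel_right₀ _ this.ne', Real.sqrt_sq (hk0 t)]

lemma sq_intervalIntegrable (hε : 0 < ε) (hk0 : ∀ t, 0 ≤ k t)
    (hki : IntegrableOn (fun t => k t ^ 2 * wt ε t) (Ioi 0)) {b : ℝ} (hb : 0 ≤ b) :
    IntervalIntegrable (fun t => k t ^ 2) volume 0 b := by
  rw [intervalIntegrable_iff_integrableOn_Ioc_of_le hb]
  have h1 : IntegrableOn (fun t => (k t ^ 2 * wt ε t) * (wt ε b)⁻¹) (Ioc 0 b) :=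
    (hki.mono_set Ioc_subset_Ioi_self).mul_const _
  refine Integrable.mono' h1 (((aemeasurable_of_sq hε hk0 hki).mono_measure
    (Measure.restrict_mono Ioc_subset_Ioi_self le_rfl)).pow_const 2).aestronglyMeasurable ?_
  rw [ae_restrict_iff' measurableSet_Ioc]
  refine Eventually.of_forall fun t ht => ?_
  have h2 := wt_anti hε ht.2
  have h3 := wt_pos hε b
  rw [Real.norm_of_nonneg (sq_nonneg _), ← div_eq_mul_inv, le_div_iff₀ h3]
  exact mul_le_mul_of_nonneg_left h2 (sq_nonneg _)

lemma intervalIntegrable_of_sq {b : ℝ} (hb : 0 ≤ b) (hk0 : ∀ t, 0 ≤ k t)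
    (h : IntervalIntegrable (fun t => k t ^ 2) volume 0 b) : IntervalIntegrable k volume 0 b := by
  rw [intervalIntegrable_iff_integrableOn_Ioc_of_le hb] at h ⊢
  have h1 : IntegrableOn (fun t => 1 + k t ^ 2) (Ioc 0 b) :=
    Integrable.add (by simp) h
  have hm : AEMeasurable k (volume.restrict (Ioc 0 b)) := by
    refine h.aestronglyMeasurable.aemeasurable.sqrt.congr (Eventually.of_forall fun t => ?_)
    exact Real.sqrt_sq (hk0 t)
  refine Integrable.mono' h1 hm.aestronglyMeasurable (Eventually.of_forall fun t => ?_)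
  rw [Real.norm_of_nonneg (hk0 t)]
  nlinarith [sq_nonneg (k t - 1), hk0 t]

lemma lintegral_exp_Ioi {a : ℝ} (ha : 0 < a) (r : ℝ) :
    ∫⁻ t in Ioi r, ENNReal.ofReal (2 * Real.exp (-a * t)) =
      ENNReal.ofReal (2 / a * Real.exp (-a * r)) := by
  rw [← ofReal_integral_eq_lintegral_ofReal
    ((integrableOn_exp_mul_Ioi (by linarith) r).const_mul 2)
    (Eventually.of_forall fun t => by positivity),
    integral_const_mul, integral_exp_mul_Ioi (by linarith)]
  congr 1; field_simp

/-- Hardy's inequality with respect to the exponential measure,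
`∫ (∫₀ᵗ k)² dμ_ε ≤ 4ε² ∫ k² dμ_ε`, from Cauchy–Schwarz with weight `e^{r/(2ε)}` and Tonelli. -/
lemma hardy_lintegral (hε : 0 < ε) (hk0 : ∀ t, 0 ≤ k t)
    (hki : IntegrableOn (fun t => k t ^ 2 * wt ε t) (Ioi 0)) :
    ∫⁻ t in Ioi 0, ENNReal.ofReal ((∫ r in (0:ℝ)..t, k r) ^ 2 * wt ε t) ≤
      ENNReal.ofReal (4 * ε ^ 2) * ∫⁻ t in Ioi 0, ENNReal.ofReal (k t ^ 2 * wt ε t) := by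
  set a : ℝ := (2 * ε)⁻¹ with ha
  have ha0 : 0 < a := by positivity
  have hea : ∀ t, -t / ε = -a * t + -a * t := fun t => by rw [ha]; field_simp; ring
  set κ : ℝ → ℝ≥0∞ := fun r => ENNReal.ofReal (k r ^ 2 * Real.exp (-a * r)) with hκ
  have hκm : AEMeasurable κ (volume.restrict (Ioi 0)) :=
    (((aemeasurable_of_sq hε hk0 hki).pow_const 2).mul
      (by fun_prop : Measurable fun r => Real.exp (-a * r)).aemeasurable).ennreal_ofReal
  have ii1 : ∀ t, 0 ≤ t → IntervalIntegrable (fun r => k r ^ 2 / Real.exp (a * r)) volume 0 t := by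
    intro t ht
    have := (sq_intervalIntegrable hε hk0 hki ht).mul_continuousOn
      (g := fun r => (Real.exp (a * r))⁻¹) (Continuous.inv₀ (by fun_prop) (fun r => (Real.exp_pos _).ne')).continuousOn
    simpa [div_eq_mul_inv] using this
  have step1 : ∀ t, 0 < t → ENNReal.ofReal ((∫ r in (0:ℝ)..t, k r) ^ 2 * wt ε t) ≤
      ∫⁻ r in Ioi 0, (if r < t then ENNReal.ofReal (2 * Real.exp (-a * t)) else 0) * κ r := by
    intro t ht
    have h1 := cs_interval ht.le (fun r => Real.exp_pos (a * r))
      (intervalIntegrable_of_sq ht.le hk0 (sq_intervalIntegrable hε hk0 hki ht.le))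
      (ii1 t ht.le) ((by fun_prop : Continuous fun r => Real.exp (a * r)).intervalIntegrable _ _)
    have h2 : ∫ r in (0:ℝ)..t, Real.exp (a * r) ≤ Real.exp (a * t) / a := by
      have : ∀ r ∈ uIcc 0 t, HasDerivAt (fun r => Real.exp (a * r) / a) (Real.exp (a * r)) r := by
        intro r _
        have := ((hasDerivAt_id r).const_mul a).exp.div_const a
        simpa [mul_div_assoc, ha0.ne'] using this
      rw [intervalIntegral.integral_eq_sub_of_hasDerivAt this
        ((by fun_prop : Continuous fun r => Real.exp (a * r)).intervalIntegrable _ _)]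
      have : 0 < Real.exp (a * 0) / a := by positivity
      linarith
    have h0 : 0 ≤ ∫ r in (0:ℝ)..t, k r ^ 2 / Real.exp (a * r) :=
      intervalIntegral.integral_nonneg ht.le fun r _ => by positivity
    have h3 : (∫ r in (0:ℝ)..t, k r) ^ 2 * wt ε t ≤
        2 * Real.exp (-a * t) * ∫ r in (0:ℝ)..t, k r ^ 2 * Real.exp (-a * r) := by
      have e1 : ∫ r in (0:ℝ)..t, k r ^ 2 * Real.exp (-a * r) =
          ∫ r in (0:ℝ)..t, k r ^ 2 / Real.exp (a * r) := by
        congr 1; ext r; rw [neg_mul, Real.exp_neg, div_eq_mul_inv]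
      rw [e1]
      calc _ ≤ ((∫ r in (0:ℝ)..t, k r ^ 2 / Real.exp (a * r)) * (Real.exp (a * t) / a)) * wt ε t :=
            mul_le_mul_of_nonneg_right (h1.trans (mul_le_mul_of_nonneg_left h2 h0))
              (wt_pos hε t).le
        _ = _ := by
            rw [wt, hea, Real.exp_add]
            have : Real.exp (a * t) * Real.exp (-a * t) = 1 := by
              rw [← Real.exp_add]; simp
            have h5 : ε⁻¹ = 2 * a := by rw [ha]; field_simp
            rw [h5]
            field_simp
            linear_combination (∫ r in (0:ℝ)..t, k r ^ 2 / Real.exp (a * r)) * (by simpa using this :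
                Real.exp (a * t) * Real.exp (-(a * t)) = 1)
    have h4 : ENNReal.ofReal (∫ r in (0:ℝ)..t, k r ^ 2 * Real.exp (-a * r)) =
        ∫⁻ r in Ioo 0 t, κ r := by
      rw [intervalIntegral.integral_of_le ht.le, ofReal_integral_eq_lintegral_ofReal]
      · exact setLIntegral_congr Ioo_ae_eq_Ioc.symm
      · have := ii1 t ht.le
        rw [intervalIntegrable_iff_integrableOn_Ioc_of_le ht.le] at this
        refine this.congr (Eventually.of_forall fun r => ?_)
        simp only [neg_mul, Real.exp_neg, div_eq_mul_inv]
      · exact Eventually.of_forall fun r => by positivity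
    calc _ ≤ ENNReal.ofReal (2 * Real.exp (-a * t)) * ∫⁻ r in Ioo 0 t, κ r := by
          rw [← h4, ← ENNReal.ofReal_mul (by positivity)]
          exact ENNReal.ofReal_le_ofReal h3
      _ = ∫⁻ r in Ioo 0 t, ENNReal.ofReal (2 * Real.exp (-a * t)) * κ r := by
          rw [lintegral_const_mul' _ _ ofReal_ne_top]
      _ = ∫⁻ r in Ioo 0 t, (if r < t then ENNReal.ofReal (2 * Real.exp (-a * t)) else 0) * κ r :=
          setLIntegral_congr_fun measurableSet_Ioo fun r hr => by simp [hr.2]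
      _ ≤ _ := lintegral_mono_set Ioo_subset_Ioi_self
  calc _ ≤ ∫⁻ t in Ioi 0, ∫⁻ r in Ioi 0,
          (if r < t then ENNReal.ofReal (2 * Real.exp (-a * t)) else 0) * κ r :=
        setLIntegral_mono' measurableSet_Ioi fun t ht => step1 t ht
    _ = ∫⁻ r in Ioi 0, ∫⁻ t in Ioi 0,
          (if r < t then ENNReal.ofReal (2 * Real.exp (-a * t)) else 0) * κ r := by
        refine lintegral_lintegral_swap ?_
        refine AEMeasurable.mul ?_ hκm.comp_snd
        refine (Measurable.ite (measurableSet_lt measurable_snd measurable_fst) ?_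
          measurable_const).aemeasurable
        fun_prop
    _ = ∫⁻ r in Ioi 0, ENNReal.ofReal (2 / a * Real.exp (-a * r)) * κ r := by
        refine setLIntegral_congr_fun measurableSet_Ioi fun r hr => ?_
        rw [lintegral_mul_const' _ _ ofReal_ne_top, ← lintegral_exp_Ioi ha0]
        congr 1
        have : (fun t => if r < t then ENNReal.ofReal (2 * Real.exp (-a * t)) else 0) =
          (Ioi r).indicator (fun t => ENNReal.ofReal (2 * Real.exp (-a * t))) := by
          ext t; simp [indicator]
        rw [this, setLIntegral_indicator measurableSet_Ioi,
          inter_eq_left.2 (Ioi_subset_Ioi (le_of_lt hr))]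
    _ = _ := by
        rw [← lintegral_const_mul' _ _ ofReal_ne_top]
        refine lintegral_congr fun r => ?_
        rw [hκ, ← ENNReal.ofReal_mul (by positivity), ← ENNReal.ofReal_mul (by positivity)]
        congr 1
        rw [wt, hea, Real.exp_add, ha]
        field_simp
        ring

/-- The primitive of an `L²(μ_ε)` speed is square integrable, with Hardy's constant. -/
lemma hardy (hε : 0 < ε) (hk0 : ∀ t, 0 ≤ k t)
    (hki : IntegrableOn (fun t => k t ^ 2 * wt ε t) (Ioi 0)) :
    IntegrableOn (fun t => (∫ r in (0:ℝ)..t, k r) ^ 2 * wt ε t) (Ioi 0) ∧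
    ∫ t in Ioi 0, (∫ r in (0:ℝ)..t, k r) ^ 2 * wt ε t ≤
      4 * ε ^ 2 * ∫ t in Ioi 0, k t ^ 2 * wt ε t := by
  have hw := wt_pos hε
  have h := hardy_lintegral hε hk0 hki
  have h1 : ∫⁻ t in Ioi 0, ENNReal.ofReal (k t ^ 2 * wt ε t) =
      ENNReal.ofReal (∫ t in Ioi 0, k t ^ 2 * wt ε t) :=
    (ofReal_integral_eq_lintegral_ofReal hki
      (Eventually.of_forall fun t => mul_nonneg (sq_nonneg _) (hw t).le)).symm
  rw [h1, ← ENNReal.ofReal_mul (by positivity)] at h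
  have hcont : ContinuousOn (fun t => ∫ r in (0:ℝ)..t, k r) (Ici 0) := by
    intro t ht
    have := intervalIntegral.continuousOn_primitive_interval (f := k) (μ := volume) (a := 0) (b := t + 1) (by
      rw [uIcc_of_le (by linarith [show (0:ℝ) ≤ t from ht])]
      have := intervalIntegrable_of_sq (b := t + 1) (by linarith [show (0:ℝ) ≤ t from ht]) hk0
        (sq_intervalIntegrable hε hk0 hki (by linarith [show (0:ℝ) ≤ t from ht]))
      rwa [intervalIntegrable_iff_integrableOn_Icc_of_le (by linarith [show (0:ℝ) ≤ t from ht])] at this)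
    rw [uIcc_of_le (by linarith [show (0:ℝ) ≤ t from ht])] at this
    refine (this t ⟨ht, by linarith⟩).mono_of_mem_nhdsWithin ?_
    rw [← Ici_inter_Iic]
    exact inter_mem_nhdsWithin _ (Iic_mem_nhds (by linarith))
  have hm : AEStronglyMeasurable (fun t => (∫ r in (0:ℝ)..t, k r) ^ 2 * wt ε t)
      (volume.restrict (Ioi 0)) :=
    ContinuousOn.aestronglyMeasurable (((hcont.mono Ioi_subset_Ici_self).pow 2).mul
      (continuous_wt ε).continuousOn) measurableSet_Ioi
  have hnn : 0 ≤ᵐ[volume.restrict (Ioi 0)] (fun t => (∫ r in (0:ℝ)..t, k r) ^ 2 * wt ε t) :=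
    Eventually.of_forall fun t => mul_nonneg (sq_nonneg _) (hw t).le
  refine ⟨⟨hm, ?_⟩, ?_⟩
  · rw [hasFiniteIntegral_iff_ofReal hnn]
    exact h.trans_lt ofReal_lt_top
  · rw [integral_eq_lintegral_of_nonneg_ae hnn hm]
    refine ENNReal.toReal_le_of_le_ofReal ?_ h
    exact mul_nonneg (by positivity)
      (setIntegral_nonneg measurableSet_Ioi fun t _ => mul_nonneg (sq_nonneg _) (hw t).le)

end

end WED

namespace WED

/-! ### Integrals against the exponential measure -/

lemma lintegral_expMeasure {ε : ℝ} (g : ℝ → ℝ≥0∞) :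
    ∫⁻ t, g t ∂expMeasure ε = ∫⁻ t in Ioi 0, ENNReal.ofReal (wt ε t) * g t := by
  unfold expMeasure
  rw [lintegral_withDensity_eq_lintegral_mul_non_measurable]
  · rfl
  · fun_prop
  · exact Eventually.of_forall fun _ => ofReal_lt_top

lemma epos_coe (r : ℝ) : epos (r : EReal) = ENNReal.ofReal r := by simp [epos]

lemma epos_mono {x y : EReal} (h : x ≤ y) : epos x ≤ epos y := by
  induction x <;> induction y <;> simp_all [epos]
  exact ENNReal.ofReal_le_ofReal h

lemma measurable_epos : Measurable epos := by
  unfold epos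
  refine Measurable.ite (measurableSet_singleton _) measurable_const ?_
  exact measurable_ereal_toReal.ennreal_ofReal

lemma ereal_integral {ε : ℝ} (hε : 0 < ε) {h : ℝ → ℝ}
    (hki : IntegrableOn (fun t => h t * wt ε t) (Ioi 0)) :
    eIntegral (expMeasure ε) (fun t => (h t : EReal)) =
      ((∫ t in Ioi 0, h t * wt ε t : ℝ) : EReal) := by
  have hw := wt_pos hε
  unfold eIntegral
  rw [lintegral_expMeasure, lintegral_expMeasure,
    integral_eq_lintegral_pos_part_sub_lintegral_neg_part hki]
  have e1 : ∀ g : ℝ → ℝ, ∀ t, ENNReal.ofReal (wt ε t) * ENNReal.ofReal (g t) =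
      ENNReal.ofReal (g t * wt ε t) := fun g t => by
    rw [← ENNReal.ofReal_mul (hw t).le, mul_comm]
  simp_rw [← EReal.coe_neg, epos_coe, e1]
  have f1 : ∫⁻ t in Ioi 0, ENNReal.ofReal (h t * wt ε t) ≠ ⊤ :=
    hki.lintegral_lt_top.ne
  have f2 : ∫⁻ t in Ioi 0, ENNReal.ofReal (-h t * wt ε t) ≠ ⊤ := by
    have := hki.neg.lintegral_lt_top.ne
    simpa using this
  have e2 : ∀ t, ENNReal.ofReal (wt ε t) * ENNReal.ofReal (-h t) =
      ENNReal.ofReal (-(h t * wt ε t)) := fun t => by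
    rw [← ENNReal.ofReal_mul (hw t).le]; congr 1; ring
  simp_rw [neg_mul] at f2
  simp_rw [e2]
  rw [EReal.coe_sub, EReal.coe_ennreal_toReal f1, EReal.coe_ennreal_toReal f2]

lemma eIntegral_mono_ae {ε : ℝ} {F H : ℝ → EReal}
    (h : ∀ᵐ t ∂(volume.restrict (Ioi 0)), F t ≤ H t) :
    eIntegral (expMeasure ε) F ≤ eIntegral (expMeasure ε) H := by
  unfold eIntegral
  simp only [lintegral_expMeasure]
  refine EReal.sub_le_sub ?_ ?_
  · refine EReal.coe_ennreal_le_coe_ennreal_iff.2 (lintegral_mono_ae ?_)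
    filter_upwards [h] with t ht
    gcongr
    exact epos_mono ht
  · refine EReal.coe_ennreal_le_coe_ennreal_iff.2 (lintegral_mono_ae ?_)
    filter_upwards [h] with t ht
    gcongr
    exact epos_mono (EReal.neg_le_neg_iff.2 ht)

lemma epos_eq_top {x : EReal} : epos x = ⊤ ↔ x = ⊤ := by
  unfold epos; split_ifs with h <;> simp [h]

lemma enorm_toReal_le (x : EReal) : ‖x.toReal‖ₑ ≤ epos x + epos (-x) := by
  induction x with
  | bot => simp
  | top => simp
  | coe r =>
    rw [← EReal.coe_neg, epos_coe, epos_coe, EReal.toReal_coe, Real.enorm_eq_ofReal_abs]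
    rcases le_total 0 r with h | h
    · rw [abs_of_nonneg h]; exact le_self_add
    · rw [abs_of_nonpos h]; exact le_add_self

/-- A measurable integrand with an integrable lower bound and an integral `< ∞` is a.e. finite
and integrable. -/
lemma integrable_of_eIntegral {ε : ℝ} (hε : 0 < ε) {F : ℝ → EReal} {g : ℝ → ℝ}
    (hF : AEMeasurable F (volume.restrict (Ioi 0)))
    (hg : IntegrableOn (fun t => g t * wt ε t) (Ioi 0))
    (hb : ∀ t, 0 < t → ((-g t : ℝ) : EReal) ≤ F t)
    (ht : eIntegral (expMeasure ε) F ≠ ⊤) :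
    IntegrableOn (fun t => (F t).toReal * wt ε t) (Ioi 0) ∧
      ∀ᵐ t ∂(volume.restrict (Ioi 0)), F t = ((F t).toReal : EReal) := by
  have hw := wt_pos hε
  unfold eIntegral at ht
  simp only [lintegral_expMeasure] at ht
  have hneg : ∫⁻ t in Ioi 0, ENNReal.ofReal (wt ε t) * epos (-F t) ≠ ⊤ := by
    refine ne_top_of_le_ne_top hg.lintegral_lt_top.ne
      (setLIntegral_mono' measurableSet_Ioi fun t ht => ?_)
    rw [mul_comm (g t), ENNReal.ofReal_mul (hw t).le, ← epos_coe (g t)]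
    gcongr
    refine epos_mono ?_
    rw [EReal.neg_le]
    exact hb t ht
  have hpos : ∫⁻ t in Ioi 0, ENNReal.ofReal (wt ε t) * epos (F t) ≠ ⊤ := by
    intro h
    rw [h] at ht
    apply ht
    rw [← EReal.coe_ennreal_toReal hneg, EReal.coe_ennreal_top, EReal.top_sub_coe]
  have hwm : Measurable fun t => ENNReal.ofReal (wt ε t) :=
    (continuous_wt ε).measurable.ennreal_ofReal
  have hm1 : AEMeasurable (fun t => ENNReal.ofReal (wt ε t) * epos (F t))
      (volume.restrict (Ioi 0)) := hwm.aemeasurable.mul (measurable_epos.comp_aemeasurable hF)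
  refine ⟨⟨(hF.ereal_toReal.mul (continuous_wt ε).measurable.aemeasurable).aestronglyMeasurable,
    ?_⟩, ?_⟩
  · refine lt_of_le_of_lt (lintegral_mono (g := fun t => ENNReal.ofReal (wt ε t) * epos (F t) +
      ENNReal.ofReal (wt ε t) * epos (-F t)) fun t => ?_) ?_
    · beta_reduce
      rw [enorm_mul, mul_comm, Real.enorm_of_nonneg (hw t).le, ← mul_add]
      gcongr
      exact enorm_toReal_le _
    · rw [lintegral_add_left' hm1]
      exact ENNReal.add_lt_top.2 ⟨hpos.lt_top, hneg.lt_top⟩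
  · filter_upwards [ae_lt_top' hm1 hpos, self_mem_ae_restrict measurableSet_Ioi] with t h1 h2
    refine (EReal.coe_toReal ?_ ?_).symm
    · intro h
      rw [h, epos_eq_top.2 rfl, ENNReal.mul_top (by simpa using hw t)] at h1
      exact lt_irrefl _ h1
    · exact ((EReal.bot_lt_coe _).trans_le (hb t h2)).ne'

/-! ### Topological preliminaries -/

section Metric
variable {X : Type*} [MetricSpace X]

/-- Convergence with respect to the distance, to be used where an auxiliary topology on `X` is also
present. -/
def MConv (u : ℕ → X) (x : X) : Prop := Tendsto u atTop (𝓝 x)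

/-- Lower semicontinuity with respect to the distance, in sequential form. -/
def MLsc (φ : X → EReal) : Prop :=
  ∀ (u : ℕ → X) (x : X) (c : EReal), MConv u x → (∀ n, φ (u n) ≤ c) → φ x ≤ c

lemma MConv.bounded {u : ℕ → X} {x : X} (h : MConv u x) : ∃ C : ℝ, ∀ n k, dist (u n) (u k) ≤ C := by
  obtain ⟨C, hC⟩ := Metric.isBounded_iff.1 (Metric.isBounded_range_of_tendsto u h)
  exact ⟨C, fun n k => hC (mem_range_self n) (mem_range_self k)⟩

lemma MConv.eventually {u : ℕ → X} {x : X} (h : MConv u x) {δ : ℝ} (hδ : 0 < δ) :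
    ∀ᶠ n in atTop, dist (u n) x < δ := h (Metric.ball_mem_nhds x hδ)

lemma MLsc.lowerSemicontinuous {φ : X → EReal} (h : MLsc φ) : LowerSemicontinuous φ := by
  intro x y hy
  by_contra hcon
  obtain ⟨u, hu, hu'⟩ := exists_seq_forall_of_frequently (Filter.not_eventually.1 hcon)
  exact absurd (h u x y hu fun n => not_lt.1 (hu' n)) (not_le.2 hy)

lemma MLsc.aemeasurable {φ : X → EReal} (h : MLsc φ) {z : ℝ → X}
    {s : Set ℝ} (hs : MeasurableSet s) (hz : ContinuousOn z s) :
    AEMeasurable (fun t => φ (z t)) (volume.restrict s) := by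
  let _ : MeasurableSpace X := borel X
  have : BorelSpace X := ⟨rfl⟩
  exact h.lowerSemicontinuous.measurable.comp_aemeasurable (hz.aemeasurable hs)

end Metric

section Top
variable {X : Type*} [MetricSpace X] {σ : TopologicalSpace X} {φ : X → EReal} {ustar : X}
  {A B : ℝ}

lemma Compatible.tendsto (hc : Compatible σ) {u : ℕ → X} {x : X}
    (h : MConv u x) : Tendsto u atTop (@nhds X σ x) := by
  rw [@tendsto_nhds X σ]
  intro U hU hx
  obtain ⟨V, -, hxV, δ, hδ, H⟩ := hc.mt2 U hU x hx
  filter_upwards [h.eventually hδ] with n hn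
  exact H _ ((Metric.infDist_le_dist_of_mem hxV).trans_lt hn)

lemma LSCC.mlsc (hφ : LSCC σ φ ustar A B) (hc : Compatible σ) : MLsc φ := by
  intro u x c hu hle
  exact (hφ.lsc u x hu.bounded (hc.tendsto hu)).trans (liminf_le_of_frequently_le'
    (Frequently.of_forall fun n => hle n))

end Top
end WED

namespace WED

/-! ### Relaxed competitors -/

variable {X : Type*} [MetricSpace X]

/-- A relaxed competitor in the definition of `V_ε(x)`: a curve `z` from `x`, an upper bound `k`
for its speed and an upper bound `f` for the energy `φ ∘ z`, with `k²` and `f` integrable with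
respect to `μ_ε`. -/
structure RCurve (φ : X → EReal) (ε : ℝ) (x : X) (z : ℝ → X) (k f : ℝ → ℝ) : Prop where
  start : z 0 = x
  nonneg : ∀ t, 0 ≤ k t
  dist_le : ∀ s t, 0 ≤ s → s ≤ t → dist (z s) (z t) ≤ ∫ r in s..t, k r
  int_k : IntegrableOn (fun t => k t ^ 2 * wt ε t) (Ioi 0)
  int_f : IntegrableOn (fun t => f t * wt ε t) (Ioi 0)
  energy : ∀ᵐ t ∂(volume.restrict (Ioi 0)), φ (z t) ≤ (f t : EReal)

/-- The cost `∫ ((ε/2) k² + f) dμ_ε` of a relaxed competitor. -/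
def cost (ε : ℝ) (k f : ℝ → ℝ) : ℝ := ∫ t in Ioi 0, (ε / 2 * k t ^ 2 + f t) * wt ε t

variable {φ : X → EReal} {ε : ℝ} {x : X} {z : ℝ → X} {k f : ℝ → ℝ}

lemma RCurve.int_cost (h : RCurve φ ε x z k f) :
    IntegrableOn (fun t => (ε / 2 * k t ^ 2 + f t) * wt ε t) (Ioi 0) := by
  refine ((h.int_k.const_mul (ε / 2)).add h.int_f).congr (Eventually.of_forall fun t => ?_)
  simp only [Pi.add_apply]; ring

lemma RCurve.cost_eq (h : RCurve φ ε x z k f) :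
    cost ε k f = ε / 2 * (∫ t in Ioi 0, k t ^ 2 * wt ε t) + ∫ t in Ioi 0, f t * wt ε t := by
  rw [← integral_const_mul, ← integral_add (h.int_k.const_mul _) h.int_f]
  unfold cost
  congr 1; ext t; ring

lemma RCurve.intervalIntegrable (h : RCurve φ ε x z k f) (hε : 0 < ε) {s t : ℝ} (hs : 0 ≤ s)
    (ht : 0 ≤ t) : IntervalIntegrable k volume s t :=
  have key : ∀ b, 0 ≤ b → IntervalIntegrable k volume 0 b := fun _ hb =>
    intervalIntegrable_of_sq hb h.nonneg (sq_intervalIntegrable hε h.nonneg h.int_k hb)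
  (key s hs).symm.trans (key t ht)

/-- A relaxed competitor bounds `V_ε` from above: its metric derivative exists and is at most `k`
almost everywhere, so the curve is admissible with a smaller cost. -/
lemma RCurve.Veps_le (h : RCurve φ ε x z k f) (hε : 0 < ε) :
    Veps φ ε x ≤ (cost ε k f : EReal) := by
  obtain ⟨m, hm, hmk⟩ := exists_metricDeriv h.nonneg
    (fun b hb => h.intervalIntegrable hε le_rfl hb) h.dist_le
  have hmm : AEMeasurable m (volume.restrict (Ioi 0)) := by
    have : Ioi (0:ℝ) = ⋃ n : ℕ, Ioc 0 (n:ℝ) := by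
      ext t
      simp only [mem_Ioi, mem_iUnion, mem_Ioc]
      exact ⟨fun ht => (exists_nat_ge t).imp fun n hn => ⟨ht, hn⟩, fun ⟨n, hn⟩ => hn.1⟩
    rw [this]
    refine aemeasurable_iUnion_iff.2 fun n => ?_
    exact (((hm.locInt 0 (by simp) n (by simp)).mono_set
      Ioc_subset_Icc_self).aestronglyMeasurable).aemeasurable
  have hsq : ∀ᵐ t ∂(volume.restrict (Ioi 0)), m t ^ 2 ≤ k t ^ 2 := by
    filter_upwards [hmk] with t ht
    exact pow_le_pow_left₀ (hm.nonneg t) ht 2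
  have hadm : Admissible ε x z m := by
    refine ⟨h.start, ⟨hm, fun s hs t ht => ?_⟩, ?_⟩
    · have h1 := sq_intervalIntegrable hε h.nonneg h.int_k (b := t) ht
      rw [intervalIntegrable_iff_integrableOn_Ioc_of_le ht] at h1
      have h2 : IntegrableOn (fun r => m r ^ 2) (Ioc 0 t) := by
        refine Integrable.mono' h1 ((hmm.mono_measure (Measure.restrict_mono Ioc_subset_Ioi_self
          le_rfl)).pow_const 2).aestronglyMeasurable ?_
        filter_upwards [ae_restrict_of_ae_restrict_of_subset Ioc_subset_Ioi_self hsq] with r hr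
        rwa [Real.norm_of_nonneg (sq_nonneg _)]
      exact ((integrableOn_Icc_iff_integrableOn_Ioc).2 h2).mono_set (Icc_subset_Icc_left hs)
    · rw [lintegral_expMeasure]
      refine lt_of_le_of_lt (lintegral_mono_ae ?_) h.int_k.lintegral_lt_top
      filter_upwards [hsq] with t ht
      rw [← ENNReal.ofReal_mul (wt_pos hε t).le, mul_comm]
      exact ENNReal.ofReal_le_ofReal (mul_le_mul_of_nonneg_right ht (wt_pos hε t).le)
  refine (iInf_le _ ⟨(z, m), hadm⟩).trans ?_
  unfold cost WEDfun
  rw [← ereal_integral hε h.int_cost]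
  refine eIntegral_mono_ae ?_
  filter_upwards [hsq, h.energy] with t h1 h2
  unfold wedIntegrand
  rw [EReal.coe_add]
  refine add_le_add ?_ h2
  exact EReal.coe_le_coe_iff.2 (mul_le_mul_of_nonneg_left h1 (by positivity))

/-- The quadratic lower bound for `φ` contained in the LSCC assumptions. -/
def Coercive (φ : X → EReal) (ustar : X) (A B : ℝ) : Prop :=
  0 ≤ A ∧ 0 ≤ B ∧
  ∀ u v : X, ((-(B * dist u v ^ 2 + (B * dist v ustar ^ 2 + A)) : ℝ) : EReal) ≤ φ u

variable {ustar : X} {A B : ℝ}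

lemma curve_lower (hco : Coercive φ ustar A B) (h0 : z 0 = x)
    (hd : ∀ s t, 0 ≤ s → s ≤ t → dist (z s) (z t) ≤ ∫ r in s..t, k r) {t : ℝ} (ht : 0 ≤ t) :
    ((-(B * (∫ r in (0:ℝ)..t, k r) ^ 2 + (B * dist x ustar ^ 2 + A)) : ℝ) : EReal) ≤ φ (z t) := by
  refine le_trans ?_ (hco.2.2 (z t) x)
  rw [EReal.coe_le_coe_iff]
  have h1 : dist (z t) x ≤ ∫ r in (0:ℝ)..t, k r := by
    rw [dist_comm, ← h0]; exact hd 0 t le_rfl ht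
  have := mul_le_mul_of_nonneg_left (pow_le_pow_left₀ dist_nonneg h1 2) hco.2.1
  linarith

lemma lower_integrable (hε : 0 < ε) (hk0 : ∀ t, 0 ≤ k t)
    (hki : IntegrableOn (fun t => k t ^ 2 * wt ε t) (Ioi 0)) (B C : ℝ) :
    IntegrableOn (fun t => (B * (∫ r in (0:ℝ)..t, k r) ^ 2 + C) * wt ε t) (Ioi 0) := by
  refine (((hardy hε hk0 hki).1.const_mul B).add ((integrableOn_wt hε 0).const_mul C)).congr
    (Eventually.of_forall fun t => ?_)
  simp only [Pi.add_apply]; ring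

/-- Coercivity of the cost: Hardy's inequality absorbs the quadratic lower bound of `φ` into half
of the kinetic term. -/
lemma RCurve.cost_lower (h : RCurve φ ε x z k f) (hε : 0 < ε) (hco : Coercive φ ustar A B)
    (hB : B ≤ 1 / (16 * ε)) :
    ε / 4 * (∫ t in Ioi 0, k t ^ 2 * wt ε t) - (B * dist x ustar ^ 2 + A) ≤ cost ε k f := by
  rw [h.cost_eq]
  set C := B * dist x ustar ^ 2 + A
  have h1 : ∫ t in Ioi 0, -((B * (∫ r in (0:ℝ)..t, k r) ^ 2 + C) * wt ε t) ≤
      ∫ t in Ioi 0, f t * wt ε t := by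
    refine integral_mono_ae (lower_integrable hε h.nonneg h.int_k B C).neg h.int_f ?_
    filter_upwards [h.energy, self_mem_ae_restrict measurableSet_Ioi] with t ht ht0
    have := (curve_lower hco h.start h.dist_le (le_of_lt ht0)).trans ht
    rw [EReal.coe_le_coe_iff] at this
    have := mul_le_mul_of_nonneg_right this (wt_pos hε t).le
    linarith
  have h2 : ∫ t in Ioi 0, (B * (∫ r in (0:ℝ)..t, k r) ^ 2 + C) * wt ε t =
      B * (∫ t in Ioi 0, (∫ r in (0:ℝ)..t, k r) ^ 2 * wt ε t) + C := by
    have : C = C * ∫ t in Ioi 0, wt ε t := by rw [integral_wt hε, mul_one]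
    conv_rhs => rw [this]
    rw [← integral_const_mul, ← integral_const_mul, ← integral_add
      ((hardy hε h.nonneg h.int_k).1.const_mul _) ((integrableOn_wt hε 0).const_mul _)]
    congr 1; ext t; ring
  rw [integral_neg, h2] at h1
  have h3 := mul_le_mul_of_nonneg_left (hardy hε h.nonneg h.int_k).2 hco.2.1
  have h4 : 0 ≤ ∫ t in Ioi 0, k t ^ 2 * wt ε t :=
    setIntegral_nonneg measurableSet_Ioi fun t _ => mul_nonneg (sq_nonneg _) (wt_pos hε t).le
  have h5 : B * (4 * ε ^ 2) ≤ ε / 4 := by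
    calc B * (4 * ε ^ 2) ≤ 1 / (16 * ε) * (4 * ε ^ 2) := by gcongr
      _ = ε / 4 := by field_simp; norm_num
  nlinarith [mul_le_mul_of_nonneg_right h5 h4]

/-- Relaxed competitors have costs arbitrarily close to `V_ε(x)`. -/
lemma exists_rcurve (hε : 0 < ε) (hl : MLsc φ) (hco : Coercive φ ustar A B) {c : EReal}
    (hc : Veps φ ε x < c) :
    ∃ z k f, RCurve φ ε x z k f ∧ (cost ε k f : EReal) < c := by
  unfold Veps at hc
  obtain ⟨⟨⟨u, m⟩, h0, ⟨hm, hm2⟩, hfin⟩, hlt⟩ := iInf_lt_iff.1 hc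
  simp only at h0 hm hm2 hfin hlt
  have hmm : AEMeasurable m (volume.restrict (Ioi 0)) := by
    have : Ioi (0:ℝ) = ⋃ n : ℕ, Ioc 0 (n:ℝ) := by
      ext t
      simp only [mem_Ioi, mem_iUnion, mem_Ioc]
      exact ⟨fun ht => (exists_nat_ge t).imp fun n hn => ⟨ht, hn⟩, fun ⟨n, hn⟩ => hn.1⟩
    rw [this]
    refine aemeasurable_iUnion_iff.2 fun n => ?_
    exact (((hm.locInt 0 (by simp) n (by simp)).mono_set
      Ioc_subset_Icc_self).aestronglyMeasurable).aemeasurable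
  have hki : IntegrableOn (fun t => m t ^ 2 * wt ε t) (Ioi 0) := by
    refine ⟨((hmm.pow_const 2).mul
      (continuous_wt ε).measurable.aemeasurable).aestronglyMeasurable, ?_⟩
    rw [hasFiniteIntegral_iff_ofReal
      (Eventually.of_forall fun t => mul_nonneg (sq_nonneg _) (wt_pos hε t).le)]
    rw [lintegral_expMeasure] at hfin
    refine lt_of_eq_of_lt (lintegral_congr fun t => ?_) hfin
    rw [← ENNReal.ofReal_mul (wt_pos hε t).le, mul_comm]
  have hd : ∀ s t, 0 ≤ s → s ≤ t → dist (u s) (u t) ≤ ∫ r in s..t, m r := by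
    intro s t hs hst
    rw [intervalIntegral.integral_of_le hst, ← integral_Icc_eq_integral_Ioc]
    exact hm.dist_le s hs t (hs.trans hst) hst
  have hcont : ContinuousOn u (Ioi 0) := by
    intro t ht
    have ht' : (0:ℝ) < t := ht
    have h1 := continuousOn_of_dist_le (u := u) (k := m) (a := 0) (b := t + 1) (by linarith)
      (by
        rw [intervalIntegrable_iff_integrableOn_Icc_of_le (by linarith)]
        exact hm.locInt 0 (by simp) (t + 1) (by simp; linarith))
      (fun r hr s hs hrs => hd r s hr.1 hrs)
    refine ((h1 t ⟨ht'.le, by linarith⟩).continuousAt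
      (Icc_mem_nhds ht' (by linarith))).continuousWithinAt
  have hφm := hl.aemeasurable measurableSet_Ioi hcont
  set F := wedIntegrand φ ε u m with hF
  have hFm : AEMeasurable F (volume.restrict (Ioi 0)) := by
    refine AEMeasurable.add ?_ hφm
    exact ((hmm.pow_const 2).const_mul (ε / 2)).coe_real_ereal
  have hlow : ∀ t, 0 < t →
      ((-(B * (∫ r in (0:ℝ)..t, m r) ^ 2 + (B * dist x ustar ^ 2 + A)) : ℝ) : EReal) ≤ F t := by
    intro t ht
    refine (curve_lower hco h0 hd ht.le).trans ?_
    rw [hF, wedIntegrand]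
    refine le_add_of_nonneg_left ?_
    exact_mod_cast (by positivity : 0 ≤ ε / 2 * m t ^ 2)
  obtain ⟨hi, hfe⟩ := integrable_of_eIntegral hε hFm
    (lower_integrable hε hm.nonneg hki B (B * dist x ustar ^ 2 + A)) hlow (ne_top_of_lt hlt)
  have hR : RCurve φ ε x u m (fun t => (F t).toReal - ε / 2 * m t ^ 2) := by
    refine ⟨h0, hm.nonneg, hd, hki, ?_, ?_⟩
    · refine (hi.sub (hki.const_mul (ε / 2))).congr (Eventually.of_forall fun t => ?_)
      simp only [Pi.sub_apply]; ring
    · filter_upwards [hfe] with t ht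
      rw [EReal.coe_sub, ← ht, hF, wedIntegrand]
      exact (EReal.add_sub_cancel_left).ge
  refine ⟨u, m, _, hR, lt_of_eq_of_lt ?_ hlt⟩
  have : cost ε m (fun t => (F t).toReal - ε / 2 * m t ^ 2) =
      ∫ t in Ioi 0, (F t).toReal * wt ε t := by
    unfold cost; congr 1; ext t; ring
  rw [this, ← ereal_integral hε hi]
  refine le_antisymm (eIntegral_mono_ae ?_) (eIntegral_mono_ae ?_)
  · filter_upwards [hfe] with t ht using ht.ge
  · filter_upwards [hfe] with t ht using ht.le

end WED

namespace WED

/-! ### Dynamic programming -/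

variable {X : Type*} [MetricSpace X]
variable {φ : X → EReal} {ε : ℝ} {x : X} {z : ℝ → X} {k f : ℝ → ℝ}
variable {ustar : X} {A B : ℝ}

lemma shift_integral {g : ℝ → ℝ} (hg : IntegrableOn (fun t => g t * wt ε t) (Ioi 0)) (τ : ℝ) :
    IntegrableOn (fun t => g (t - τ) * wt ε t) (Ioi τ) ∧
    ∫ t in Ioi τ, g (t - τ) * wt ε t =
      Real.exp (-τ / ε) * ∫ t in Ioi 0, g t * wt ε t := by
  have hmp := measurePreserving_sub_right volume τ
  have hme : MeasurableEmbedding (fun t : ℝ => t - τ) := (MeasurableEquiv.subRight τ).measurableEmbedding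
  have hpre : (fun t : ℝ => t - τ) ⁻¹' Ioi 0 = Ioi τ := by ext; simp
  have e : (fun t => g (t - τ) * wt ε t) =
      fun t => Real.exp (-τ / ε) * ((fun t => g t * wt ε t) (t - τ)) := by
    ext t
    have : wt ε t = Real.exp (-τ / ε) * wt ε (t - τ) := by rw [← wt_add]; congr 1; ring
    rw [this]; ring
  have h1 := (hmp.integrableOn_comp_preimage hme (f := fun t => g t * wt ε t) (s := Ioi 0)).2 hg
  have h2 := hmp.setIntegral_preimage_emb hme (fun t => g t * wt ε t) (Ioi 0)
  rw [hpre] at h1 h2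
  rw [e]
  refine ⟨h1.const_mul _, ?_⟩
  rw [integral_const_mul, h2]

/-- An admissible piece of a relaxed competitor, on the time interval `[0,τ]`. -/
structure RSeg (φ : X → EReal) (τ : ℝ) (z : ℝ → X) (k f : ℝ → ℝ) : Prop where
  nonneg : ∀ t, 0 ≤ k t
  dist_le : ∀ s t, 0 ≤ s → s ≤ t → t ≤ τ → dist (z s) (z t) ≤ ∫ r in s..t, k r
  int_k : IntegrableOn (fun t => k t ^ 2) (Ioc 0 τ)
  int_f : IntegrableOn f (Ioc 0 τ)
  energy : ∀ᵐ t ∂(volume.restrict (Ioc 0 τ)), φ (z t) ≤ (f t : EReal)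

/-- `follow τ a b` follows `a` until time `τ` and the time shift of `b` afterwards. -/
def follow {Y : Type*} (τ : ℝ) (a b : ℝ → Y) (t : ℝ) : Y := if t ≤ τ then a t else b (t - τ)

lemma follow_le {Y : Type*} {τ : ℝ} {a b : ℝ → Y} {t : ℝ} (h : t ≤ τ) : follow τ a b t = a t := if_pos h
lemma follow_gt {Y : Type*} {τ : ℝ} {a b : ℝ → Y} {t : ℝ} (h : τ < t) :
    follow τ a b t = b (t - τ) := if_neg (not_le.2 h)

lemma integrableOn_wt_mul {g : ℝ → ℝ} {τ : ℝ} (hτ : 0 ≤ τ) (hg : IntegrableOn g (Ioc 0 τ)) :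
    IntegrableOn (fun t => g t * wt ε t) (Ioc 0 τ) := by
  have := ((intervalIntegrable_iff_integrableOn_Ioc_of_le hτ).2 hg).mul_continuousOn
    (continuous_wt ε).continuousOn
  exact (intervalIntegrable_iff_integrableOn_Ioc_of_le hτ).1 this

lemma follow_integral {g₁ g₂ : ℝ → ℝ} {τ : ℝ} (hτ : 0 ≤ τ)
    (h₁ : IntegrableOn (fun t => g₁ t * wt ε t) (Ioc 0 τ))
    (h₂ : IntegrableOn (fun t => g₂ t * wt ε t) (Ioi 0)) :
    IntegrableOn (fun t => follow τ g₁ g₂ t * wt ε t) (Ioi 0) ∧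
    ∫ t in Ioi 0, follow τ g₁ g₂ t * wt ε t = (∫ t in Ioc 0 τ, g₁ t * wt ε t) +
      Real.exp (-τ / ε) * ∫ t in Ioi 0, g₂ t * wt ε t := by
  have e1 : EqOn (fun t => g₁ t * wt ε t) (fun t => follow τ g₁ g₂ t * wt ε t) (Ioc 0 τ) :=
    fun t ht => by simp only [follow_le ht.2]
  have e2 : EqOn (fun t => g₂ (t - τ) * wt ε t) (fun t => follow τ g₁ g₂ t * wt ε t) (Ioi τ) :=
    fun t ht => by simp only [follow_gt ht]
  have hs := shift_integral h₂ τ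
  have i1 := h₁.congr_fun e1 measurableSet_Ioc
  have i2 := hs.1.congr_fun e2 measurableSet_Ioi
  have hu : Ioc 0 τ ∪ Ioi τ = Ioi 0 := Ioc_union_Ioi_eq_Ioi hτ
  rw [← hu]
  refine ⟨i1.union i2, ?_⟩
  rw [setIntegral_union (Ioc_disjoint_Ioi le_rfl) measurableSet_Ioi i1 i2,
    ← setIntegral_congr_fun measurableSet_Ioc e1, ← setIntegral_congr_fun measurableSet_Ioi e2,
    hs.2, hu]

lemma follow_interval_le {a b : ℝ → ℝ} {τ s t : ℝ} (hst : s ≤ t) (ht : t ≤ τ) :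
    ∫ r in s..t, follow τ a b r = ∫ r in s..t, a r := by
  rw [intervalIntegral.integral_of_le hst, intervalIntegral.integral_of_le hst]
  exact setIntegral_congr_fun measurableSet_Ioc fun r hr => follow_le (hr.2.trans ht)

lemma follow_interval_ge {a b : ℝ → ℝ} {τ s t : ℝ} (hst : s ≤ t) (hs : τ ≤ s) :
    ∫ r in s..t, follow τ a b r = ∫ r in (s - τ)..(t - τ), b r := by
  rw [← intervalIntegral.integral_comp_sub_right, intervalIntegral.integral_of_le hst,
    intervalIntegral.integral_of_le hst]
  exact setIntegral_congr_fun measurableSet_Ioc fun r hr => follow_gt (hs.trans_lt hr.1)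

/-- A piece followed by a relaxed competitor from its endpoint is a relaxed competitor; by the
exponential form of the weight, the cost of the second part is discounted by `e^{-τ/ε}`. -/
lemma RSeg.follow {τ : ℝ} (hτ : 0 ≤ τ) (hε : 0 < ε) {ζ : ℝ → X} {n h : ℝ → ℝ}
    (hs : RSeg φ τ ζ n h) (hr : RCurve φ ε (ζ τ) z k f) :
    RCurve φ ε (ζ 0) (follow τ ζ z) (follow τ n k) (follow τ h f) ∧
    cost ε (WED.follow τ n k) (WED.follow τ h f) =
      (∫ t in Ioc 0 τ, (ε / 2 * n t ^ 2 + h t) * wt ε t) + Real.exp (-τ / ε) * cost ε k f := by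
  have hn1 : IntervalIntegrable n volume 0 τ := intervalIntegrable_of_sq hτ hs.nonneg
    ((intervalIntegrable_iff_integrableOn_Ioc_of_le hτ).2 hs.int_k)
  have sqe : (fun t => WED.follow τ n k t ^ 2) =
      WED.follow τ (fun t => n t ^ 2) (fun t => k t ^ 2) := by
    ext t; unfold WED.follow; split_ifs <;> rfl
  have d1 : ∀ s t, 0 ≤ s → s ≤ t → t ≤ τ →
      dist (WED.follow τ ζ z s) (WED.follow τ ζ z t) ≤ ∫ r in s..t, WED.follow τ n k r := by
    intro s t h0 hst ht
    rw [follow_le (hst.trans ht), follow_le ht, follow_interval_le hst ht]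
    exact hs.dist_le s t h0 hst ht
  have e : ∀ t, τ ≤ t → WED.follow τ ζ z t = z (t - τ) := by
    intro t ht
    rcases ht.eq_or_lt with rfl | ht
    · rw [follow_le le_rfl, sub_self, hr.start]
    · exact follow_gt ht
  have d2 : ∀ s t, τ ≤ s → s ≤ t →
      dist (WED.follow τ ζ z s) (WED.follow τ ζ z t) ≤ ∫ r in s..t, WED.follow τ n k r := by
    intro s t h0 hst
    rw [e s h0, e t (h0.trans hst), follow_interval_ge hst h0]
    exact hr.dist_le _ _ (by linarith) (by linarith)
  have i1 : ∀ s, 0 ≤ s → s ≤ τ → IntervalIntegrable (WED.follow τ n k) volume s τ := by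
    intro s h0 h1
    have h2 : IntervalIntegrable n volume s τ := hn1.mono_set (by
      rw [uIcc_of_le h1, uIcc_of_le hτ]; exact Icc_subset_Icc_left h0)
    refine h2.congr fun r hr => ?_
    rw [uIoc_of_le h1] at hr
    exact (follow_le hr.2).symm
  have i2 : ∀ t, τ ≤ t → IntervalIntegrable (WED.follow τ n k) volume τ t := by
    intro t h1
    have h2 := (hr.intervalIntegrable hε le_rfl (sub_nonneg.2 h1)).comp_sub_right τ
    rw [zero_add, sub_add_cancel] at h2
    refine h2.congr fun r hr => ?_
    rw [uIoc_of_le h1] at hr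
    exact (follow_gt hr.1).symm
  have hR : RCurve φ ε (ζ 0) (WED.follow τ ζ z) (WED.follow τ n k) (WED.follow τ h f) := by
    refine ⟨follow_le hτ, fun t => ?_, fun s t h0 hst => ?_, ?_, ?_, ?_⟩
    · unfold WED.follow; split_ifs; exacts [hs.nonneg _, hr.nonneg _]
    · rcases le_total t τ with ht | ht
      · exact d1 s t h0 hst ht
      rcases le_total τ s with h1 | h1
      · exact d2 s t h1 hst
      rw [← intervalIntegral.integral_add_adjacent_intervals (i1 s h0 h1) (i2 t ht)]
      exact (dist_triangle _ (WED.follow τ ζ z τ) _).trans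
        (add_le_add (d1 s τ h0 h1 le_rfl) (d2 τ t le_rfl ht))
    · have := (follow_integral hτ (integrableOn_wt_mul hτ hs.int_k) hr.int_k).1
      rwa [← sqe] at this
    · exact (follow_integral hτ (integrableOn_wt_mul hτ hs.int_f) hr.int_f).1
    · rw [← Ioc_union_Ioi_eq_Ioi hτ, ae_restrict_union_iff]
      constructor
      · filter_upwards [hs.energy, self_mem_ae_restrict measurableSet_Ioc] with t h1 h2
        rwa [follow_le h2.2, follow_le h2.2]
      · have hq := (measurePreserving_sub_right volume τ).restrict_preimage
          (measurableSet_Ioi (a := (0:ℝ)))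
        have hpre : (fun t : ℝ => t - τ) ⁻¹' Ioi 0 = Ioi τ := by ext; simp
        rw [hpre] at hq
        filter_upwards [hq.quasiMeasurePreserving.ae hr.energy,
          self_mem_ae_restrict measurableSet_Ioi] with t h1 h2
        rwa [follow_gt h2, follow_gt h2]
  refine ⟨hR, ?_⟩
  have h5 : IntegrableOn (fun t => ε / 2 * n t ^ 2 + h t) (Ioc 0 τ) :=
    Integrable.add (hs.int_k.const_mul (ε / 2)) hs.int_f
  have h3 := (follow_integral (ε := ε) (g₁ := fun t => ε / 2 * n t ^ 2 + h t)
    (g₂ := fun t => ε / 2 * k t ^ 2 + f t) hτ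
    (integrableOn_wt_mul hτ h5) hr.int_cost).2
  unfold cost
  rw [← h3]
  congr 1; ext t; unfold WED.follow; split_ifs <;> rfl

lemma rcurve_const (hε : 0 < ε) {x : X} {e : ℝ} (h : φ x ≤ e) :
    RCurve φ ε x (fun _ => x) (fun _ => 0) (fun _ => e) ∧
      cost ε (fun _ => 0) (fun _ => e) = e := by
  refine ⟨⟨rfl, fun _ => le_rfl, by simp, by simp, (integrableOn_wt hε 0).const_mul e,
    Eventually.of_forall fun _ => h⟩, ?_⟩
  unfold cost
  simp only [ne_eq, OfNat.ofNat_ne_zero, not_false_eq_true, zero_pow, mul_zero, zero_add]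
  rw [integral_const_mul, integral_wt hε, mul_one]

lemma Veps_le_phi (hε : 0 < ε) (hco : Coercive φ ustar A B) (x : X) : Veps φ ε x ≤ φ x := by
  have hb : φ x ≠ ⊥ := ((EReal.bot_lt_coe _).trans_le (hco.2.2 x x)).ne'
  by_cases ht : φ x = ⊤
  · rw [ht]; exact le_top
  · have h := rcurve_const (φ := φ) hε (x := x) (e := (φ x).toReal) (EReal.coe_toReal ht hb).ge
    have := h.1.Veps_le hε
    rwa [h.2, EReal.coe_toReal ht hb] at this

lemma Veps_lower (hε : 0 < ε) (hl : MLsc φ) (hco : Coercive φ ustar A B) (hB : B ≤ 1 / (16 * ε))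
    (x : X) : ((-(B * dist x ustar ^ 2 + A) : ℝ) : EReal) ≤ Veps φ ε x := by
  by_contra! h
  obtain ⟨z, k, f, hR, hc⟩ := exists_rcurve hε hl hco h
  have h1 := hR.cost_lower hε hco hB
  have h4 : 0 ≤ ∫ t in Ioi 0, k t ^ 2 * wt ε t :=
    setIntegral_nonneg measurableSet_Ioi fun t _ => mul_nonneg (sq_nonneg _) (wt_pos hε t).le
  rw [EReal.coe_lt_coe_iff] at hc
  nlinarith

/-- Dynamic programming inequality: one may follow the given piece up to time `τ` and then a nearly
optimal competitor from `ζ τ`. -/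
lemma dpp (hε : 0 < ε) (hl : MLsc φ) (hco : Coercive φ ustar A B)
    {τ : ℝ} (hτ : 0 ≤ τ) {ζ : ℝ → X} {n h : ℝ → ℝ} (hs : RSeg φ τ ζ n h) {v : ℝ}
    (hv : Veps φ ε (ζ τ) ≤ v) :
    Veps φ ε (ζ 0) ≤
      (((∫ t in Ioc 0 τ, (ε / 2 * n t ^ 2 + h t) * wt ε t) + Real.exp (-τ / ε) * v : ℝ) : EReal) := by
  refine EReal.le_of_forall_lt_iff_le.1 fun c hc => ?_
  rw [EReal.coe_lt_coe_iff] at hc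
  have h0 := Real.exp_pos (-τ / ε)
  obtain ⟨z, k, f, hR, hk⟩ := exists_rcurve hε hl hco (x := ζ τ)
    (c := ((v + (c - ((∫ t in Ioc 0 τ, (ε / 2 * n t ^ 2 + h t) * wt ε t) +
      Real.exp (-τ / ε) * v)) / Real.exp (-τ / ε) : ℝ) : EReal)) (hv.trans_lt (by
        rw [EReal.coe_lt_coe_iff]
        have : 0 < (c - ((∫ t in Ioc 0 τ, (ε / 2 * n t ^ 2 + h t) * wt ε t) +
          Real.exp (-τ / ε) * v)) / Real.exp (-τ / ε) := div_pos (by linarith) h0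
        linarith))
  obtain ⟨h1, h2⟩ := hs.follow hτ hε hR
  refine (h1.Veps_le hε).trans ?_
  rw [h2, EReal.coe_le_coe_iff]
  rw [EReal.coe_lt_coe_iff] at hk
  have := mul_le_mul_of_nonneg_left hk.le h0.le
  rw [mul_add, mul_div_cancel₀ _ h0.ne'] at this
  linarith

end WED

namespace WED

/-! ### Weak limits of speeds -/

/-- A bounded sequence in a Hilbert space has a weak limit along some ultrafilter (Banach–Alaoglu),
whose norm is controlled by the limit of the norms. -/
lemma exists_weak_limit_hilbert {H : Type*} [NormedAddCommGroup H] [InnerProductSpace ℝ H]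
    [CompleteSpace H] (q : ℕ → H) {K : ℝ} (hK : Tendsto (fun n => ‖q n‖ ^ 2) atTop (𝓝 K)) :
    ∃ p : H, ‖p‖ ^ 2 ≤ K ∧ ∃ 𝒰 : Ultrafilter ℕ, (𝒰 : Filter ℕ) ≤ atTop ∧
      ∀ v, Tendsto (fun n => inner ℝ (q n) v) 𝒰 (𝓝 (inner ℝ p v)) := by
  have hK0 : 0 ≤ K := ge_of_tendsto' hK fun n => sq_nonneg _
  have hnorm : Tendsto (fun n => ‖q n‖) atTop (𝓝 (Real.sqrt K)) := by
    have := (Real.continuous_sqrt.tendsto K).comp hK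
    refine this.congr fun n => ?_
    simp [Real.sqrt_sq (norm_nonneg _)]
  obtain ⟨R, hR⟩ := hnorm.bddAbove_range
  set 𝒰 : Ultrafilter ℕ := Ultrafilter.of atTop
  have hU : (𝒰 : Filter ℕ) ≤ atTop := Ultrafilter.of_le _
  let Q : ℕ → WeakDual ℝ H := fun n => StrongDual.toWeakDual (InnerProductSpace.toDual ℝ H (q n))
  have hQ : ∀ n, Q n ∈ WeakDual.toStrongDual ⁻¹' Metric.closedBall (0 : StrongDual ℝ H) R := by
    intro n
    have : ‖InnerProductSpace.toDual ℝ H (q n)‖ ≤ R := by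
      rw [LinearIsometryEquiv.norm_map]; exact hR (mem_range_self n)
    simpa [Q, mem_closedBall_zero_iff] using this
  obtain ⟨l, -, hl⟩ := (WeakDual.isCompact_closedBall (𝕜 := ℝ) (0 : StrongDual ℝ H)
    R).ultrafilter_le_nhds (𝒰.map Q) (by
      rw [le_principal_iff, Ultrafilter.mem_coe, Ultrafilter.mem_map]
      exact Filter.univ_mem' hQ)
  have hl' : Tendsto Q 𝒰 (𝓝 l) := hl
  have hp : ∀ v, Tendsto (fun n => inner ℝ (q n) v) 𝒰
      (𝓝 (inner ℝ ((InnerProductSpace.toDual ℝ H).symm (WeakDual.toStrongDual l)) v)) := by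
    intro v
    rw [InnerProductSpace.toDual_symm_apply]
    exact ((WeakDual.eval_continuous v).tendsto l).comp hl'
  refine ⟨_, ?_, 𝒰, hU, hp⟩
  set p := (InnerProductSpace.toDual ℝ H).symm (WeakDual.toStrongDual l)
  have h1 : inner ℝ p p ≤ Real.sqrt K * ‖p‖ :=
    le_of_tendsto_of_tendsto (hp p) ((hnorm.mono_left hU).mul_const ‖p‖)
      (Eventually.of_forall fun n => real_inner_le_norm _ _)
  rw [real_inner_self_eq_norm_sq] at h1
  have h2 : ‖p‖ ≤ Real.sqrt K := by
    by_contra! h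
    have : 0 < ‖p‖ := (Real.sqrt_nonneg K).trans_lt h
    nlinarith
  calc ‖p‖ ^ 2 ≤ Real.sqrt K ^ 2 := pow_le_pow_left₀ (norm_nonneg _) h2 2
    _ = K := Real.sq_sqrt hK0

/-- Speeds with convergent kinetic energies have a weak limit `κ` in `L²(μ_ε)`. Its kinetic energy is
at most the limit, and asymptotic lower bounds for the lengths `∫_s^t k n` are inherited by `κ`. -/
lemma exists_weak_limit {ε : ℝ} (hε : 0 < ε) {k : ℕ → ℝ → ℝ} (hk0 : ∀ n t, 0 ≤ k n t)
    (hki : ∀ n, IntegrableOn (fun t => k n t ^ 2 * wt ε t) (Ioi 0)) {K : ℝ}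
    (hK : Tendsto (fun n => ∫ t in Ioi 0, k n t ^ 2 * wt ε t) atTop (𝓝 K)) :
    ∃ κ : ℝ → ℝ, (∀ t, 0 ≤ κ t) ∧ IntegrableOn (fun t => κ t ^ 2 * wt ε t) (Ioi 0) ∧
      ∫ t in Ioi 0, κ t ^ 2 * wt ε t ≤ K ∧
      ∀ s t d : ℝ, 0 ≤ s → s ≤ t → (∀ c < d, ∀ᶠ n in atTop, c ≤ ∫ r in s..t, k n r) →
        d ≤ ∫ r in s..t, κ r := by
  have hw := wt_pos hε
  set w : ℝ → ℝ := fun t => Real.sqrt (wt ε t) with hwdef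
  have hw0 : ∀ t, 0 < w t := fun t => Real.sqrt_pos.2 (hw t)
  have hwsq : ∀ t, w t ^ 2 = wt ε t := fun t => Real.sq_sqrt (hw t).le
  have hwc : Continuous w := (continuous_wt ε).sqrt
  let μ : Measure ℝ := volume.restrict (Ioi 0)
  have hqm : ∀ n, AEStronglyMeasurable (fun t => k n t * w t) μ := fun n =>
    ((aemeasurable_of_sq hε (hk0 n) (hki n)).mul hwc.measurable.aemeasurable).aestronglyMeasurable
  have hsq : ∀ n t, (k n t * w t) ^ 2 = k n t ^ 2 * wt ε t := fun n t => by
    rw [mul_pow, hwsq]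
  have hq : ∀ n, MemLp (fun t => k n t * w t) 2 μ := fun n => by
    rw [memLp_two_iff_integrable_sq (hqm n)]
    simp_rw [hsq]; exact hki n
  set q : ℕ → Lp ℝ 2 μ := fun n => (hq n).toLp _ with hqdef
  have hnorm : ∀ p : Lp ℝ 2 μ, ‖p‖ ^ 2 = ∫ t, p t ^ 2 ∂μ := fun p => by
    rw [← real_inner_self_eq_norm_sq, L2.inner_def]
    congr 1; ext t; simp [sq]
  have hqn : ∀ n, ‖q n‖ ^ 2 = ∫ t in Ioi 0, k n t ^ 2 * wt ε t := fun n => by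
    rw [hnorm]
    refine integral_congr_ae ?_
    filter_upwards [(hq n).coeFn_toLp] with t ht
    rw [hqdef, ht, hsq]
  obtain ⟨p, hpK, 𝒰, hU, hlim⟩ := exists_weak_limit_hilbert q (by simpa only [hqn] using hK)
  have hpint : Integrable (fun t => p t ^ 2) μ :=
    (memLp_two_iff_integrable_sq (Lp.aestronglyMeasurable p)).1 (Lp.memLp p)
  have hκsq : ∀ t, (|p t| / w t) ^ 2 * wt ε t = p t ^ 2 := fun t => by
    have := (hw t).ne'
    rw [div_pow, hwsq, sq_abs]; field_simp
  have hκ0 : ∀ t, 0 ≤ |p t| / w t := fun t => div_nonneg (abs_nonneg _) (hw0 t).le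
  have hκint : IntegrableOn (fun t => (|p t| / w t) ^ 2 * wt ε t) (Ioi 0) := by
    simp_rw [hκsq]; exact hpint
  refine ⟨fun t => |p t| / w t, hκ0, hκint, ?_, ?_⟩
  · simp_rw [hκsq]; rw [← hnorm]; exact hpK
  intro s t d hs hst H
  have hsub : Ioc s t ⊆ Ioi 0 := fun r hr => hs.trans_lt hr.1
  have hvm : MemLp ((Ioc s t).indicator fun r => (w r)⁻¹) 2 μ := by
    have h1 : MemLp (fun r => (w r)⁻¹) 2 (volume.restrict (Ioc s t)) := by
      have hc : Continuous fun r => (w r)⁻¹ := hwc.inv₀ fun r => (hw0 r).ne'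
      rw [memLp_two_iff_integrable_sq hc.aestronglyMeasurable]
      exact ((hc.pow 2).continuousOn.integrableOn_Icc).mono_set Ioc_subset_Icc_self
    rw [memLp_indicator_iff_restrict measurableSet_Ioc]
    rw [Measure.restrict_restrict measurableSet_Ioc, inter_eq_left.2 hsub]
    exact h1
  have hinner : ∀ (y : ℝ → ℝ) (Y : Lp ℝ 2 μ), Y =ᵐ[μ] y →
      inner ℝ Y (hvm.toLp _) = ∫ r in s..t, y r / w r := by
    intro y Y hY
    rw [L2.inner_def, intervalIntegral.integral_of_le hst]
    have : ∫ r in Ioc s t, y r / w r = ∫ r in Ioc s t, y r / w r ∂μ := by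
      rw [Measure.restrict_restrict measurableSet_Ioc, inter_eq_left.2 hsub]
    rw [this, ← integral_indicator measurableSet_Ioc]
    refine integral_congr_ae ?_
    filter_upwards [hY, hvm.coeFn_toLp] with r h1 h2
    rw [h1, h2]
    by_cases hr : r ∈ Ioc s t
    · simp [hr, div_eq_mul_inv, mul_comm]
    · simp [hr]
  have hq' : ∀ n, inner ℝ (q n) (hvm.toLp _) = ∫ r in s..t, k n r := fun n => by
    rw [hinner _ _ (hq n).coeFn_toLp]
    congr 1; ext r
    have := (hw0 r).ne'
    field_simp
  have hlimZ := hlim (hvm.toLp _)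
  simp_rw [hq'] at hlimZ
  rw [hinner (fun r => p r) p (by rfl)] at hlimZ
  have hd : d ≤ ∫ r in s..t, p r / w r := by
    refine le_of_forall_lt fun c hc => ?_
    obtain ⟨c', h1, h2⟩ := exists_between hc
    exact h1.trans_le (ge_of_tendsto hlimZ ((H c' h2).filter_mono hU))
  have hi : IntervalIntegrable (fun r => |p r| / w r) volume s t := by
    have key : ∀ b, 0 ≤ b → IntervalIntegrable (fun r => |p r| / w r) volume 0 b := fun _ hb =>
      intervalIntegrable_of_sq hb hκ0 (sq_intervalIntegrable hε hκ0 hκint hb)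
    exact (key s hs).symm.trans (key t (hs.trans hst))
  refine hd.trans ?_
  rw [intervalIntegral.integral_of_le hst, intervalIntegral.integral_of_le hst]
  rw [intervalIntegrable_iff_integrableOn_Ioc_of_le hst] at hi
  have hpm : AEStronglyMeasurable (fun r => p r / w r) (volume.restrict (Ioc s t)) := by
    have : AEStronglyMeasurable (fun r => p r / w r) μ :=
      ((Lp.aestronglyMeasurable p).aemeasurable.div
        hwc.measurable.aemeasurable).aestronglyMeasurable
    exact this.mono_measure (Measure.restrict_mono hsub le_rfl)
  refine integral_mono_ae (hi.mono' hpm (Eventually.of_forall fun r => ?_)) hi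
    (Eventually.of_forall fun r => ?_)
  · rw [norm_div, Real.norm_eq_abs, Real.norm_of_nonneg (hw0 r).le]
  · exact div_le_div_of_nonneg_right (le_abs_self _) (hw0 r).le

end WED

namespace WED

/-! ### Compactness of stopped competitors -/

/-- Diagonal extraction: properties `P i` that can be achieved by passing to a subsequence and that
are inherited by sequences which are eventually subsequences can be achieved simultaneously. -/
lemma exists_diagonal (P : ℕ → (ℕ → ℕ) → Prop)
    (ha : ∀ (i : ℕ) (ψ : ℕ → ℕ), StrictMono ψ → ∃ η : ℕ → ℕ, StrictMono η ∧ P i (ψ ∘ η))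
    (hb : ∀ (i : ℕ) (ψ ψ' : ℕ → ℕ), P i ψ → (∀ᶠ j in atTop, ∃ n ≥ j, ψ' j = ψ n) → P i ψ') :
    ∃ ψ : ℕ → ℕ, StrictMono ψ ∧ ∀ i, P i ψ := by
  choose η hη hP using ha
  let step : ℕ → {ψ : ℕ → ℕ // StrictMono ψ} → {ψ : ℕ → ℕ // StrictMono ψ} :=
    fun i ψ => ⟨ψ.1 ∘ η i ψ.1 ψ.2, ψ.2.comp (hη i ψ.1 ψ.2)⟩
  let Ψ : ℕ → {ψ : ℕ → ℕ // StrictMono ψ} := fun n => Nat.rec ⟨id, strictMono_id⟩ step n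
  have hΨ : ∀ n, (Ψ (n + 1)).1 = (Ψ n).1 ∘ η n (Ψ n).1 (Ψ n).2 := fun n => rfl
  have hPΨ : ∀ n, P n (Ψ (n + 1)).1 := fun n => hP n _ _
  have hle : ∀ i j, i ≤ j → ∀ n, ∃ n' ≥ n, (Ψ j).1 n = (Ψ i).1 n' := by
    intro i j hij
    induction j, hij using Nat.le_induction with
    | base => exact fun n => ⟨n, le_rfl, rfl⟩
    | succ j _ ih =>
      intro n
      obtain ⟨n', hn', h⟩ := ih (η j (Ψ j).1 (Ψ j).2 n)
      exact ⟨n', ((hη j (Ψ j).1 (Ψ j).2).le_apply).trans hn', by rw [hΨ, Function.comp_apply, h]⟩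
  refine ⟨fun j => (Ψ j).1 j, strictMono_nat_of_lt_succ fun j => ?_, fun i => ?_⟩
  · rw [hΨ]
    exact (Ψ j).2 (lt_of_lt_of_le (Nat.lt_succ_self j) ((hη j (Ψ j).1 (Ψ j).2).le_apply))
  · refine hb i _ _ (hPΨ i) ?_
    filter_upwards [eventually_ge_atTop (i + 1)] with j hj
    exact hle (i + 1) j hj j

section Metric
variable {X : Type*} [MetricSpace X]

lemma exists_mconv [CompleteSpace X] {y : ℕ → X}
    (h : ∀ i l : ℕ, dist (y i) (y l) ≤ 1 / ((i:ℝ) + 1) + 1 / ((l:ℝ) + 1)) : ∃ x, MConv y x := by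
  refine cauchySeq_tendsto_of_complete (Metric.cauchySeq_iff.2 fun δ hδ => ?_)
  obtain ⟨n, hn⟩ := exists_nat_one_div_lt (half_pos hδ)
  refine ⟨n, fun i hi l hl => (h i l).trans_lt ?_⟩
  have h1 : 1 / ((i:ℝ) + 1) ≤ 1 / ((n:ℝ) + 1) := by gcongr
  have h2 : 1 / ((l:ℝ) + 1) ≤ 1 / ((n:ℝ) + 1) := by gcongr
  linarith

variable {φ : X → EReal} {ε : ℝ} {x : X} {z : ℝ → X} {k f : ℝ → ℝ}

/-- Competitors are `1/2`-Hölder continuous on `[0, M]`, with a constant controlled by their kinetic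
energy. -/
lemma RCurve.holder (h : RCurve φ ε x z k f) (hε : 0 < ε) {s t M : ℝ} (hs : 0 ≤ s) (hst : s ≤ t)
    (htM : t ≤ M) :
    dist (z s) (z t) ^ 2 ≤ (∫ r in Ioi 0, k r ^ 2 * wt ε r) * ((wt ε M)⁻¹ * (t - s)) := by
  have hw := wt_pos hε
  have hc : Continuous fun r => (wt ε r)⁻¹ := (continuous_wt ε).inv₀ fun r => (hw r).ne'
  have e : ∀ r, k r ^ 2 / (wt ε r)⁻¹ = k r ^ 2 * wt ε r := fun r => by rw [div_inv_eq_mul]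
  have hsub : Ioc s t ⊆ Ioi 0 := fun r hr => hs.trans_lt hr.1
  have i2 : IntervalIntegrable (fun r => k r ^ 2 * wt ε r) volume s t :=
    (intervalIntegrable_iff_integrableOn_Ioc_of_le hst).2 (h.int_k.mono_set hsub)
  have h1 := cs_interval hst (fun r => inv_pos.2 (hw r))
    (h.intervalIntegrable hε hs (hs.trans hst)) (by simpa only [e] using i2)
    (hc.intervalIntegrable s t)
  simp_rw [e] at h1
  have h2 : ∫ r in s..t, k r ^ 2 * wt ε r ≤ ∫ r in Ioi 0, k r ^ 2 * wt ε r := by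
    rw [intervalIntegral.integral_of_le hst]
    exact setIntegral_mono_set h.int_k
      (Eventually.of_forall fun r => mul_nonneg (sq_nonneg _) (hw r).le) hsub.eventuallyLE
  have h3 : ∫ r in s..t, (wt ε r)⁻¹ ≤ (wt ε M)⁻¹ * (t - s) := by
    have := intervalIntegral.integral_mono_on hst (hc.intervalIntegrable (μ := volume) s t)
      ((continuous_const (y := (wt ε M)⁻¹)).intervalIntegrable (μ := volume) s t) (fun r hr => by
        exact inv_anti₀ (hw M) (wt_anti hε (hr.2.trans htM)))
    simpa [mul_comm] using this
  have h0 : 0 ≤ ∫ r in s..t, (wt ε r)⁻¹ :=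
    intervalIntegral.integral_nonneg hst fun r _ => (inv_pos.2 (hw r)).le
  have h4 : 0 ≤ ∫ r in Ioi 0, k r ^ 2 * wt ε r :=
    setIntegral_nonneg measurableSet_Ioi fun t _ => mul_nonneg (sq_nonneg _) (hw t).le
  calc dist (z s) (z t) ^ 2 ≤ (∫ r in s..t, k r) ^ 2 :=
        pow_le_pow_left₀ dist_nonneg (h.dist_le s t hs hst) 2
    _ ≤ _ := h1
    _ ≤ _ := mul_le_mul h2 h3 h0 h4

end Metric

section Top
variable {X : Type*} [MetricSpace X] {σ : TopologicalSpace X} {φ : X → EReal} {ustar : X}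
  {A B : ℝ}

lemma Compatible.dist_le (hc : Compatible σ) {u v : ℕ → X} {x y : X}
    (hu : Tendsto u atTop (@nhds X σ x)) (hv : Tendsto v atTop (@nhds X σ y)) {C : ℝ}
    (h : ∀ n, dist (u n) (v n) ≤ C) : dist x y ≤ C := by
  have h1 : ENNReal.ofReal (dist x y) ≤ ENNReal.ofReal C :=
    (hc.mt1 u v x y hu hv).trans (liminf_le_of_frequently_le'
      (Frequently.of_forall fun n => ENNReal.ofReal_le_ofReal (h n)))
  exact (ENNReal.ofReal_le_ofReal_iff (dist_nonneg.trans (h 0))).1 h1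

lemma Compatible.unique (hc : Compatible σ) {u : ℕ → X} {x y : X}
    (hu : Tendsto u atTop (@nhds X σ x)) (hv : Tendsto u atTop (@nhds X σ y)) : x = y :=
  dist_le_zero.1 (hc.dist_le hu hv fun _ => (dist_self _).le)

/-- A sequence that is approximated, uniformly in the distance, by `σ`-convergent sequences is
`σ`-convergent: the approximating limits `y i` form a Cauchy sequence by (MT1), and (MT2) identifies
its limit as the `σ`-limit of `w`. -/
lemma Compatible.exists_limit [CompleteSpace X] (hc : Compatible σ) {w : ℕ → X} {W : ℕ → ℕ → X}
    {y : ℕ → X} (hW : ∀ i, Tendsto (W i) atTop (@nhds X σ (y i)))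
    (hd : ∀ i j : ℕ, dist (w j) (W i j) ≤ 1 / ((i:ℝ) + 1)) :
    ∃ x, Tendsto w atTop (@nhds X σ x) := by
  obtain ⟨x, hx⟩ := exists_mconv (y := y) (fun i l => hc.dist_le (hW i) (hW l) fun n => by
    refine (dist_triangle_left _ _ (w n)).trans (add_le_add (hd i n) (hd l n)))
  refine ⟨x, ?_⟩
  rw [@tendsto_nhds X σ]
  intro U hU hxU
  obtain ⟨V, hV, hxV, δ, hδ, H⟩ := hc.mt2 U hU x hxU
  have h1 : ∀ᶠ i in atTop, y i ∈ V := hc.tendsto hx (@IsOpen.mem_nhds X σ _ _ hV hxV)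
  obtain ⟨n, hn⟩ := exists_nat_one_div_lt hδ
  obtain ⟨i, hi, hin⟩ := (h1.and (eventually_ge_atTop n)).exists
  filter_upwards [hW i (@IsOpen.mem_nhds X σ _ _ hV hi)] with j hj
  refine H _ ((Metric.infDist_le_dist_of_mem (s := V) (y := W i j) hj).trans_lt ((hd i j).trans_lt (lt_of_le_of_lt ?_ hn)))
  gcongr

/-- Pointwise `σ`-compactness of equicontinuous curves with bounded integrated energy.
By Fatou's lemma, every rational interval contains a time at which the energies are bounded along a
subsequence, hence at which a further subsequence converges; a diagonal sequence does so for all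
rational intervals, and equicontinuity transfers the convergence to all times. -/
lemma exists_pointwise_limit [CompleteSpace X] (hφ : LSCC σ φ ustar A B) (hc : Compatible σ)
    {z : ℕ → ℝ → X} {f : ℕ → ℝ → ℝ} {w : ℝ → ℝ} {R : ℝ} {D : ℝ≥0∞} (hw : ∀ t, 0 < w t)
    (hD : D ≠ ⊤)
    (hbd : ∃ C, ∀ i j t, 0 ≤ t → dist (z i t) (z j t) ≤ C)
    (heq : ∀ t, 0 ≤ t → ∀ δ > 0, ∃ η > 0, ∀ s, t ≤ s → s < t + η → ∀ j, dist (z j t) (z j s) ≤ δ)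
    (hen : ∀ j, ∀ᵐ t ∂(volume.restrict (Ioi 0)), φ (z j t) ≤ (f j t : EReal))
    (hfm : ∀ j, AEMeasurable (fun t => ENNReal.ofReal ((f j t + R) * w t))
      (volume.restrict (Ioi 0)))
    (hf : ∀ j, ∫⁻ t in Ioi 0, ENNReal.ofReal ((f j t + R) * w t) ≤ D) :
    ∃ ψ : ℕ → ℕ, StrictMono ψ ∧
      ∀ t, 0 ≤ t → ∃ y, Tendsto (fun j => z (ψ j) t) atTop (@nhds X σ y) := by
  obtain ⟨C, hC⟩ := hbd
  obtain ⟨e, he⟩ := exists_surjective_nat (ℚ × ℚ)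
  let P : ℕ → (ℕ → ℕ) → Prop := fun i ψ => 0 ≤ (e i).1 → (e i).1 < (e i).2 →
      ∃ t ∈ Ioo ((e i).1 : ℝ) ((e i).2 : ℝ), ∃ y,
        Tendsto (fun j => z (ψ j) t) atTop (@nhds X σ y)
  have hdiag : ∃ ψ : ℕ → ℕ, StrictMono ψ ∧ ∀ i, P i ψ := by
    refine exists_diagonal P ?_ ?_
    · intro i ψ hψ
      by_cases h0 : 0 ≤ (e i).1 ∧ (e i).1 < (e i).2
      swap
      · exact ⟨id, strictMono_id, fun h1 h2 => absurd ⟨h1, h2⟩ h0⟩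
      have hab : ((e i).1 : ℝ) < (e i).2 := by exact_mod_cast h0.2
      have ha : (0:ℝ) ≤ (e i).1 := by exact_mod_cast h0.1
      have hsub : Ioo ((e i).1 : ℝ) ((e i).2 : ℝ) ⊆ Ioi 0 := fun t ht => ha.trans_lt ht.1
      have hF : ∫⁻ t in Ioi 0, liminf (fun j => ENNReal.ofReal ((f (ψ j) t + R) * w t)) atTop ≤ D :=
        (lintegral_liminf_le' fun j => hfm (ψ j)).trans
          (liminf_le_of_frequently_le' (Frequently.of_forall fun j => hf (ψ j)))
      have hm : AEMeasurable (fun t => liminf (fun j => ENNReal.ofReal ((f (ψ j) t + R) * w t)) atTop)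
          (volume.restrict (Ioi 0)) := by
        simp only [liminf_eq_iSup_iInf_of_nat]
        exact AEMeasurable.iSup fun n => AEMeasurable.iInf fun j => AEMeasurable.iInf fun _ => hfm _
      have hae := (ae_lt_top' hm (ne_top_of_le_ne_top hD hF)).and
        (ae_all_iff.2 hen)
      have hae' := ae_restrict_of_ae_restrict_of_subset hsub hae
      have hne : (ae (volume.restrict (Ioo ((e i).1 : ℝ) ((e i).2 : ℝ)))).NeBot := by
        rw [ae_neBot, Ne, Measure.restrict_eq_zero]
        simpa using h0.2
      obtain ⟨t, ⟨ht1, ht2⟩, ht⟩ := (hae'.and (self_mem_ae_restrict measurableSet_Ioo)).exists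
      obtain ⟨M, hM1, hM2⟩ := exists_between ht1
      obtain ⟨η, hη, hηM⟩ := extraction_of_frequently_atTop (frequently_lt_of_liminf_lt (by isBoundedDefault) hM1)
      obtain ⟨y, θ, hθ, hy⟩ := hφ.cpt (fun n => z (ψ (η n)) t)
        ⟨M.toReal / w t - R, fun n => (ht2 _).trans (by
          rw [EReal.coe_le_coe_iff, le_sub_iff_add_le, le_div_iff₀ (hw t)]
          exact (ENNReal.ofReal_le_iff_le_toReal hM2.ne).1 (hηM n).le)⟩
        ⟨C, fun n k => hC _ _ t (hsub ht).le⟩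
      exact ⟨η ∘ θ, hη.comp hθ, fun _ _ => ⟨t, ht, y, hy⟩⟩
    · intro i ψ ψ' hP hev h1 h2
      obtain ⟨t, ht, y, hy⟩ := hP h1 h2
      refine ⟨t, ht, y, ?_⟩
      intro U hU
      obtain ⟨n₀, hn₀⟩ := eventually_atTop.1 (hy hU)
      rw [mem_map]
      filter_upwards [hev, eventually_ge_atTop n₀] with j ⟨n, hn, hj⟩ hj0
      show z (ψ' j) t ∈ U
      rw [hj]
      exact hn₀ n (hj0.trans hn)
  obtain ⟨ψ, hψ, hPψ⟩ := hdiag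
  refine ⟨ψ, hψ, fun t ht => ?_⟩
  have key : ∀ i : ℕ, ∃ s, ∃ y, Tendsto (fun j => z (ψ j) s) atTop (@nhds X σ y) ∧
      ∀ j, dist (z (ψ j) t) (z (ψ j) s) ≤ 1 / ((i:ℝ) + 1) := by
    intro i
    obtain ⟨η, hη, H⟩ := heq t ht (1 / ((i:ℝ) + 1)) (by positivity)
    obtain ⟨a, h1, h2⟩ := exists_rat_btwn (show t < t + η by linarith)
    obtain ⟨b, h3, h4⟩ := exists_rat_btwn h2
    obtain ⟨l, hl⟩ := he (a, b)
    have ha : (0:ℝ) ≤ a := ht.trans h1.le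
    obtain ⟨s, hs, y, hy⟩ := hPψ l (by rw [hl]; exact_mod_cast ha)
      (by rw [hl]; exact_mod_cast h3)
    rw [hl] at hs
    exact ⟨s, y, hy, fun j => H s (h1.trans hs.1).le (hs.2.trans h4) _⟩
  choose s y hy hd using key
  exact hc.exists_limit hy fun i j => hd i j

end Top
end WED

namespace WED

/-! ### Closedness of the sublevels of the stopped problem -/

/-- The starting points of relaxed competitors of cost at most `q` that rest after time `N`. -/
def StopSet {X : Type*} [MetricSpace X] (φ : X → EReal) (ε N q : ℝ) : Set X :=
  {x | ∃ z k f, RCurve φ ε x z k f ∧ (∀ t, N ≤ t → z t = z N) ∧ cost ε k f ≤ q}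

section Top
variable {X : Type*} [MetricSpace X] {σ : TopologicalSpace X} {φ : X → EReal} {ustar : X}
  {A B ε N q : ℝ}

/-- Lower semicontinuity: competitors that rest after time `N` and whose kinetic energies converge
have a limiting competitor, obtained from pointwise `σ`-limits, a weak limit of the speeds and
Fatou's lemma for the energies. -/
lemma stopSet_of_tendsto [CompleteSpace X] (hφ : LSCC σ φ ustar A B) (hc : Compatible σ)
    (hε : 0 < ε) (hN : 0 ≤ N) {xs : ℕ → X} {x : X} (hx : MConv xs x) {z : ℕ → ℝ → X}
    {k f : ℕ → ℝ → ℝ} (hr : ∀ j, RCurve φ ε (xs j) (z j) (k j) (f j))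
    (hrest : ∀ j t, N ≤ t → z j t = z j N) (hcost : ∀ j, cost ε (k j) (f j) ≤ q) {K K₀ : ℝ}
    (hK : Tendsto (fun j => ∫ t in Ioi 0, k j t ^ 2 * wt ε t) atTop (𝓝 K))
    (hK₀ : ∀ j, ∫ t in Ioi 0, k j t ^ 2 * wt ε t ≤ K₀) : x ∈ StopSet φ ε N q := by
  have hw := wt_pos hε
  have hKj : ∀ j, 0 ≤ ∫ t in Ioi 0, k j t ^ 2 * wt ε t := fun j =>
    setIntegral_nonneg measurableSet_Ioi fun t _ => mul_nonneg (sq_nonneg _) (hw t).le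
  have hK₀0 : 0 ≤ K₀ := (hKj 0).trans (hK₀ 0)
  obtain ⟨C₁, hC₁⟩ := hx.bounded
  set D := C₁ + dist (xs 0) ustar with hDdef
  have hD : ∀ j, dist (xs j) ustar ≤ D := fun j =>
    (dist_triangle _ (xs 0) _).trans (add_le_add_left (hC₁ j 0) _)
  set L := K₀ * (wt ε N)⁻¹ with hLdef
  have hL : 0 ≤ L := mul_nonneg hK₀0 (inv_nonneg.2 (hw N).le)
  have hmin : ∀ j t, z j t = z j (min t N) := by
    intro j t
    rcases le_total t N with h | h
    · rw [min_eq_left h]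
    · rw [min_eq_right h, hrest j t h]
  have hold : ∀ j s t, 0 ≤ s → s ≤ t → dist (z j s) (z j t) ^ 2 ≤ L * (min t N - min s N) := by
    intro j s t hs hst
    rw [hmin j s, hmin j t]
    refine ((hr j).holder hε (M := N) (le_min hs hN) (min_le_min_right N hst)
      (min_le_right _ _)).trans ?_
    rw [hLdef, mul_assoc]
    exact mul_le_mul_of_nonneg_right (hK₀ j) (mul_nonneg (inv_nonneg.2 (hw N).le)
      (sub_nonneg.2 (min_le_min_right N hst)))
  have hR₀ : ∀ j t, 0 ≤ t → dist (z j t) (xs j) ^ 2 ≤ L * N := by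
    intro j t ht
    rw [dist_comm, ← (hr j).start]
    refine (hold j 0 t le_rfl ht).trans (mul_le_mul_of_nonneg_left ?_ hL)
    rw [min_eq_left hN]
    linarith [min_le_right t N]
  -- all the curves stay in a bounded set, on which `φ ≥ -R`
  set R := B * (L * N) + (B * D ^ 2 + A) with hRdef
  have hlow : ∀ j t, 0 ≤ t → ((-R : ℝ) : EReal) ≤ φ (z j t) := by
    intro j t ht
    refine le_trans ?_ (hφ.coercive (z j t) (xs j))
    rw [EReal.coe_le_coe_iff]
    have h1 := mul_le_mul_of_nonneg_left (hR₀ j t ht) hφ.hB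
    have h2 := mul_le_mul_of_nonneg_left (pow_le_pow_left₀ dist_nonneg (hD j) 2) hφ.hB
    linarith
  have hfR : ∀ j, ∀ᵐ t ∂(volume.restrict (Ioi 0)), 0 ≤ (f j t + R) * wt ε t := by
    intro j
    filter_upwards [(hr j).energy, self_mem_ae_restrict measurableSet_Ioi] with t h1 h2
    have := EReal.coe_le_coe_iff.1 ((hlow j t (le_of_lt h2)).trans h1)
    exact mul_nonneg (by linarith) (hw t).le
  have hfRi : ∀ j, IntegrableOn (fun t => (f j t + R) * wt ε t) (Ioi 0) := fun j =>
    ((hr j).int_f.add ((integrableOn_wt hε 0).const_mul R)).congr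
      (Eventually.of_forall fun t => by simp only [Pi.add_apply]; ring)
  have hfRe : ∀ j, ∫ t in Ioi 0, (f j t + R) * wt ε t = (∫ t in Ioi 0, f j t * wt ε t) + R := by
    intro j
    have h1 : R = ∫ t in Ioi 0, R * wt ε t := by rw [integral_const_mul, integral_wt hε, mul_one]
    conv_rhs => rw [h1]
    rw [← integral_add (hr j).int_f ((integrableOn_wt hε 0).const_mul R)]
    congr 1; ext t; ring
  set κq : ℕ → ℝ := fun j => q - ε / 2 * (∫ t in Ioi 0, k j t ^ 2 * wt ε t) + R with hκq
  have hfle : ∀ j, ∫ t in Ioi 0, (f j t + R) * wt ε t ≤ κq j := by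
    intro j
    have := hcost j
    rw [(hr j).cost_eq] at this
    rw [hfRe, hκq]
    simp only
    linarith
  have hlint : ∀ j, ∫⁻ t in Ioi 0, ENNReal.ofReal ((f j t + R) * wt ε t) ≤
      ENNReal.ofReal (κq j) := by
    intro j
    rw [← ofReal_integral_eq_lintegral_ofReal (hfRi j) (hfR j)]
    exact ENNReal.ofReal_le_ofReal (hfle j)
  have hfm : ∀ j, AEMeasurable (fun t => ENNReal.ofReal ((f j t + R) * wt ε t))
      (volume.restrict (Ioi 0)) := fun j => (hfRi j).aemeasurable.ennreal_ofReal
  have hbd : ∃ C, ∀ i j t, 0 ≤ t → dist (z i t) (z j t) ≤ C := by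
    refine ⟨Real.sqrt (L * N) + C₁ + Real.sqrt (L * N), fun i j t ht => ?_⟩
    refine (dist_triangle4 _ (xs i) (xs j) _).trans ?_
    refine add_le_add (add_le_add (Real.le_sqrt_of_sq_le (hR₀ i t ht)) (hC₁ i j)) ?_
    rw [dist_comm]
    exact Real.le_sqrt_of_sq_le (hR₀ j t ht)
  obtain ⟨ψ, hψ, hlim⟩ := exists_pointwise_limit hφ hc (z := z) (f := f) (w := wt ε) (R := R)
    (D := ENNReal.ofReal (q + R)) hw ENNReal.ofReal_ne_top hbd
    (by
      intro t ht δ hδ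
      refine ⟨δ ^ 2 / (L + 1), by positivity, fun s hts hs j => ?_⟩
      refine (sq_le_sq₀ dist_nonneg hδ.le).1 ?_
      refine (hold j t s ht hts).trans ?_
      have h1 : min s N - min t N ≤ δ ^ 2 / (L + 1) := by
        have : min s N ≤ min t N + (s - t) := by
          rcases le_total t N with h | h
          · rw [min_eq_left h]; linarith [min_le_left s N]
          · rw [min_eq_right h]; linarith [min_le_right s N]
        linarith
      have h2 : 0 ≤ min s N - min t N := sub_nonneg.2 (min_le_min_right N hts)
      calc L * (min s N - min t N) ≤ (L + 1) * (δ ^ 2 / (L + 1)) := by gcongr; linarith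
        _ = δ ^ 2 := by field_simp)
    (fun j => (hr j).energy) hfm
    (fun j => (hlint j).trans (ENNReal.ofReal_le_ofReal (by
      simp only [hκq]
      have := mul_nonneg (half_pos hε).le (hKj j)
      linarith)))
  have hlimZ : ∀ t, ∃ y, 0 ≤ t → Tendsto (fun j => z (ψ j) t) atTop (@nhds X σ y) := by
    intro t
    by_cases ht : 0 ≤ t
    · obtain ⟨y, hy⟩ := hlim t ht
      exact ⟨y, fun _ => hy⟩
    · exact ⟨x, fun h => absurd h ht⟩
  choose Z hZ using hlimZ
  -- `F` is the lower limit of the shifted energies times the weight, so `F / wt - R` is an upper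
  -- energy for the limit curve by lower semicontinuity of `φ`, and Fatou bounds its integral
  set F : ℝ → ℝ≥0∞ := fun t => liminf (fun j => ENNReal.ofReal ((f (ψ j) t + R) * wt ε t)) atTop
    with hF
  have hFm : AEMeasurable F (volume.restrict (Ioi 0)) := by
    simp only [hF, liminf_eq_iSup_iInf_of_nat]
    exact AEMeasurable.iSup fun n => AEMeasurable.iInf fun j => AEMeasurable.iInf fun _ => hfm _
  have hκlim : Tendsto (fun j => κq (ψ j)) atTop (𝓝 (q - ε / 2 * K + R)) :=
    ((tendsto_const_nhds.sub (hK.const_mul (ε / 2))).add tendsto_const_nhds).comp hψ.tendsto_atTop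
  have hκ0 : 0 ≤ q - ε / 2 * K + R := ge_of_tendsto' hκlim fun j =>
    (integral_nonneg_of_ae (hfR (ψ j))).trans (hfle (ψ j))
  have hFi : ∫⁻ t in Ioi 0, F t ≤ ENNReal.ofReal (q - ε / 2 * K + R) := by
    refine (lintegral_liminf_le' fun j => hfm (ψ j)).trans ?_
    refine (liminf_le_liminf (Eventually.of_forall fun j => hlint (ψ j))).trans ?_
    exact ((ENNReal.continuous_ofReal.tendsto _).comp hκlim).liminf_eq.le
  have hFt : ∫⁻ t in Ioi 0, F t ≠ ⊤ := ne_top_of_le_ne_top ENNReal.ofReal_ne_top hFi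
  have hFint : IntegrableOn (fun t => (F t).toReal) (Ioi 0) :=
    integrable_toReal_of_lintegral_ne_top hFm hFt
  have hFle : ∫ t in Ioi 0, (F t).toReal ≤ q - ε / 2 * K + R := by
    rw [integral_toReal hFm (ae_lt_top' hFm hFt)]
    exact ENNReal.toReal_le_of_le_ofReal hκ0 hFi
  have efl : ∀ t, ((F t).toReal / wt ε t - R) * wt ε t = (F t).toReal - R * wt ε t := by
    intro t
    have := (hw t).ne'
    field_simp
  obtain ⟨κ, hκ0', hκi, hκK, hκd⟩ := exists_weak_limit hε (k := fun j => k (ψ j))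
    (fun j => (hr (ψ j)).nonneg) (fun j => (hr (ψ j)).int_k) (hK.comp hψ.tendsto_atTop)
  have hR : RCurve φ ε x Z κ (fun t => (F t).toReal / wt ε t - R) := by
    refine ⟨?_, hκ0', ?_, hκi, ?_, ?_⟩
    · refine hc.unique (hZ 0 le_rfl) ?_
      have := (hc.tendsto hx).comp hψ.tendsto_atTop
      simp only [(hr _).start]
      exact this
    · intro s t hs hst
      refine hκd s t _ hs hst fun c hcd => ?_
      rcases lt_or_ge c 0 with h0 | h0
      · exact Eventually.of_forall fun n => h0.le.trans
          (intervalIntegral.integral_nonneg hst fun r _ => (hr (ψ n)).nonneg r)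
      have h1 := hc.mt1 _ _ _ _ (hZ s hs) (hZ t (hs.trans hst))
      have h2 := ((ENNReal.ofReal_lt_ofReal_iff (h0.trans_lt hcd)).2 hcd).trans_le h1
      filter_upwards [eventually_lt_of_lt_liminf h2] with n hn
      exact ((ENNReal.ofReal_lt_ofReal_iff_of_nonneg h0).1 hn).le.trans
        ((hr (ψ n)).dist_le s t hs hst)
    · simp only [efl]
      exact hFint.sub ((integrableOn_wt hε 0).const_mul R)
    · filter_upwards [ae_lt_top' hFm hFt, ae_all_iff.2 fun j => (hr j).energy,
        self_mem_ae_restrict measurableSet_Ioi] with t h1 h2 h3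
      obtain ⟨C, hC⟩ := hbd
      refine (hφ.lsc _ _ ⟨C, fun i j => hC (ψ i) (ψ j) t (le_of_lt h3)⟩
        (hZ t (le_of_lt h3))).trans ?_
      refine EReal.le_of_forall_lt_iff_le.1 fun c hcc => ?_
      rw [EReal.coe_lt_coe_iff, sub_lt_iff_lt_add, div_lt_iff₀ (hw t)] at hcc
      have h4 : F t < ENNReal.ofReal ((c + R) * wt ε t) :=
        (ENNReal.lt_ofReal_iff_toReal_lt h1.ne).2 hcc
      refine liminf_le_of_frequently_le' ((frequently_lt_of_liminf_lt (by isBoundedDefault)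
        h4).mono fun j hj => (h2 (ψ j)).trans ?_)
      rw [EReal.coe_le_coe_iff]
      have h5 := (ENNReal.ofReal_lt_ofReal_iff (ENNReal.toReal_nonneg.trans_lt hcc)).1 hj
      linarith [lt_of_mul_lt_mul_right h5 (hw t).le]
  refine ⟨Z, κ, _, hR, fun t ht => ?_, ?_⟩
  · refine hc.unique (hZ t (hN.trans ht)) ?_
    have := hZ N hN
    simpa only [hrest _ t ht] using this
  · rw [hR.cost_eq]
    simp only [efl]
    rw [integral_sub hFint ((integrableOn_wt hε 0).const_mul R), integral_const_mul,
      integral_wt hε]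
    have := mul_le_mul_of_nonneg_left hκK (half_pos hε).le
    linarith

/-- `StopSet` is sequentially closed: by `RCurve.cost_lower` the kinetic energies of competitors of
bounded cost are bounded, so they converge along a subsequence. -/
lemma stopSet_closed [CompleteSpace X] (hφ : LSCC σ φ ustar A B) (hc : Compatible σ)
    (hε : 0 < ε) (hB : B ≤ 1 / (16 * ε)) (hN : 0 ≤ N) {xs : ℕ → X} {x : X} (hx : MConv xs x)
    (hS : ∀ j, xs j ∈ StopSet φ ε N q) : x ∈ StopSet φ ε N q := by
  choose z k f hr hrest hcost using hS
  obtain ⟨C₁, hC₁⟩ := hx.bounded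
  set D := C₁ + dist (xs 0) ustar with hDdef
  have hD : ∀ j, dist (xs j) ustar ≤ D := fun j =>
    (dist_triangle _ (xs 0) _).trans (add_le_add_left (hC₁ j 0) _)
  have hK₀ : ∀ j, ∫ t in Ioi 0, k j t ^ 2 * wt ε t ≤ (q + (B * D ^ 2 + A)) / (ε / 4) := by
    intro j
    have h1 := ((hr j).cost_lower hε ⟨hφ.hA, hφ.hB, hφ.coercive⟩ hB).trans (hcost j)
    have h2 := mul_le_mul_of_nonneg_left (pow_le_pow_left₀ dist_nonneg (hD j) 2) hφ.hB
    rw [le_div_iff₀ (by positivity)]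
    linarith
  have hKj : ∀ j, 0 ≤ ∫ t in Ioi 0, k j t ^ 2 * wt ε t := fun j =>
    setIntegral_nonneg measurableSet_Ioi fun t _ => mul_nonneg (sq_nonneg _) (wt_pos hε t).le
  obtain ⟨K, -, ψ, hψ, hK⟩ := isCompact_Icc.tendsto_subseq (fun j => ⟨hKj j, hK₀ j⟩)
  have hx' : MConv (fun j => xs (ψ j)) x := by
    unfold MConv at hx ⊢
    exact hx.comp hψ.tendsto_atTop
  exact stopSet_of_tendsto hφ hc hε hN hx' (fun j => hr (ψ j)) (fun j => hrest (ψ j))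
    (fun j => hcost (ψ j)) hK (fun j => hK₀ (ψ j))

end Top
end WED

namespace WED

/-! ### Measurability of the value function -/

section Stop
variable {X : Type*} [MetricSpace X] {φ : X → EReal} {ustar x : X} {A B ε : ℝ}

/-- Competitors may be stopped at a late time at which the energy term is negligible, with an
arbitrarily small increase of the cost. -/
lemma exists_rest (hε : 0 < ε) (hl : MLsc φ) (hco : Coercive φ ustar A B) {c : EReal}
    (hc : Veps φ ε x < c) :
    ∃ (N : ℕ) (q : ℚ), (((q : ℝ) : EReal) < c) ∧ x ∈ StopSet φ ε N q := by
  obtain ⟨z, k, f, hR, hlt⟩ := exists_rcurve hε hl hco hc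
  obtain ⟨q, hq1, hq2⟩ := EReal.lt_iff_exists_rat_btwn.1 hlt
  rw [EReal.coe_lt_coe_iff] at hq1
  have hw := wt_pos hε
  set δ := (q : ℝ) - cost ε k f with hδ
  have hδ0 : 0 < δ := sub_pos.2 hq1
  have h1 := intervalIntegral_tendsto_integral_Ioi 0 hR.int_cost tendsto_id
  have h2 := (h1.eventually_lt_const (show cost ε k f < cost ε k f + δ / 2 by linarith))
  obtain ⟨M, hM⟩ := eventually_atTop.1 (h2.and (eventually_ge_atTop (0:ℝ)))
  -- were there no such `τ`, the integrable function `f * wt` would be bounded below by a positive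
  -- constant on a half-line
  obtain ⟨τ, hτM, hτf, hτs⟩ : ∃ τ, M ≤ τ ∧ φ (z τ) ≤ (f τ : EReal) ∧
      f τ * wt ε τ < δ / (2 * ε) := by
    by_contra! hcon
    have hM0 : 0 ≤ M := (hM M le_rfl).2
    have hsub : Ioi M ⊆ Ioi 0 := Ioi_subset_Ioi hM0
    have hi : IntegrableOn (fun _ : ℝ => δ / (2 * ε)) (Ioi M) := by
      refine Integrable.mono' (hR.int_f.mono_set hsub).norm aestronglyMeasurable_const ?_
      filter_upwards [ae_restrict_of_ae_restrict_of_subset hsub hR.energy,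
        self_mem_ae_restrict measurableSet_Ioi] with t ht htM
      rw [Real.norm_of_nonneg (by positivity)]
      exact (hcon t (le_of_lt htM) ht).trans (le_abs_self _)
    rw [integrableOn_const_iff] at hi
    rcases hi with h | h
    · have : 0 < δ / (2 * ε) := by positivity
      simp at h
      rcases h with h | h <;> linarith
    · simp at h
  have hτ0 : 0 ≤ τ := (hM τ hτM).2
  have hs : RSeg φ τ z k f := by
    refine ⟨hR.nonneg, fun s t h1 h2 _ => hR.dist_le s t h1 h2, ?_, ?_,
      ae_restrict_of_ae_restrict_of_subset Ioc_subset_Ioi_self hR.energy⟩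
    · exact (intervalIntegrable_iff_integrableOn_Ioc_of_le hτ0).1
        (sq_intervalIntegrable hε hR.nonneg hR.int_k hτ0)
    · have h3 := ((intervalIntegrable_iff_integrableOn_Ioc_of_le hτ0).2
        (hR.int_f.mono_set (show Ioc 0 τ ⊆ Ioi 0 from Ioc_subset_Ioi_self))).mul_continuousOn
        (((continuous_wt ε).inv₀ fun r => (hw r).ne').continuousOn)
      refine ((intervalIntegrable_iff_integrableOn_Ioc_of_le hτ0).1 h3).congr
        (Eventually.of_forall fun t => ?_)
      simp only
      rw [Pi.inv_apply, mul_assoc, mul_inv_cancel₀ (hw t).ne', mul_one]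
  obtain ⟨hR2, hc2⟩ := rcurve_const hε hτf
  obtain ⟨hR3, hc3⟩ := hs.follow hτ0 hε hR2
  obtain ⟨N, hN⟩ := exists_nat_ge τ
  refine ⟨N, q, hq2, _, _, _, hR.start ▸ hR3, fun t ht => ?_, ?_⟩
  · have key : ∀ t, τ ≤ t → follow τ z (fun _ => z τ) t = z τ := by
      intro t ht
      rcases ht.eq_or_lt with h | h
      · rw [follow_le h.ge, h]
      · rw [follow_gt h]
    rw [key t (hN.trans ht), key N hN]
  · rw [hc3, hc2, ← intervalIntegral.integral_of_le hτ0]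
    have h4 := (hM τ hτM).1
    simp only [id] at h4
    have h5 : Real.exp (-τ / ε) = ε * wt ε τ := by
      unfold wt; rw [← mul_assoc, mul_inv_cancel₀ hε.ne', one_mul]
    have h6 : Real.exp (-τ / ε) * f τ < δ / 2 := by
      rw [h5]
      calc ε * wt ε τ * f τ = ε * (f τ * wt ε τ) := by ring
        _ < ε * (δ / (2 * ε)) := by gcongr
        _ = δ / 2 := by field_simp
    linarith

end Stop

/-- A set that contains the limits of its convergent sequences is closed. -/
lemma isClosed_of_mconv {X : Type*} [MetricSpace X] {S : Set X}
    (h : ∀ (u : ℕ → X) (x : X), MConv u x → (∀ n, u n ∈ S) → x ∈ S) : IsClosed S :=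
  IsSeqClosed.isClosed fun u x hu hx => h u x hx hu

/-- Membership in `StopSet` passes to limits with respect to the distance. -/
def StopClosed {X : Type*} [MetricSpace X] (φ : X → EReal) (ε : ℝ) : Prop :=
  ∀ (N : ℕ) (q : ℚ) (u : ℕ → X) (x : X), MConv u x → (∀ n, u n ∈ StopSet φ ε N q) →
    x ∈ StopSet φ ε N q

section Meas
variable {X : Type*} [MetricSpace X] {φ : X → EReal} {ustar x : X} {A B ε : ℝ}

/-- `V_ε` is Borel measurable, since `{V_ε < c}` is the union of the closed sets `StopSet N q` over
naturals `N` and rationals `q < c`. -/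
lemma aemeasurable_Veps (hε : 0 < ε) (hl : MLsc φ) (hco : Coercive φ ustar A B)
    (hS : StopClosed φ ε) {z : ℝ → X} {s : Set ℝ} (hs : MeasurableSet s) (hz : ContinuousOn z s) :
    AEMeasurable (fun t => Veps φ ε (z t)) (volume.restrict s) := by
  let _ : MeasurableSpace X := borel X
  have : BorelSpace X := ⟨rfl⟩
  have hm : Measurable (Veps φ ε) := by
    refine measurable_of_Iio fun c => ?_
    have : Veps φ ε ⁻¹' Iio c = ⋃ (N : ℕ) (q : ℚ) (_ : ((q : ℝ) : EReal) < c), StopSet φ ε N q := by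
      ext x
      simp only [mem_preimage, mem_Iio, mem_iUnion, exists_prop]
      refine ⟨fun h => exists_rest hε hl hco h, ?_⟩
      rintro ⟨N, q, hq, z, k, f, hR, -, hle⟩
      exact (hR.Veps_le hε).trans_lt ((EReal.coe_le_coe_iff.2 hle).trans_lt hq)
    rw [this]
    exact MeasurableSet.iUnion fun N => MeasurableSet.iUnion fun q => MeasurableSet.iUnion fun _ =>
      (isClosed_of_mconv (hS N q)).measurableSet
  exact hm.comp_aemeasurable (hz.aemeasurable hs)

end Meas
end WED

namespace WED

/-! ### The derivative of the value function along a curve -/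

lemma wt_zero (ε : ℝ) : wt ε 0 = ε⁻¹ := by simp [wt]

lemma wt_integral_le {ε : ℝ} (hε : 0 < ε) {p : ℝ → ℝ} {s t : ℝ} (hst : s ≤ t)
    (hp : IntervalIntegrable p volume s t) {d : ℝ → ℝ} (hd : Continuous d)
    (hd0 : ∀ r ∈ Icc s t, 0 ≤ d r) :
    |∫ r in s..t, p r * wt ε (d r)| ≤ ∫ r in s..t, |p r| / ε := by
  refine (intervalIntegral.abs_integral_le_integral_abs hst).trans ?_
  refine intervalIntegral.integral_mono_on hst
    (hp.mul_continuousOn ((continuous_wt ε).comp hd).continuousOn).abs (hp.abs.div_const ε) ?_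
  intro r hr
  rw [abs_mul, abs_of_pos (wt_pos hε _), div_eq_mul_inv, ← wt_zero]
  exact mul_le_mul_of_nonneg_left (wt_anti hε (hd0 r hr)) (abs_nonneg _)

/-- The forward and backward dynamic programming inequalities along a curve make the value
absolutely continuous and bound its derivative by the running cost minus the value. -/
lemma real_core {ε T : ℝ} (hε : 0 < ε) (hT : 0 < T) {v p : ℝ → ℝ}
    (hp : IntervalIntegrable p volume 0 T)
    (Hf : ∀ s t, 0 ≤ s → s ≤ t → t ≤ T →
      v s ≤ (∫ r in s..t, p r * wt ε (r - s)) + Real.exp (-(t - s) / ε) * v t)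
    (Hb : ∀ s t, 0 ≤ s → s ≤ t → t ≤ T →
      v t ≤ (∫ r in s..t, p r * wt ε (t - r)) + Real.exp (-(t - s) / ε) * v s) :
    ∃ h : ℝ → ℝ, IntervalIntegrable h volume 0 T ∧
      (∀ s ∈ Icc 0 T, ∀ t ∈ Icc 0 T, s ≤ t → |v t - v s| ≤ ∫ r in s..t, h r) ∧
      ∀ᵐ t, t ∈ Ioo 0 T → |deriv v t| ≤ (p t - v t) / ε := by
  have ii : ∀ s t, 0 ≤ s → s ≤ t → t ≤ T → IntervalIntegrable p volume s t :=
    fun s t h1 h2 h3 => hp.mono_set (by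
      rw [uIcc_of_le hT.le, uIcc_of_le h2]; exact Icc_subset_Icc h1 h3)
  have wf : ∀ s t, 0 ≤ s → s ≤ t → t ≤ T →
      |∫ r in s..t, p r * wt ε (r - s)| ≤ ∫ r in s..t, |p r| / ε := fun s t h1 h2 h3 =>
    wt_integral_le hε h2 (ii s t h1 h2 h3) (d := fun r => r - s) (by fun_prop)
      fun r hr => sub_nonneg.2 hr.1
  have wb : ∀ s t, 0 ≤ s → s ≤ t → t ≤ T →
      |∫ r in s..t, p r * wt ε (t - r)| ≤ ∫ r in s..t, |p r| / ε := fun s t h1 h2 h3 =>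
    wt_integral_le hε h2 (ii s t h1 h2 h3) (d := fun r => t - r) (by fun_prop)
      fun r hr => sub_nonneg.2 hr.2
  set J := ∫ r in (0:ℝ)..T, |p r| / ε with hJ
  have hJt : ∀ t, 0 ≤ t → t ≤ T → ∫ r in (0:ℝ)..t, |p r| / ε ≤ J := by
    intro t h0 h1
    refine intervalIntegral.integral_mono_interval le_rfl h0 h1
      (Eventually.of_forall fun r => by positivity) (hp.abs.div_const ε)
  have hJ0 : 0 ≤ J := intervalIntegral.integral_nonneg hT.le fun r _ => by positivity
  have hexp : ∀ s t : ℝ, s ≤ t → Real.exp (-(t - s) / ε) ≤ 1 := fun s t h =>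
    Real.exp_le_one_iff.2 (div_nonpos_of_nonpos_of_nonneg (by linarith) hε.le)
  -- `M` bounds `|v|` on `[0, T]`, by the two inequalities between the times `0` and `t`
  set M := Real.exp (T / ε) * (|v 0| + J) with hM
  have hvM : ∀ t, 0 ≤ t → t ≤ T → |v t| ≤ M := by
    intro t h0 h1
    have a1 := Hf 0 t le_rfl h0 h1
    have a2 := Hb 0 t le_rfl h0 h1
    have b1 := (abs_le.1 ((wf 0 t le_rfl h0 h1).trans (hJt t h0 h1))).2
    have b2 := (abs_le.1 ((wb 0 t le_rfl h0 h1).trans (hJt t h0 h1))).2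
    have e1 : 1 ≤ Real.exp (T / ε) := Real.one_le_exp (by positivity)
    have hS : 0 ≤ |v 0| + J := by positivity
    rw [abs_le]
    constructor
    · have e2 : Real.exp (t / ε) * Real.exp (-(t - 0) / ε) = 1 := by
        rw [← Real.exp_add, ← Real.exp_zero]; congr 1; ring
      have a3 : -(|v 0| + J) ≤ Real.exp (-(t - 0) / ε) * v t := by
        have := neg_abs_le (v 0); linarith
      have a4 := mul_le_mul_of_nonneg_left a3 (Real.exp_pos (t / ε)).le
      rw [← mul_assoc, e2, one_mul] at a4
      refine le_trans ?_ a4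
      rw [hM, mul_neg, neg_le_neg_iff]
      exact mul_le_mul_of_nonneg_right (Real.exp_le_exp.2 (by gcongr)) hS
    · have a3 : Real.exp (-(t - 0) / ε) * v 0 ≤ |v 0| := by
        refine (le_abs_self _).trans ?_
        rw [abs_mul, abs_of_pos (Real.exp_pos _)]
        exact mul_le_of_le_one_left (abs_nonneg _) (hexp 0 t h0)
      have : |v 0| + J ≤ M := le_mul_of_one_le_left hS e1
      linarith
  have hrem : ∀ s t x, s ≤ t → |x| ≤ M →
      Real.exp (-(t - s) / ε) * x - x ≤ ∫ _ in s..t, M / ε := by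
    intro s t x hst hx
    have h1 := Real.add_one_le_exp (-(t - s) / ε)
    have h2 := hexp s t hst
    have h3 : 0 ≤ 1 - Real.exp (-(t - s) / ε) := by linarith
    have h4 : 1 - Real.exp (-(t - s) / ε) ≤ (t - s) / ε := by
      rw [neg_div] at h1 ⊢; linarith
    rw [intervalIntegral.integral_const, smul_eq_mul]
    calc Real.exp (-(t - s) / ε) * x - x = (1 - Real.exp (-(t - s) / ε)) * (-x) := by ring
      _ ≤ (1 - Real.exp (-(t - s) / ε)) * M :=
        mul_le_mul_of_nonneg_left ((neg_le_abs x).trans hx) h3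
      _ ≤ (t - s) / ε * M := mul_le_mul_of_nonneg_right h4 ((abs_nonneg x).trans hx)
      _ = (t - s) * (M / ε) := by ring
  have hh : IntervalIntegrable (fun r => |p r| / ε + M / ε) volume 0 T :=
    (hp.abs.div_const ε).add ((continuous_const (y := M / ε)).intervalIntegrable 0 T)
  have hinc : ∀ s ∈ Icc 0 T, ∀ t ∈ Icc 0 T, s ≤ t →
      |v t - v s| ≤ ∫ r in s..t, (|p r| / ε + M / ε) := by
    intro s hs t ht hst
    rw [intervalIntegral.integral_add ((ii s t hs.1 hst ht.2).abs.div_const ε)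
      ((continuous_const (y := M / ε)).intervalIntegrable s t)]
    have a1 := Hf s t hs.1 hst ht.2
    have a2 := Hb s t hs.1 hst ht.2
    have b1 := (abs_le.1 (wf s t hs.1 hst ht.2)).2
    have b2 := (abs_le.1 (wb s t hs.1 hst ht.2)).2
    have c1 := hrem s t (v t) hst (hvM t ht.1 ht.2)
    have c2 := hrem s t (v s) hst (hvM s hs.1 hs.2)
    rw [abs_le]
    constructor <;> linarith
  refine ⟨_, hh, hinc, ?_⟩
  have ip : ∀ a : ℝ, IntervalIntegrable (fun r => p r / ε * Real.exp (a * r)) volume 0 T :=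
    fun a => (hp.div_const ε).mul_continuousOn (by fun_prop)
  have isub : ∀ (a : ℝ) s t, 0 ≤ s → s ≤ t → t ≤ T →
      IntervalIntegrable (fun r => p r / ε * Real.exp (a * r)) volume s t :=
    fun a s t h1 h2 h3 => (ip a).mono_set (by
      rw [uIcc_of_le hT.le, uIcc_of_le h2]; exact Icc_subset_Icc h1 h3)
  have key : ∀ (a : ℝ) s t, 0 ≤ s → s ≤ t → t ≤ T →
      (∫ r in (0:ℝ)..t, p r / ε * Real.exp (a * r)) - ∫ r in (0:ℝ)..s, p r / ε * Real.exp (a * r) =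
      ∫ r in s..t, p r / ε * Real.exp (a * r) := fun a s t h1 h2 h3 =>
    intervalIntegral.integral_interval_sub_left (isub a 0 t le_rfl (h1.trans h2) h3)
      (isub a 0 s le_rfl h1 (h2.trans h3))
  have hu := uIcc_of_le hT.le
  filter_upwards [ae_hasDerivAt_of_le hT.le hh hinc, (ip (-1 / ε)).ae_hasDerivAt_integral,
    (ip (1 / ε)).ae_hasDerivAt_integral] with t h1 h2 h3 ht
  have htI : t ∈ Icc 0 T := Ioo_subset_Icc_self ht
  rw [hu] at h2 h3
  have d1 := h1 htI
  have d2 := h2 htI 0 (by simp [hT.le])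
  have d3 := h3 htI 0 (by simp [hT.le])
  have e1 : ∀ a : ℝ, HasDerivAt (fun r => Real.exp (a * r)) (Real.exp (a * t) * a) t := fun a => by
    simpa using ((hasDerivAt_id t).const_mul a).exp
  rw [abs_le]
  constructor
  -- by `Hf`, the increments of `-e^{-t/ε} v` are at most those of the primitive of `e^{-r/ε} p / ε`
  · have := deriv_le_of_incr_le ht ((e1 (-1 / ε)).mul d1).neg d2 (by
      intro r hr
      rw [key _ t r ht.1.le hr.1.le hr.2.le]
      have := mul_le_mul_of_nonneg_left (Hf t r ht.1.le hr.1.le hr.2.le)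
        (Real.exp_pos (-1 / ε * t)).le
      rw [mul_add, ← mul_assoc, ← Real.exp_add, ← intervalIntegral.integral_const_mul] at this
      have g1 : -1 / ε * t + -(r - t) / ε = -1 / ε * r := by ring
      have g2 : ∀ y, Real.exp (-1 / ε * t) * (p y * wt ε (y - t)) =
          p y / ε * Real.exp (-1 / ε * y) := by
        intro y
        have : Real.exp (-1 / ε * y) = Real.exp (-1 / ε * t) * Real.exp (-(y - t) / ε) := by
          rw [← Real.exp_add]; congr 1; ring
        rw [this, wt]; ring
      simp only [g1, g2] at this
      simp only [Pi.neg_apply, Pi.mul_apply]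
      linarith)
    have e0 := Real.exp_pos (-1 / ε * t)
    have h5 : Real.exp (-1 / ε * t) * (-(deriv v t) + v t / ε) ≤
        Real.exp (-1 / ε * t) * (p t / ε) := by
      refine le_trans (le_of_eq ?_) (this.trans (le_of_eq ?_)) <;> ring
    have := le_of_mul_le_mul_left h5 e0
    rw [sub_div]; linarith
  -- by `Hb`, the increments of `e^{t/ε} v` are at most those of the primitive of `e^{r/ε} p / ε`
  · have := deriv_le_of_incr_le ht ((e1 (1 / ε)).mul d1) d3 (by
      intro r hr
      rw [key _ t r ht.1.le hr.1.le hr.2.le]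
      have := mul_le_mul_of_nonneg_left (Hb t r ht.1.le hr.1.le hr.2.le)
        (Real.exp_pos (1 / ε * r)).le
      rw [mul_add, ← mul_assoc, ← Real.exp_add, ← intervalIntegral.integral_const_mul] at this
      have g1 : 1 / ε * r + -(r - t) / ε = 1 / ε * t := by ring
      have g2 : ∀ y, Real.exp (1 / ε * r) * (p y * wt ε (r - y)) =
          p y / ε * Real.exp (1 / ε * y) := by
        intro y
        have : Real.exp (1 / ε * y) = Real.exp (1 / ε * r) * Real.exp (-(r - y) / ε) := by
          rw [← Real.exp_add]; congr 1; ring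
        rw [this, wt]; ring
      simp only [g1, g2] at this
      simp only [Pi.mul_apply]
      linarith)
    have e0 := Real.exp_pos (1 / ε * t)
    have h5 : Real.exp (1 / ε * t) * (deriv v t + v t / ε) ≤
        Real.exp (1 / ε * t) * (p t / ε) := by
      refine le_trans (le_of_eq ?_) (this.trans (le_of_eq ?_)) <;> ring
    have := le_of_mul_le_mul_left h5 e0
    rw [sub_div]; linarith

end WED

namespace WED

section Core
variable {X : Type*} [MetricSpace X] {φ : X → EReal} {ustar x : X} {A B ε : ℝ}

lemma RSeg.reverse {T : ℝ} (hT : 0 ≤ T) {c : ℝ → X} {n f : ℝ → ℝ} (h : RSeg φ T c n f) :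
    RSeg φ T (fun r => c (T - r)) (fun r => n (T - r)) (fun r => f (T - r)) := by
  have hi : ∀ g : ℝ → ℝ, IntegrableOn g (Ioc 0 T) → IntegrableOn (fun r => g (T - r)) (Ioc 0 T) := by
    intro g hg
    have := ((intervalIntegrable_iff_integrableOn_Ioc_of_le hT).2 hg).comp_sub_left T
    rw [sub_zero, sub_self] at this
    exact (intervalIntegrable_iff_integrableOn_Ioc_of_le hT).1 this.symm
  refine ⟨fun t => h.nonneg _, fun s t hs hst ht => ?_, hi _ h.int_k, hi _ h.int_f, ?_⟩
  · rw [dist_comm, intervalIntegral.integral_comp_sub_left (fun r => n r) T]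
    exact h.dist_le _ _ (by linarith) (by linarith) (by linarith)
  · rw [ae_restrict_iff' measurableSet_Ioc]
    have h1 := h.energy
    rw [ae_restrict_iff' measurableSet_Ioc] at h1
    have h2 := (volume.measurePreserving_sub_left T).quasiMeasurePreserving.ae h1
    filter_upwards [h2, (by simp [ae_iff, measure_singleton] : ∀ᵐ x : ℝ, x ≠ T)] with t ht h3 h4
    exact ht ⟨sub_pos.2 (lt_of_le_of_ne h4.2 h3), by linarith [h4.1]⟩

lemma RSeg.shift {T s t : ℝ} (hs : 0 ≤ s) (hst : s ≤ t) (ht : t ≤ T) {c : ℝ → X} {n f : ℝ → ℝ}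
    (h : RSeg φ T c n f) :
    RSeg φ (t - s) (fun r => c (r + s)) (fun r => n (r + s)) (fun r => f (r + s)) := by
  have hts : 0 ≤ t - s := sub_nonneg.2 hst
  have hsub : Ioc s t ⊆ Ioc 0 T := Ioc_subset_Ioc hs ht
  have hi : ∀ g : ℝ → ℝ, IntegrableOn g (Ioc 0 T) →
      IntegrableOn (fun r => g (r + s)) (Ioc 0 (t - s)) := by
    intro g hg
    have := ((intervalIntegrable_iff_integrableOn_Ioc_of_le hst).2
      (hg.mono_set hsub)).comp_add_right s
    rw [sub_self] at this
    exact (intervalIntegrable_iff_integrableOn_Ioc_of_le hts).1 this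
  refine ⟨fun t => h.nonneg _, fun a b ha hab hb => ?_, hi _ h.int_k, hi _ h.int_f, ?_⟩
  · rw [intervalIntegral.integral_comp_add_right (fun r => n r) s]
    exact h.dist_le _ _ (by linarith) (by linarith) (by linarith)
  · rw [ae_restrict_iff' measurableSet_Ioc]
    have h1 := h.energy
    rw [ae_restrict_iff' measurableSet_Ioc] at h1
    have h2 := (measurePreserving_add_right volume s).quasiMeasurePreserving.ae h1
    filter_upwards [h2] with r hr h4
    exact hr (hsub ⟨by linarith [h4.1], by linarith [h4.2]⟩)

/-- Dynamic programming along the curve `c`, from time `s` to time `t`. -/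
lemma RSeg.forward (hε : 0 < ε) (hl : MLsc φ) (hco : Coercive φ ustar A B)
    {T s t : ℝ} (hs : 0 ≤ s) (hst : s ≤ t) (ht : t ≤ T) {c : ℝ → X} {n f : ℝ → ℝ}
    (h : RSeg φ T c n f) {v : ℝ} (hv : Veps φ ε (c t) ≤ v) :
    Veps φ ε (c s) ≤ (((∫ r in s..t, (ε / 2 * n r ^ 2 + f r) * wt ε (r - s)) +
      Real.exp (-(t - s) / ε) * v : ℝ) : EReal) := by
  have h1 := dpp hε hl hco (sub_nonneg.2 hst) (h.shift hs hst ht) (v := v)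
    (by rwa [sub_add_cancel])
  rw [zero_add, ← intervalIntegral.integral_of_le (sub_nonneg.2 hst)] at h1
  have h2 := intervalIntegral.integral_comp_add_right (a := 0) (b := t - s)
    (fun r => (ε / 2 * n r ^ 2 + f r) * wt ε (r - s)) s
  simp only [add_sub_cancel_right, zero_add, sub_add_cancel] at h2
  rwa [h2] at h1

/-- Dynamic programming along the time reversal of `c`, from time `t` back to time `s`. -/
lemma RSeg.backward (hε : 0 < ε) (hl : MLsc φ) (hco : Coercive φ ustar A B)
    {T s t : ℝ} (hs : 0 ≤ s) (hst : s ≤ t) (ht : t ≤ T) {c : ℝ → X} {n f : ℝ → ℝ}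
    (h : RSeg φ T c n f) {v : ℝ} (hv : Veps φ ε (c s) ≤ v) :
    Veps φ ε (c t) ≤ (((∫ r in s..t, (ε / 2 * n r ^ 2 + f r) * wt ε (t - r)) +
      Real.exp (-(t - s) / ε) * v : ℝ) : EReal) := by
  have h1 := (h.reverse (hs.trans (hst.trans ht))).forward hε hl hco (s := T - t) (t := T - s)
    (by linarith) (by linarith) (by linarith) (v := v) (by simpa using hv)
  have h2 := intervalIntegral.integral_comp_sub_left (a := T - t) (b := T - s)
    (fun r => (ε / 2 * n r ^ 2 + f r) * wt ε (t - r)) T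
  have e1 : ∀ r, t - (T - r) = r - (T - t) := fun r => by ring
  have e2 : T - s - (T - t) = t - s := by ring
  have e3 : ∀ r, T - (T - r) = r := fun r => by ring
  simp only [e1, e3] at h2
  simp only [e2, e3] at h1
  rwa [h2] at h1

lemma Geps_sq (hε : 0 < ε) (hb : φ x ≠ ⊥) (h1 : Veps φ ε x ≠ ⊤) (h2 : Veps φ ε x ≠ ⊥) :
    Geps φ ε x ^ 2 = if φ x = ⊤ then ⊤ else
      ENNReal.ofReal (2 * ((φ x).toReal - (Veps φ ε x).toReal) / ε) := by
  unfold Geps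
  rw [if_neg h1, ← ENNReal.rpow_natCast, ← ENNReal.rpow_mul]
  norm_num
  have hε' : ENNReal.ofReal ε ≠ ⊤ := ENNReal.ofReal_ne_top
  lift Veps φ ε x to ℝ using ⟨h1, h2⟩ with v
  split_ifs with h
  · rw [h, EReal.top_sub_coe, epos_eq_top.2 rfl, ENNReal.mul_top (by simp),
      ENNReal.top_div_of_ne_top hε']
  · lift φ x to ℝ using ⟨h, hb⟩ with p
    rw [← EReal.coe_sub, epos_coe, EReal.toReal_coe, EReal.toReal_coe,
      ENNReal.ofReal_div_of_pos hε, ENNReal.ofReal_mul (by norm_num)]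
    simp

/-- The value function along a curve whose speed is bounded by `n`: it is everywhere finite,
absolutely continuous, and its derivative is bounded by `(G_ε² + n²)/2`. -/
lemma core (hε : 0 < ε) (hl : MLsc φ) (hco : Coercive φ ustar A B) (hB : B ≤ 1 / (16 * ε))
    (hS : StopClosed φ ε) {T : ℝ} (hT : 0 < T) {c : ℝ → X} {n : ℝ → ℝ} (hn0 : ∀ t, 0 ≤ n t)
    (hd : ∀ s t, 0 ≤ s → s ≤ t → t ≤ T → dist (c s) (c t) ≤ ∫ r in s..t, n r)
    (hn : IntervalIntegrable (fun t => n t ^ 2) volume 0 T)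
    (hV : ∫⁻ t in Icc 0 T, eabs (Veps φ ε (c t)) < ⊤)
    (hG : ∫⁻ t in Icc 0 T, Geps φ ε (c t) ^ 2 < ⊤) :
    (∀ t ∈ Icc 0 T, Veps φ ε (c t) ≠ ⊤ ∧ Veps φ ε (c t) ≠ ⊥) ∧
    ∃ g : ℝ → ℝ, IntervalIntegrable g volume 0 T ∧
      (∀ s ∈ Icc 0 T, ∀ t ∈ Icc 0 T,
        ∫ r in s..t, g r = (Veps φ ε (c t)).toReal - (Veps φ ε (c s)).toReal) ∧
      ∀ᵐ t ∂(volume.restrict (Icc 0 T)),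
        ENNReal.ofReal |g t| ≤ (Geps φ ε (c t) ^ 2 + ENNReal.ofReal (n t ^ 2)) / 2 := by
  have hn1 := intervalIntegrable_of_sq hT.le hn0 hn
  have hcont : ContinuousOn c (Icc 0 T) := continuousOn_of_dist_le hT.le hn1
    fun s hs t ht hst => hd s t hs.1 hst ht.2
  have hVm := aemeasurable_Veps hε hl hco hS measurableSet_Icc hcont
  have hφm := hl.aemeasurable measurableSet_Icc hcont
  have hVb : ∀ t, Veps φ ε (c t) ≠ ⊥ := fun t =>
    ((EReal.bot_lt_coe _).trans_le (Veps_lower hε hl hco hB (c t))).ne'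
  have hφb : ∀ t, φ (c t) ≠ ⊥ := fun t =>
    ((EReal.bot_lt_coe _).trans_le (hco.2.2 (c t) (c t))).ne'
  have heabs : Measurable eabs := measurable_epos.sup (measurable_epos.comp measurable_neg)
  have hVt : ∀ᵐ t ∂(volume.restrict (Icc 0 T)), Veps φ ε (c t) ≠ ⊤ := by
    filter_upwards [ae_lt_top' (heabs.comp_aemeasurable hVm) hV.ne] with t ht h
    simp only [Function.comp_apply, h, eabs, epos_eq_top.2 rfl] at ht
    simp at ht
  have hGe : ∀ᵐ t ∂(volume.restrict (Icc 0 T)), Geps φ ε (c t) ^ 2 = if φ (c t) = ⊤ then ⊤ else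
      ENNReal.ofReal (2 * ((φ (c t)).toReal - (Veps φ ε (c t)).toReal) / ε) := by
    filter_upwards [hVt] with t ht
    exact Geps_sq hε (hφb t) ht (hVb t)
  have hGm : AEMeasurable (fun t => Geps φ ε (c t) ^ 2) (volume.restrict (Icc 0 T)) := by
    have hm : Measurable fun y : EReal × EReal => if y.1 = ⊤ then ⊤ else
        ENNReal.ofReal (2 * (y.1.toReal - y.2.toReal) / ε) := by
      refine Measurable.ite (measurable_fst (measurableSet_singleton _)) measurable_const ?_
      exact (((measurable_ereal_toReal.comp measurable_fst).sub
        (measurable_ereal_toReal.comp measurable_snd)).const_mul 2 |>.div_const ε).ennreal_ofReal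
    exact (hm.comp_aemeasurable (hφm.prodMk hVm)).congr (hGe.mono fun t ht => ht.symm)
  set f : ℝ → ℝ := fun t => (φ (c t)).toReal with hf
  set v : ℝ → ℝ := fun t => (Veps φ ε (c t)).toReal with hv
  have hall : ∀ᵐ t ∂(volume.restrict (Icc 0 T)), φ (c t) = (f t : EReal) ∧
      Veps φ ε (c t) = (v t : EReal) ∧ v t ≤ f t ∧
      Geps φ ε (c t) ^ 2 = ENNReal.ofReal (2 * (f t - v t) / ε) := by
    filter_upwards [hVt, hGe, ae_lt_top' hGm hG.ne] with t h1 h2 h3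
    have h4 : φ (c t) ≠ ⊤ := by
      intro h
      rw [h2, if_pos h] at h3
      exact lt_irrefl _ h3
    have e1 : φ (c t) = (f t : EReal) := (EReal.coe_toReal h4 (hφb t)).symm
    have e2 : Veps φ ε (c t) = (v t : EReal) := (EReal.coe_toReal h1 (hVb t)).symm
    refine ⟨e1, e2, ?_, ?_⟩
    · have := Veps_le_phi hε hco (c t)
      rwa [e1, e2, EReal.coe_le_coe_iff] at this
    · rw [h2, if_neg h4]
  have hvi : IntegrableOn v (Icc 0 T) := by
    refine ⟨hVm.ereal_toReal.aestronglyMeasurable, ?_⟩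
    refine lt_of_le_of_lt (lintegral_mono (g := fun t => 2 * eabs (Veps φ ε (c t))) fun t => ?_) ?_
    · refine (enorm_toReal_le _).trans ?_
      show _ ≤ 2 * eabs (Veps φ ε (c t))
      rw [two_mul]
      exact add_le_add le_sup_left le_sup_right
    · rw [lintegral_const_mul' _ _ (by simp)]
      exact ENNReal.mul_lt_top (by simp) hV
  have hfvi : IntegrableOn (fun t => f t - v t) (Icc 0 T) := by
    refine ⟨(hφm.ereal_toReal.sub hVm.ereal_toReal).aestronglyMeasurable, ?_⟩
    refine lt_of_le_of_lt (lintegral_mono_ae (g := fun t => ENNReal.ofReal (ε / 2) *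
      Geps φ ε (c t) ^ 2) ?_) ?_
    · filter_upwards [hall] with t ⟨_, _, h3, h4⟩
      rw [h4, ← ENNReal.ofReal_mul (by positivity), Real.enorm_of_nonneg (sub_nonneg.2 h3)]
      refine ENNReal.ofReal_le_ofReal (le_of_eq ?_)
      field_simp
    · rw [lintegral_const_mul' _ _ (by simp)]
      exact ENNReal.mul_lt_top (by simp) hG
  have hfi : IntegrableOn f (Icc 0 T) :=
    (hfvi.add hvi).congr (Eventually.of_forall fun t => by simp)
  have hseg : RSeg φ T c n f := by
    refine ⟨hn0, hd, (intervalIntegrable_iff_integrableOn_Ioc_of_le hT.le).1 hn,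
      hfi.mono_set Ioc_subset_Icc_self, ?_⟩
    filter_upwards [ae_restrict_of_ae_restrict_of_subset Ioc_subset_Icc_self hall] with t ht
    exact ht.1.le
  -- `V_ε ∘ c` is finite at almost every time, hence at every time: connect to a nearby good time
  have hex : ∀ a b, 0 ≤ a → a < b → b ≤ T → ∃ τ ∈ Ioo a b, Veps φ ε (c τ) = (v τ : EReal) := by
    intro a b ha hab hb
    have hsub : Ioo a b ⊆ Icc 0 T := fun t ht => ⟨ha.trans ht.1.le, ht.2.le.trans hb⟩
    have hne : (ae (volume.restrict (Ioo a b))).NeBot := by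
      rw [ae_neBot, Ne, Measure.restrict_eq_zero]
      simpa using hab
    obtain ⟨τ, h1, h2⟩ := ((ae_restrict_of_ae_restrict_of_subset hsub hall).and
      (self_mem_ae_restrict measurableSet_Ioo)).exists
    exact ⟨τ, h2, h1.2.1⟩
  have hfin : ∀ t ∈ Icc 0 T, Veps φ ε (c t) ≠ ⊤ := by
    intro t ht
    rcases ht.2.lt_or_eq with h | h
    · obtain ⟨τ, hτ, hvτ⟩ := hex t T ht.1 h le_rfl
      exact ((hseg.forward hε hl hco ht.1 hτ.1.le hτ.2.le hvτ.le).trans_lt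
        (EReal.coe_lt_top _)).ne
    · obtain ⟨τ, hτ, hvτ⟩ := hex 0 t le_rfl (h ▸ hT) ht.2
      exact ((hseg.backward hε hl hco hτ.1.le hτ.2.le ht.2 hvτ.le).trans_lt
        (EReal.coe_lt_top _)).ne
  refine ⟨fun t ht => ⟨hfin t ht, hVb t⟩, ?_⟩
  have hve : ∀ t, 0 ≤ t → t ≤ T → Veps φ ε (c t) = (v t : EReal) := fun t h1 h2 =>
    (EReal.coe_toReal (hfin t ⟨h1, h2⟩) (hVb t)).symm
  have hpi : IntervalIntegrable (fun r => ε / 2 * n r ^ 2 + f r) volume 0 T :=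
    (hn.const_mul (ε / 2)).add ((intervalIntegrable_iff_integrableOn_Ioc_of_le hT.le).2
      (hfi.mono_set Ioc_subset_Icc_self))
  obtain ⟨h, hh, hinc, hder⟩ := real_core hε hT (v := v) hpi
    (by
      intro s t h1 h2 h3
      have := hseg.forward hε hl hco h1 h2 h3 (hve t (h1.trans h2) h3).le
      rwa [hve s h1 (h2.trans h3), EReal.coe_le_coe_iff] at this)
    (by
      intro s t h1 h2 h3
      have := hseg.backward hε hl hco h1 h2 h3 (hve s h1 (h2.trans h3)).le
      rwa [hve t (h1.trans h2) h3, EReal.coe_le_coe_iff] at this)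
  refine ⟨deriv v, (ac_of_le hT.le hh hinc).intervalIntegrable_deriv, fun s hs t ht =>
    integral_deriv_of_le hh hinc hs ht, ?_⟩
  have hae : ∀ᵐ t ∂(volume.restrict (Icc 0 T)), t ∈ Ioo 0 T := by
    rw [restrict_Ioo_eq_restrict_Icc.symm]
    exact self_mem_ae_restrict measurableSet_Ioo
  filter_upwards [hall, ae_restrict_of_ae hder, hae] with t ⟨_, _, h3, h4⟩ h5 h6
  have hfv : 0 ≤ 2 * (f t - v t) / ε := by have := sub_nonneg.2 h3; positivity
  rw [h4, ← ENNReal.ofReal_add hfv (sq_nonneg _)]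
  rw [show (2:ℝ≥0∞) = ENNReal.ofReal 2 by simp, ← ENNReal.ofReal_div_of_pos (by norm_num)]
  refine ENNReal.ofReal_le_ofReal ((h5 h6).trans (le_of_eq ?_))
  field_simp
  ring

end Core
end WED

namespace WED

/-! ### Change of time -/

/-- The primitive `τ` of a nonnegative density `θ` pushes `θ dr` on `(a, b]` forward to Lebesgue
measure on `(τ a, τ b]`, even where `τ` is not injective. -/
lemma map_primitive {a b : ℝ} (hab : a ≤ b) {θ τ : ℝ → ℝ} (hθ0 : ∀ t, 0 ≤ θ t)
    (hθ : Integrable θ) (hτ : Continuous τ)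
    (hτe : ∀ x y, τ y - τ x = ∫ r in x..y, θ r) :
    ((volume.restrict (Ioc a b)).withDensity fun r => ENNReal.ofReal (θ r)).map τ =
      volume.restrict (Ioc (τ a) (τ b)) := by
  have hmono : Monotone τ := fun x y hxy => sub_nonneg.1 <| by
    rw [hτe]; exact intervalIntegral.integral_nonneg hxy fun t _ => hθ0 t
  have hmeas : ∀ x y, x ≤ y → ∫⁻ r in Ioc x y, ENNReal.ofReal (θ r) =
      ENNReal.ofReal (τ y - τ x) := by
    intro x y hxy
    rw [hτe, intervalIntegral.integral_of_le hxy,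
      ofReal_integral_eq_lintegral_ofReal hθ.integrableOn (Eventually.of_forall hθ0)]
  have hfin : IsFiniteMeasure
      (((volume.restrict (Ioc a b)).withDensity fun r => ENNReal.ofReal (θ r)).map τ) := by
    constructor
    rw [Measure.map_apply hτ.measurable .univ, preimage_univ,
      withDensity_apply _ .univ, Measure.restrict_univ, hmeas a b hab]
    exact ENNReal.ofReal_lt_top
  refine Measure.ext_of_Iic _ _ fun y => ?_
  rw [Measure.map_apply hτ.measurable measurableSet_Iic,
    withDensity_apply _ (hτ.measurable measurableSet_Iic),
    Measure.restrict_restrict (hτ.measurable measurableSet_Iic),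
    Measure.restrict_apply measurableSet_Iic, inter_comm (Iic y), Ioc_inter_Iic,
    Real.volume_Ioc]
  rcases lt_or_ge y (τ a) with hy | hy
  · have : τ ⁻¹' Iic y ∩ Ioc a b = ∅ := by
      ext x
      simp only [mem_inter_iff, mem_preimage, mem_Iic, mem_Ioc, mem_empty_iff_false, iff_false]
      rintro ⟨h1, h2, -⟩
      linarith [hmono h2.le]
    rw [this, Measure.restrict_empty, lintegral_zero_measure, eq_comm, ENNReal.ofReal_eq_zero]
    linarith [min_le_right (τ b) y]
  · -- the sublevel set `{τ ≤ y}` is cut off at its largest element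
    obtain ⟨r, hr, hrmax⟩ := ((isCompact_Icc (a := a) (b := b)).inter_right
      (isClosed_Iic.preimage hτ : IsClosed (τ ⁻¹' Iic y))).exists_isGreatest ⟨a, ⟨⟨le_rfl, hab⟩, hy⟩⟩
    have hset : τ ⁻¹' Iic y ∩ Ioc a b = Ioc a r := by
      ext x
      simp only [mem_inter_iff, mem_preimage, mem_Iic, mem_Ioc]
      constructor
      · rintro ⟨h1, h2, h3⟩
        exact ⟨h2, hrmax ⟨⟨h2.le, h3⟩, h1⟩⟩
      · rintro ⟨h1, h2⟩
        exact ⟨(hmono h2).trans hr.2, h1, h2.trans hr.1.2⟩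
    have hval : τ r = min (τ b) y := by
      refine le_antisymm (le_min (hmono hr.1.2) hr.2) ?_
      obtain ⟨x, hx, hxy⟩ := intermediate_value_Icc hab hτ.continuousOn
        (show min (τ b) y ∈ Icc (τ a) (τ b) from ⟨le_min (hmono hab) hy, min_le_left _ _⟩)
      rw [← hxy]
      exact hmono (hrmax ⟨hx, by show τ x ≤ y; rw [hxy]; exact min_le_right _ _⟩)
    rw [hset, hmeas a r hr.1.1, hval]

/-- A curve `c` read off from `u = c ∘ τ` is continuous: `τ` is a quotient map. -/
lemma continuousOn_of_comp {X : Type*} [MetricSpace X] {a b : ℝ} (hab : a ≤ b) {τ : ℝ → ℝ}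
    {u c : ℝ → X}
    (hτ : Continuous τ) (hu : ContinuousOn u (Icc a b))
    (hc : ∀ r ∈ Icc a b, c (τ r) = u r) : ContinuousOn c (Icc (τ a) (τ b)) := by
  rw [continuousOn_iff_isClosed]
  intro C hC
  have hK : IsCompact (Icc a b ∩ u ⁻¹' C) := isCompact_Icc.of_isClosed_subset
    (hu.preimage_isClosed_of_isClosed isClosed_Icc hC) inter_subset_left
  refine ⟨τ '' (Icc a b ∩ u ⁻¹' C), (hK.image hτ).isClosed, ?_⟩
  ext y
  constructor
  · rintro ⟨h1, h2⟩
    obtain ⟨x, hx, rfl⟩ := intermediate_value_Icc hab hτ.continuousOn h2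
    exact ⟨⟨x, ⟨hx, by rw [mem_preimage, ← hc x hx]; exact h1⟩, rfl⟩, h2⟩
  · rintro ⟨⟨x, ⟨hx, h1⟩, rfl⟩, h2⟩
    exact ⟨by rw [mem_preimage, hc x hx]; exact h1, h2⟩

/-! ### Measurability of `G_ε` along curves -/

section Upper
variable {X : Type*} [MetricSpace X] {φ : X → EReal} {ustar x : X} {A B ε : ℝ}

lemma aemeasurable_Geps (hε : 0 < ε) (hl : MLsc φ) (hco : Coercive φ ustar A B)
    (hB : B ≤ 1 / (16 * ε)) (hS : StopClosed φ ε) {s : Set ℝ} {z : ℝ → X}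
    (hs : MeasurableSet s) (hz : ContinuousOn z s) :
    AEMeasurable (fun t => Geps φ ε (z t)) (volume.restrict s) := by
  have hVm := aemeasurable_Veps hε hl hco hS hs hz
  have hφm := hl.aemeasurable hs hz
  have hm : Measurable fun y : EReal × EReal => if y.2 = ⊤ then ⊤ else (if y.1 = ⊤ then ⊤ else
      ENNReal.ofReal (2 * (y.1.toReal - y.2.toReal) / ε)) ^ (1 / 2 : ℝ) := by
    refine Measurable.ite (measurable_snd (measurableSet_singleton _)) measurable_const ?_
    refine Measurable.pow_const ?_ _
    refine Measurable.ite (measurable_fst (measurableSet_singleton _)) measurable_const ?_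
    exact (((measurable_ereal_toReal.comp measurable_fst).sub
      (measurable_ereal_toReal.comp measurable_snd)).const_mul 2 |>.div_const ε).ennreal_ofReal
  refine (hm.comp_aemeasurable (hφm.prodMk hVm)).congr (Eventually.of_forall fun t => ?_)
  simp only [Function.comp_apply]
  split_ifs with h1 h2
  · rw [Geps, if_pos h1]
  all_goals
    have h3 : Veps φ ε (z t) ≠ ⊥ :=
      ((EReal.bot_lt_coe _).trans_le (Veps_lower hε hl hco hB (z t))).ne'
    have h4 : φ (z t) ≠ ⊥ := ((EReal.bot_lt_coe _).trans_le (hco.2.2 (z t) (z t))).ne'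
    have h5 := Geps_sq hε h4 h1 h3
    rw [← ENNReal.rpow_natCast] at h5
    have h6 : Geps φ ε (z t) = (Geps φ ε (z t) ^ ((2 : ℕ) : ℝ)) ^ (1 / 2 : ℝ) := by
      rw [← ENNReal.rpow_mul]; norm_num
    rw [h6, h5]
    simp [h2]

end Upper
end WED

namespace WED

/-! ### The upper gradient inequality -/

section Upper
variable {X : Type*} [MetricSpace X] {φ : X → EReal} {ustar x : X} {A B ε : ℝ}

/-- The upper gradient inequality up to an error `δ · length`. The curve is reparametrized so that
its new speed is `n = max (G_ε, δ)`; then `(G_ε² + n²)/2 ≤ n²`, and `n² dy = n |u'| dr`. -/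
lemma upper_delta (hε : 0 < ε) (hl : MLsc φ) (hco : Coercive φ ustar A B)
    (hB : B ≤ 1 / (16 * ε)) (hS : StopClosed φ ε) {a b : ℝ} (hab : a ≤ b)
    {u : ℝ → X} {m : ℝ → ℝ} (hm0 : ∀ t, 0 ≤ m t) (hm : IntegrableOn m (Icc a b))
    (hd : ∀ s ∈ Icc a b, ∀ t ∈ Icc a b, s ≤ t → dist (u s) (u t) ≤ ∫ r in s..t, m r)
    (hV : ∫⁻ t in Icc a b, eabs (Veps φ ε (u t)) * ENNReal.ofReal (m t) < ⊤)
    (hG : ∫⁻ t in Icc a b, Geps φ ε (u t) * ENNReal.ofReal (m t) < ⊤)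
    (hne : u a ≠ u b) {δ : ℝ} (hδ : 0 < δ) :
    (Veps φ ε (u a) ≠ ⊤ ∧ Veps φ ε (u a) ≠ ⊥) ∧ (Veps φ ε (u b) ≠ ⊤ ∧ Veps φ ε (u b) ≠ ⊥) ∧
    ENNReal.ofReal |(Veps φ ε (u b)).toReal - (Veps φ ε (u a)).toReal| ≤
      (∫⁻ t in Icc a b, Geps φ ε (u t) * ENNReal.ofReal (m t)) +
        ENNReal.ofReal δ * ∫⁻ t in Icc a b, ENNReal.ofReal (m t) := by
  have hmi : IntervalIntegrable m volume a b :=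
    (intervalIntegrable_iff_integrableOn_Icc_of_le hab).2 hm
  have hu : ContinuousOn u (Icc a b) := continuousOn_of_dist_le hab hmi hd
  have hGm := aemeasurable_Geps hε hl hco hB hS measurableSet_Icc hu
  have heabs : Measurable eabs := measurable_epos.sup (measurable_epos.comp measurable_neg)
  set N : X → ℝ := fun x => max (Geps φ ε x).toReal δ with hN
  have hNδ : ∀ x, δ ≤ N x := fun x => le_max_right _ _
  have hNpos : ∀ x, 0 < N x := fun x => hδ.trans_le (hNδ x)
  have hNm : ∀ {s : Set ℝ} {z : ℝ → X}, MeasurableSet s → ContinuousOn z s →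
      AEMeasurable (fun t => N (z t)) (volume.restrict s) := fun hs hz =>
    (aemeasurable_Geps hε hl hco hB hS hs hz).ennreal_toReal.max aemeasurable_const
  set θ : ℝ → ℝ := (Icc a b).indicator fun t => m t / N (u t) with hθ
  have hθ0 : ∀ t, 0 ≤ θ t := fun t =>
    indicator_nonneg (fun t _ => div_nonneg (hm0 t) (hNpos _).le) t
  have hθi : Integrable θ := by
    rw [hθ, integrable_indicator_iff measurableSet_Icc]
    refine (hm.div_const δ).mono'
      (hm.aemeasurable.div (hNm measurableSet_Icc hu)).aestronglyMeasurable
      (Eventually.of_forall fun t => ?_)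
    rw [Real.norm_of_nonneg (div_nonneg (hm0 t) (hNpos _).le)]
    exact div_le_div_of_nonneg_left (hm0 t) hδ (hNδ _)
  have hθm : ∀ t ∈ Icc a b, N (u t) * θ t = m t := fun t ht => by
    rw [hθ, indicator_of_mem ht]
    exact mul_div_cancel₀ _ (hNpos _).ne'
  set τ : ℝ → ℝ := fun x => ∫ r in a..x, θ r with hτdef
  have hτ : Continuous τ := intervalIntegral.continuous_primitive
    (fun _ _ => hθi.intervalIntegrable) a
  have hτe : ∀ x y, τ y - τ x = ∫ r in x..y, θ r := fun x y =>
    intervalIntegral.integral_interval_sub_left hθi.intervalIntegrable hθi.intervalIntegrable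
  have hmono : Monotone τ := fun x y hxy => sub_nonneg.1 <| by
    rw [hτe]; exact intervalIntegral.integral_nonneg hxy fun t _ => hθ0 t
  have hτa : τ a = 0 := intervalIntegral.integral_same
  -- stretches on which `τ` is constant are stretches on which `u` is constant
  have hflat : ∀ r ∈ Icc a b, ∀ s ∈ Icc a b, r ≤ s → τ r = τ s → u r = u s := by
    intro r hr s hs hrs h
    have h1 : ∫ x in r..s, θ x = 0 := by rw [← hτe, h, sub_self]
    rw [intervalIntegral.integral_of_le hrs, setIntegral_eq_zero_iff_of_nonneg_ae
      (Eventually.of_forall hθ0) hθi.integrableOn] at h1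
    have h2 : ∫ x in r..s, m x = 0 := by
      rw [intervalIntegral.integral_of_le hrs]
      refine integral_eq_zero_of_ae ?_
      filter_upwards [h1, self_mem_ae_restrict measurableSet_Ioc] with x hx hx2
      rw [← hθm x ⟨hr.1.trans hx2.1.le, hx2.2.trans hs.2⟩, hx]
      simp
    exact dist_le_zero.1 ((hd r hr s hs hrs).trans h2.le)
  have hL : 0 < τ b := by
    refine lt_of_le_of_ne (hτa ▸ hmono hab) fun h => hne ?_
    exact hflat a ⟨le_rfl, hab⟩ b ⟨hab, le_rfl⟩ hab (hτa.trans h)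
  have hsurj : ∀ y ∈ Icc 0 (τ b), ∃ r ∈ Icc a b, τ r = y := by
    intro y hy
    rw [← hτa] at hy
    exact intermediate_value_Icc hab hτ.continuousOn hy
  choose! ρ hρ hτρ using hsurj
  set c : ℝ → X := fun y => u (ρ y) with hcdef
  have hcτ : ∀ r ∈ Icc a b, c (τ r) = u r := by
    intro r hr
    have hy : τ r ∈ Icc 0 (τ b) := ⟨hτa ▸ hmono hr.1, hmono hr.2⟩
    rcases le_total (ρ (τ r)) r with h | h
    · exact hflat _ (hρ _ hy) _ hr h (hτρ _ hy)
    · exact (hflat _ hr _ (hρ _ hy) h (hτρ _ hy).symm).symm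
  have hc : ContinuousOn c (Icc 0 (τ b)) := by
    have := continuousOn_of_comp hab hτ hu hcτ
    rwa [hτa] at this
  have hθae : AEMeasurable (fun r => ENNReal.ofReal (θ r)) volume :=
    hθi.aemeasurable.ennreal_ofReal
  -- change of variables `y = τ r` for nonnegative functions
  have hcv : ∀ F : X → ℝ≥0∞, AEMeasurable (fun y => F (c y)) (volume.restrict (Icc 0 (τ b))) →
      AEMeasurable (fun r => F (u r)) (volume.restrict (Icc a b)) →
      ∫⁻ y in Icc 0 (τ b), F (c y) = ∫⁻ r in Icc a b, F (u r) * ENNReal.ofReal (θ r) := by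
    intro F h1 h2
    rw [restrict_Ioc_eq_restrict_Icc.symm] at h1 h2 ⊢
    rw [restrict_Ioc_eq_restrict_Icc.symm]
    have hmap := map_primitive hab hθ0 hθi hτ hτe
    rw [hτa] at hmap
    rw [← hmap] at h1 ⊢
    rw [lintegral_map' h1 hτ.aemeasurable,
      lintegral_withDensity_eq_lintegral_mul₀ hθae.restrict]
    · refine setLIntegral_congr_fun measurableSet_Ioc fun r hr => ?_
      simp only [Pi.mul_apply]
      rw [hcτ r (Ioc_subset_Icc_self hr), mul_comm]
    · exact h2.congr (by
        filter_upwards [self_mem_ae_restrict measurableSet_Ioc] with r hr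
        rw [hcτ r (Ioc_subset_Icc_self hr)])
  have hmE : AEMeasurable (fun r => ENNReal.ofReal (m r)) (volume.restrict (Icc a b)) :=
    hm.aemeasurable.ennreal_ofReal
  have hGfin : ∀ᵐ r ∂(volume.restrict (Icc a b)), m r = 0 ∨ Geps φ ε (u r) ≠ ⊤ := by
    filter_upwards [ae_lt_top' (hGm.mul hmE) hG.ne] with r hr
    by_contra! h
    have h1 : 0 < m r := lt_of_le_of_ne (hm0 r) h.1.symm
    simp only [Pi.mul_apply, h.2] at hr
    rw [ENNReal.top_mul (by simpa using h1)] at hr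
    exact lt_irrefl _ hr
  have hbd : ∫⁻ r in Icc a b, ENNReal.ofReal (N (u r) ^ 2) * ENNReal.ofReal (θ r) ≤
      (∫⁻ t in Icc a b, Geps φ ε (u t) * ENNReal.ofReal (m t)) +
        ENNReal.ofReal δ * ∫⁻ t in Icc a b, ENNReal.ofReal (m t) := by
    rw [← lintegral_const_mul' _ _ ENNReal.ofReal_ne_top, ← lintegral_add_right' _
      (hmE.const_mul _)]
    refine setLIntegral_mono' measurableSet_Icc fun r hr => ?_
    rw [← ENNReal.ofReal_mul (sq_nonneg _), pow_two, mul_assoc, hθm r hr,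
      ENNReal.ofReal_mul (hNpos _).le, ← add_mul]
    gcongr
    refine (ENNReal.ofReal_le_ofReal (max_le_add_of_nonneg ENNReal.toReal_nonneg hδ.le)).trans ?_
    rw [ENNReal.ofReal_add ENNReal.toReal_nonneg hδ.le]
    gcongr
    exact ENNReal.ofReal_toReal_le
  have hGN : ∫⁻ r in Icc a b, Geps φ ε (u r) ^ 2 * ENNReal.ofReal (θ r) ≤
      ∫⁻ r in Icc a b, ENNReal.ofReal (N (u r) ^ 2) * ENNReal.ofReal (θ r) := by
    refine lintegral_mono_ae ?_
    filter_upwards [hGfin, self_mem_ae_restrict measurableSet_Icc] with r hr hr2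
    rcases hr with hr | hr
    · have : θ r = 0 := by rw [hθ, indicator_of_mem hr2, hr, zero_div]
      simp [this]
    · gcongr
      rw [ENNReal.ofReal_pow (hNpos _).le]
      gcongr
      rw [← ENNReal.ofReal_toReal hr]
      exact ENNReal.ofReal_le_ofReal (le_max_left _ _)
  have hmfin : ∫⁻ t in Icc a b, ENNReal.ofReal (m t) < ⊤ := hm.lintegral_lt_top
  have hbd' := hbd.trans_lt (ENNReal.add_lt_top.2
    ⟨hG, ENNReal.mul_lt_top ENNReal.ofReal_lt_top hmfin⟩)
  have hN2 := hcv (fun x => ENNReal.ofReal (N x ^ 2))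
    ((hNm measurableSet_Icc hc).pow_const 2).ennreal_ofReal
    ((hNm measurableSet_Icc hu).pow_const 2).ennreal_ofReal
  have hG2 := hcv (fun x => Geps φ ε x ^ 2)
    ((aemeasurable_Geps hε hl hco hB hS measurableSet_Icc hc).pow_const 2) (hGm.pow_const 2)
  have hV1 := hcv (fun x => eabs (Veps φ ε x))
    (heabs.comp_aemeasurable (aemeasurable_Veps hε hl hco hS measurableSet_Icc hc))
    (heabs.comp_aemeasurable (aemeasurable_Veps hε hl hco hS measurableSet_Icc hu))
  have hcn : ∀ s t, 0 ≤ s → s ≤ t → t ≤ τ b → dist (c s) (c t) ≤ ∫ y in s..t, N (c y) := by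
    intro s t h0 hst htb
    have hs : s ∈ Icc 0 (τ b) := ⟨h0, hst.trans htb⟩
    have ht : t ∈ Icc 0 (τ b) := ⟨h0.trans hst, htb⟩
    rcases hst.eq_or_lt with h | hlt
    · subst h; simp
    have hrr : ρ s ≤ ρ t := by
      by_contra! h
      have := hmono h.le
      rw [hτρ s hs, hτρ t ht] at this
      linarith
    have hsub : Ioc (ρ s) (ρ t) ⊆ Icc a b := fun r hr =>
      ⟨(hρ s hs).1.trans hr.1.le, hr.2.trans (hρ t ht).2⟩
    refine (hd _ (hρ s hs) _ (hρ t ht) hrr).trans (le_of_eq ?_)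
    have hmap := map_primitive hrr hθ0 hθi hτ hτe
    rw [hτρ s hs, hτρ t ht] at hmap
    have h1 : AEMeasurable (fun y => N (c y)) (volume.restrict (Ioc s t)) :=
      hNm measurableSet_Ioc (hc.mono fun y hy => ⟨h0.trans hy.1.le, hy.2.trans htb⟩)
    rw [intervalIntegral.integral_of_le hrr, intervalIntegral.integral_of_le hst, ← hmap]
    rw [← hmap] at h1
    rw [integral_map hτ.aemeasurable h1.aestronglyMeasurable,
      integral_withDensity_eq_integral_toReal_smul₀ hθae.restrict
        (Eventually.of_forall fun _ => ENNReal.ofReal_lt_top)]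
    refine setIntegral_congr_fun measurableSet_Ioc fun r hr => ?_
    simp only [smul_eq_mul]
    rw [hcτ r (hsub hr), ENNReal.toReal_ofReal (hθ0 r), mul_comm, hθm r (hsub hr)]
  have hn2 : IntervalIntegrable (fun y => N (c y) ^ 2) volume 0 (τ b) := by
    rw [intervalIntegrable_iff_integrableOn_Icc_of_le hL.le]
    refine ⟨((hNm measurableSet_Icc hc).pow_const 2).aestronglyMeasurable, ?_⟩
    rw [hasFiniteIntegral_iff_ofReal (Eventually.of_forall fun _ => sq_nonneg _), hN2]
    exact hbd'
  have hcV : ∫⁻ y in Icc 0 (τ b), eabs (Veps φ ε (c y)) < ⊤ := by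
    rw [hV1]
    refine lt_of_le_of_lt (setLIntegral_mono' (g := fun t => ENNReal.ofReal δ⁻¹ *
      (eabs (Veps φ ε (u t)) * ENNReal.ofReal (m t))) measurableSet_Icc fun r hr => ?_) ?_
    · rw [mul_left_comm, ← ENNReal.ofReal_mul (inv_nonneg.2 hδ.le)]
      gcongr
      rw [hθ, indicator_of_mem hr, inv_mul_eq_div]
      exact div_le_div_of_nonneg_left (hm0 r) hδ (hNδ _)
    · rw [lintegral_const_mul' _ _ ENNReal.ofReal_ne_top]
      exact ENNReal.mul_lt_top ENNReal.ofReal_lt_top hV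
  obtain ⟨hfin, g, hg, hgi, hgb⟩ := core hε hl hco hB hS hL (fun y => (hNpos (c y)).le) hcn hn2 hcV
    (by rw [hG2]; exact hGN.trans_lt hbd')
  have hca : c 0 = u a := by rw [← hτa]; exact hcτ a ⟨le_rfl, hab⟩
  have hcb : c (τ b) = u b := hcτ b ⟨hab, le_rfl⟩
  have hfa := hfin 0 ⟨le_rfl, hL.le⟩
  have hfb := hfin (τ b) ⟨hL.le, le_rfl⟩
  have hinc := hgi 0 ⟨le_rfl, hL.le⟩ (τ b) ⟨hL.le, le_rfl⟩
  rw [hca] at hfa hinc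
  rw [hcb] at hfb hinc
  refine ⟨hfa, hfb, ?_⟩
  rw [← hinc, intervalIntegral.integral_of_le hL.le, ← integral_Icc_eq_integral_Ioc]
  calc ENNReal.ofReal |∫ y in Icc 0 (τ b), g y|
      ≤ ∫⁻ y in Icc 0 (τ b), ENNReal.ofReal |g y| := by
        have := enorm_integral_le_lintegral_enorm (μ := volume.restrict (Icc 0 (τ b))) g
        simpa only [Real.enorm_eq_ofReal_abs] using this
    _ ≤ ∫⁻ y in Icc 0 (τ b), (Geps φ ε (c y) ^ 2 + ENNReal.ofReal (N (c y) ^ 2)) / 2 :=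
        lintegral_mono_ae hgb
    _ = ((∫⁻ y in Icc 0 (τ b), Geps φ ε (c y) ^ 2) +
          ∫⁻ y in Icc 0 (τ b), ENNReal.ofReal (N (c y) ^ 2)) / 2 := by
        simp only [div_eq_mul_inv]
        rw [lintegral_mul_const' _ _ (by simp), lintegral_add_right'
          _ ((hNm measurableSet_Icc hc).pow_const 2).ennreal_ofReal]
    _ ≤ ∫⁻ r in Icc a b, ENNReal.ofReal (N (u r) ^ 2) * ENNReal.ofReal (θ r) := by
        rw [hN2, hG2]
        refine (ENNReal.div_le_div_right (add_le_add_left hGN _) 2).trans (le_of_eq ?_)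
        rw [← two_mul]
        rw [mul_comm]
        exact ENNReal.mul_div_cancel_right two_ne_zero ENNReal.ofNat_ne_top
    _ ≤ _ := hbd

/-- The upper gradient inequality, from `upper_delta` as `δ → 0`. For `u s = u t` it is trivial,
whether or not `V_ε` is finite there. -/
lemma moderated (hε : 0 < ε) (hl : MLsc φ) (hco : Coercive φ ustar A B)
    (hB : B ≤ 1 / (16 * ε)) (hS : StopClosed φ ε) :
    IsModeratedUpperGradient (Veps φ ε) (Geps φ ε) 1 := by
  intro a b hab u m hum hV hG s hs t ht hst
  by_cases hne : u s = u t
  · rw [hne]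
    have : Veps φ ε (u t) ≤ Veps φ ε (u t) +
        ((∫⁻ r in Icc s t, Geps φ ε (u r) * ENNReal.ofReal (m r) : ℝ≥0∞) : EReal) :=
      le_add_of_nonneg_right (EReal.coe_ennreal_nonneg _)
    exact ⟨this, this⟩
  have hsub : Icc s t ⊆ Icc a b := Icc_subset_Icc hs.1 ht.2
  have hmab : IntegrableOn m (Icc a b) := hum.locInt a ⟨le_rfl, hab⟩ b ⟨hab, le_rfl⟩
  have hdab : ∀ x ∈ Icc a b, ∀ y ∈ Icc a b, x ≤ y → dist (u x) (u y) ≤ ∫ r in x..y, m r := by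
    intro x hx y hy hxy
    rw [intervalIntegral.integral_of_le hxy, ← integral_Icc_eq_integral_Ioc]
    exact hum.dist_le x hx y hy hxy
  have hu : ContinuousOn u (Icc a b) := continuousOn_of_dist_le hab
    ((intervalIntegrable_iff_integrableOn_Icc_of_le hab).2 hmab) hdab
  have hV' : ∫⁻ r in Icc a b, eabs (Veps φ ε (u r)) * ENNReal.ofReal (m r) < ⊤ := by
    have heabs : Measurable eabs := measurable_epos.sup (measurable_epos.comp measurable_neg)
    have h1 : AEMeasurable (fun r => eabs (Veps φ ε (u r))) (volume.restrict (Icc a b)) :=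
      heabs.comp_aemeasurable (aemeasurable_Veps hε hl hco hS measurableSet_Icc hu)
    simp only [MemLpENN, ENNReal.one_ne_top, if_false, ENNReal.toReal_one, ENNReal.rpow_one,
      speedMeasure] at hV
    rw [lintegral_withDensity_eq_lintegral_mul₀ hmab.aemeasurable.ennreal_ofReal h1] at hV
    simpa only [Pi.mul_apply, Function.comp_apply, mul_comm] using hV
  set I := ∫⁻ r in Icc s t, Geps φ ε (u r) * ENNReal.ofReal (m r) with hI
  have hIfin : I < ⊤ := (lintegral_mono_set hsub).trans_lt hG
  have key := fun δ : ℝ => upper_delta hε hl hco hB hS hst hum.nonneg (hmab.mono_set hsub)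
    (fun x hx y hy hxy => hdab x (hsub hx) y (hsub hy) hxy)
    ((lintegral_mono_set hsub).trans_lt hV') hIfin hne (δ := δ)
  obtain ⟨⟨hs1, hs2⟩, ⟨ht1, ht2⟩, -⟩ := key 1 one_pos
  have hle : ENNReal.ofReal |(Veps φ ε (u t)).toReal - (Veps φ ε (u s)).toReal| ≤ I := by
    have hlim : Tendsto (fun δ : ℝ => I + ENNReal.ofReal δ * ∫⁻ r in Icc s t, ENNReal.ofReal (m r))
        (𝓝[>] 0) (𝓝 (I + ENNReal.ofReal 0 * ∫⁻ r in Icc s t, ENNReal.ofReal (m r))) := by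
      refine tendsto_const_nhds.add (ENNReal.Tendsto.mul_const ?_
        (Or.inr (hmab.mono_set hsub).lintegral_lt_top.ne))
      exact (ENNReal.continuous_ofReal.tendsto 0).mono_left nhdsWithin_le_nhds
    rw [ENNReal.ofReal_zero, zero_mul, add_zero] at hlim
    exact ge_of_tendsto hlim (eventually_mem_nhdsWithin.mono fun δ hδ => (key δ hδ).2.2)
  have hle' : |(Veps φ ε (u t)).toReal - (Veps φ ε (u s)).toReal| ≤ I.toReal :=
    (ENNReal.ofReal_le_iff_le_toReal hIfin.ne).1 hle
  have hIe : (I : EReal) = (I.toReal : EReal) := (EReal.coe_ennreal_toReal hIfin.ne).symm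
  rw [hIe, ← EReal.coe_toReal hs1 hs2, ← EReal.coe_toReal ht1 ht2, ← EReal.coe_add,
    ← EReal.coe_add, EReal.coe_le_coe_iff, EReal.coe_le_coe_iff]
  obtain ⟨h1, h2⟩ := abs_le.1 hle'
  exact ⟨by linarith, by linarith⟩

end Upper
end WED

namespace WED

/-- Theorem 4.7: under the LSCC assumptions, for every `ε > 0` and every
curve `u ∈ AC²([0,T];X)` with `V_ε∘u ∈ L¹(0,T)` and `G_ε∘u ∈ L²(0,T)`, the map
`t ↦ V_ε(u(t))` is absolutely continuous on `[0,T]` with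
`|d/dt V_ε(u(t))| ≤ (1/2)G_ε²(u(t)) + (1/2)|u'|²(t)` a.e.; in particular, `G_ε` is an
`L¹`-moderated upper gradient of `V_ε`. -/
theorem statement13
    {X : Type*} [MetricSpace X] [CompleteSpace X]
    (σ : TopologicalSpace X) (hcomp : Compatible σ)
    (φ : X → EReal) (ustar : X) (A B : ℝ) (hφ : LSCC σ φ ustar A B)
    (ε : ℝ) (hε : 0 < ε) (hεB : B ≤ 1 / (16 * ε))
    (T : ℝ) (hT : 0 < T)
    (u : ℝ → X) (m : ℝ → ℝ) (hAC : AC2On u m (Icc 0 T))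
    (hV : (∫⁻ t in Icc (0:ℝ) T, eabs (Veps φ ε (u t))) < ⊤)
    (hG : (∫⁻ t in Icc (0:ℝ) T, (Geps φ ε (u t)) ^ 2) < ⊤) :
    (∀ t ∈ Icc (0:ℝ) T, Veps φ ε (u t) ≠ ⊤ ∧ Veps φ ε (u t) ≠ ⊥) ∧
    (∃ g : ℝ → ℝ, IntegrableOn g (Icc 0 T) volume ∧
      (∀ t ∈ Icc (0:ℝ) T,
        (Veps φ ε (u t)).toReal = (Veps φ ε (u 0)).toReal + ∫ r in Icc 0 t, g r) ∧
      ∀ᵐ t ∂(volume.restrict (Icc (0:ℝ) T)),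
        ENNReal.ofReal |g t| ≤ ((Geps φ ε (u t)) ^ 2 + ENNReal.ofReal (m t ^ 2)) / 2) ∧
    IsModeratedUpperGradient (Veps φ ε) (Geps φ ε) 1 := by
  have hl := hφ.mlsc hcomp
  have hco : Coercive φ ustar A B := ⟨hφ.hA, hφ.hB, hφ.coercive⟩
  have hS : StopClosed φ ε := fun N q xs x hx hmem =>
    stopSet_closed hφ hcomp hε hεB (Nat.cast_nonneg N) hx hmem
  obtain ⟨hfin, g, hg, hgi, hgb⟩ := core hε hl hco hεB hS hT hAC.1.nonneg
    (fun s t hs hst ht => by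
      rw [intervalIntegral.integral_of_le hst, ← integral_Icc_eq_integral_Ioc]
      exact hAC.1.dist_le s ⟨hs, hst.trans ht⟩ t ⟨hs.trans hst, ht⟩ hst)
    ((intervalIntegrable_iff_integrableOn_Icc_of_le hT.le).2 hAC.2) hV hG
  refine ⟨hfin, ⟨g, (intervalIntegrable_iff_integrableOn_Icc_of_le hT.le).1 hg, ?_, hgb⟩,
    moderated hε hl hco hεB hS⟩
  intro t ht
  rw [integral_Icc_eq_integral_Ioc, ← intervalIntegral.integral_of_le ht.1,
    hgi 0 ⟨le_rfl, hT.le⟩ t ht]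
  ring

end WED
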